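/- Let L > 0, let q_e : 𝕋_L → ℝ be smooth with q_e > 0, and let g : 𝕋_L → ℝ be smooth. There exists ε₀ ∈ (0,1), depending only on q_e, g, L, such that for all 0 < ε < ε₀ the following holds. For j ∈ {n−2, n−1, n}, let ω̄_j ∈ ℝ with |ω̄_j − ω̄*| ≤ ε^{0.97} (where ω̄* := ((1/L)∫₀^L (2 g q_e² + ε g² q_e) ds)/((1/L)∫₀^L q_e³ ds)) and set ω_j > 0 via ω_j² = 1 − ε ω̄_j. Let Q_{n−2}, Q_{n−1}, Q_n be smooth functions on 𝕋_L × [0,∞), each tending to 0 as ψ → ∞, with ‖Q_j‖_{X_{2,50}} ≤ ε^{0.99} for j ∈ {n−2, n−1, n}, such that Q_n solves ∂_s Q_n − ω_{n−1} q_e ∂_ψ² Q_n = f(Q_{n−1}, s; ω_{n−1}) with Q_n(s,0) = ε ω̄_n q_e² + 2ε g q_e + ε² g², and Q_{n−1} solves ∂_s Q_{n−1} − ω_{n−2} q_e ∂_ψ² Q_{n−1} = f(Q_{n−2}, s; ω_{n−2}) with Q_{n−1}(s,0) = ε ω̄_{n−1} q_e² + 2ε g q_e + ε² g², where f(Q,s;ω)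 := (1 − ω q_e(s)/√(ω² q_e(s)² + Q)) ∂_s Q. Then ‖Q_n − Q_{n−1}‖_{X_{2,50}} ≤ ε^{3/4} ‖Q_{n−1} − Q_{n−2}‖_{X_{2,50}} + ε^{1/2} |ω̄_n − ω̄_{n−1}| + ε^{3/2} |ω̄_{n−1} − ω̄_{n−2}|. -/

import Mathlib

open MeasureTheory Set Function Filter

/-- `k`-th partial derivative in the tangential variable `s` of a function on
`𝕋_L × [0,∞)` (represented as a curried function `ℝ → ℝ → ℝ`). -/
noncomputable def dS (k : ℕ) (h : ℝ → ℝ → ℝ) : ℝ → ℝ → ℝ :=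
  fun s ψ => iteratedDeriv k (fun s' => h s' ψ) s

/-- `j`-th partial derivative in the normal (von Mises) variable `ψ`. -/
noncomputable def dPsi (j : ℕ) (h : ℝ → ℝ → ℝ) : ℝ → ℝ → ℝ :=
  fun s ψ => iteratedDeriv j (fun ψ' => h s ψ') ψ

/-- Squared `L²` norm over `𝕋_L × ℝ₊` (fundamental domain `(0,L] × (0,∞)`). -/
noncomputable def L2sq (L : ℝ) (h : ℝ → ℝ → ℝ) : ℝ :=
  ∫ p in Ioc (0:ℝ) L ×ˢ Ioi (0:ℝ), (h p.1 p.2) ^ 2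

/-- Square-integrability over `𝕋_L × ℝ₊`. -/
def FiniteL2 (L : ℝ) (h : ℝ → ℝ → ℝ) : Prop :=
  IntegrableOn (fun p : ℝ × ℝ => (h p.1 p.2) ^ 2) (Ioc (0:ℝ) L ×ˢ Ioi (0:ℝ))

/-- The weight `⟨ψ⟩^m h`. -/
noncomputable def wt (m : ℕ) (h : ℝ → ℝ → ℝ) : ℝ → ℝ → ℝ :=
  fun s ψ => (1 + ψ) ^ m * h s ψ

/-- Squared `X_{k,m}` norm:
`‖h‖²_{X_{k,m}} = Σ_{k'≤k} Σ_{m'≤m} (‖⟨ψ⟩^{m'}∂_s^{k'}h‖² + ‖⟨ψ⟩^{m'}∂_s^{k'+1}h‖²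
+ ‖⟨ψ⟩^{m'}∂_ψ∂_s^{k'}h‖² + ‖⟨ψ⟩^{m'}∂_ψ²∂_s^{k'}h‖²)`. -/
noncomputable def XnormSq (L : ℝ) (k m : ℕ) (h : ℝ → ℝ → ℝ) : ℝ :=
  ∑ k' ∈ Finset.range (k+1), ∑ m' ∈ Finset.range (m+1),
    (L2sq L (wt m' (dS k' h)) + L2sq L (wt m' (dS (k'+1) h))
      + L2sq L (wt m' (dPsi 1 (dS k' h))) + L2sq L (wt m' (dPsi 2 (dS k' h))))

/-- The `X_{k,m}` norm. -/
noncomputable def Xnorm (L : ℝ) (k m : ℕ) (h : ℝ → ℝ → ℝ) : ℝ :=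
  Real.sqrt (XnormSq L k m h)

/-- Membership in the space `X_{k,m}`: all the defining integrands are integrable. -/
def XFinite (L : ℝ) (k m : ℕ) (h : ℝ → ℝ → ℝ) : Prop :=
  ∀ k' ≤ k, ∀ m' ≤ m,
    FiniteL2 L (wt m' (dS k' h)) ∧ FiniteL2 L (wt m' (dS (k'+1) h))
      ∧ FiniteL2 L (wt m' (dPsi 1 (dS k' h))) ∧ FiniteL2 L (wt m' (dPsi 2 (dS k' h)))

/-- Joint smoothness of a curried function of two real variables. -/
def Smooth2 (h : ℝ → ℝ → ℝ) : Prop :=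
  ContDiff ℝ (⊤ : ℕ∞) (fun p : ℝ × ℝ => h p.1 p.2)

/-- Periodicity in the first (tangential) variable. -/
def PeriodicS (L : ℝ) (h : ℝ → ℝ → ℝ) : Prop :=
  ∀ ψ : ℝ, Function.Periodic (fun s => h s ψ) L

/-- Squared `H^n` norm of a function on `𝕋_L`. -/
noncomputable def HnormSq (L : ℝ) (n : ℕ) (b : ℝ → ℝ) : ℝ :=
  ∑ j ∈ Finset.range (n+1), ∫ s in (0:ℝ)..L, (iteratedDeriv j b s) ^ 2

/-- The explicit (leading) part of the Feynman–Lagerstrom constant. -/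
noncomputable def omegaBarStar (L : ℝ) (q_e g : ℝ → ℝ) (ε : ℝ) : ℝ :=
  ((1/L) * ∫ s in (0:ℝ)..L, (2 * g s * (q_e s) ^ 2 + ε * (g s) ^ 2 * q_e s))
    / ((1/L) * ∫ s in (0:ℝ)..L, (q_e s) ^ 3)

/-- The Prandtl nonlinearity `f(Q,s;ω) = (1 − ωq_e/√(ω²q_e² + Q)) ∂_s Q`. -/
noncomputable def fNonlin (q_e : ℝ → ℝ) (ω : ℝ) (Q : ℝ → ℝ → ℝ) : ℝ → ℝ → ℝ :=
  fun s ψ => (1 - ω * q_e s / Real.sqrt (ω ^ 2 * (q_e s) ^ 2 + Q s ψ)) * dS 1 Q s ψ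

/-! ### Part 1: calculus of smooth curried functions -/

lemma Smooth2.continuous {h : ℝ → ℝ → ℝ} (hh : Smooth2 h) :
    Continuous (fun p : ℝ × ℝ => h p.1 p.2) := ContDiff.continuous hh

lemma smooth2_hasDerivAt_s {h : ℝ → ℝ → ℝ} (hh : Smooth2 h) (s ψ : ℝ) :
    HasDerivAt (fun s' => h s' ψ)
      (fderiv ℝ (fun p : ℝ × ℝ => h p.1 p.2) (s, ψ) (1, 0)) s := by
  have h1 : HasFDerivAt (fun p : ℝ × ℝ => h p.1 p.2)
      (fderiv ℝ (fun p : ℝ × ℝ => h p.1 p.2) (s, ψ)) (s, ψ) :=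
    ((ContDiff.differentiable hh (by simp)) (s, ψ)).hasFDerivAt
  have h2 : HasDerivAt (fun s' : ℝ => (s', ψ)) ((1 : ℝ), (0 : ℝ)) s :=
    (hasDerivAt_id s).prodMk (hasDerivAt_const s ψ)
  exact HasFDerivAt.comp_hasDerivAt s (f := fun s' : ℝ => (s', ψ)) h1 h2

lemma smooth2_hasDerivAt_psi {h : ℝ → ℝ → ℝ} (hh : Smooth2 h) (s ψ : ℝ) :
    HasDerivAt (fun ψ' => h s ψ')
      (fderiv ℝ (fun p : ℝ × ℝ => h p.1 p.2) (s, ψ) (0, 1)) ψ := by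
  have h1 : HasFDerivAt (fun p : ℝ × ℝ => h p.1 p.2)
      (fderiv ℝ (fun p : ℝ × ℝ => h p.1 p.2) (s, ψ)) (s, ψ) :=
    ((ContDiff.differentiable hh (by simp)) (s, ψ)).hasFDerivAt
  have h2 : HasDerivAt (fun ψ' : ℝ => (s, ψ')) ((0 : ℝ), (1 : ℝ)) ψ :=
    (hasDerivAt_const ψ s).prodMk (hasDerivAt_id ψ)
  exact HasFDerivAt.comp_hasDerivAt ψ (f := fun ψ' : ℝ => (s, ψ')) h1 h2

lemma dS_one_apply (h : ℝ → ℝ → ℝ) (s ψ : ℝ) : dS 1 h s ψ = deriv (fun s' => h s' ψ) s := by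
  simp [dS, iteratedDeriv_one]

lemma dPsi_one_apply (h : ℝ → ℝ → ℝ) (s ψ : ℝ) :
    dPsi 1 h s ψ = deriv (fun ψ' => h s ψ') ψ := by
  simp [dPsi, iteratedDeriv_one]

lemma dS_one_eq {h : ℝ → ℝ → ℝ} (hh : Smooth2 h) (s ψ : ℝ) :
    dS 1 h s ψ = fderiv ℝ (fun p : ℝ × ℝ => h p.1 p.2) (s, ψ) (1, 0) := by
  rw [dS_one_apply]; exact (smooth2_hasDerivAt_s hh s ψ).deriv

lemma dPsi_one_eq {h : ℝ → ℝ → ℝ} (hh : Smooth2 h) (s ψ : ℝ) :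
    dPsi 1 h s ψ = fderiv ℝ (fun p : ℝ × ℝ => h p.1 p.2) (s, ψ) (0, 1) := by
  rw [dPsi_one_apply]; exact (smooth2_hasDerivAt_psi hh s ψ).deriv

lemma Smooth2.hasS {h : ℝ → ℝ → ℝ} (hh : Smooth2 h) (s ψ : ℝ) :
    HasDerivAt (fun s' => h s' ψ) (dS 1 h s ψ) s := by
  rw [dS_one_eq hh]; exact smooth2_hasDerivAt_s hh s ψ

lemma Smooth2.hasPsi {h : ℝ → ℝ → ℝ} (hh : Smooth2 h) (s ψ : ℝ) :
    HasDerivAt (fun ψ' => h s ψ') (dPsi 1 h s ψ) ψ := by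
  rw [dPsi_one_eq hh]; exact smooth2_hasDerivAt_psi hh s ψ

lemma smooth2_fderiv {h : ℝ → ℝ → ℝ} (hh : Smooth2 h) :
    ContDiff ℝ (⊤ : ℕ∞) (fderiv ℝ (fun p : ℝ × ℝ => h p.1 p.2)) :=
  ContDiff.fderiv_right (m := (⊤ : ℕ∞)) hh (by simp)

lemma Smooth2.dS_one {h : ℝ → ℝ → ℝ} (hh : Smooth2 h) : Smooth2 (dS 1 h) := by
  have : (fun p : ℝ × ℝ => dS 1 h p.1 p.2)
      = fun p => fderiv ℝ (fun p : ℝ × ℝ => h p.1 p.2) p (1, 0) := by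
    funext p; exact dS_one_eq hh p.1 p.2
  unfold Smooth2
  rw [this]
  exact (smooth2_fderiv hh).clm_apply contDiff_const

lemma Smooth2.dPsi_one {h : ℝ → ℝ → ℝ} (hh : Smooth2 h) : Smooth2 (dPsi 1 h) := by
  have : (fun p : ℝ × ℝ => dPsi 1 h p.1 p.2)
      = fun p => fderiv ℝ (fun p : ℝ × ℝ => h p.1 p.2) p (0, 1) := by
    funext p; exact dPsi_one_eq hh p.1 p.2
  unfold Smooth2
  rw [this]
  exact (smooth2_fderiv hh).clm_apply contDiff_const

lemma dS_zero (h : ℝ → ℝ → ℝ) : dS 0 h = h := by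
  funext s ψ; simp [dS]

lemma dS_succ (k : ℕ) (h : ℝ → ℝ → ℝ) : dS (k+1) h = dS 1 (dS k h) := by
  funext s ψ
  rw [dS_one_apply]
  simp only [dS]
  rw [iteratedDeriv_succ]

lemma dPsi_two (h : ℝ → ℝ → ℝ) : dPsi 2 h = dPsi 1 (dPsi 1 h) := by
  funext s ψ
  rw [dPsi_one_apply]
  simp only [dPsi]
  rw [iteratedDeriv_succ]

lemma Smooth2.dS_k {h : ℝ → ℝ → ℝ} (hh : Smooth2 h) (k : ℕ) : Smooth2 (dS k h) := by
  induction k with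
  | zero => rwa [dS_zero]
  | succ k ih => rw [dS_succ]; exact ih.dS_one

lemma Smooth2.dPsi_two {h : ℝ → ℝ → ℝ} (hh : Smooth2 h) : Smooth2 (dPsi 2 h) := by
  rw [_root_.dPsi_two]; exact hh.dPsi_one.dPsi_one

lemma dS_dPsi_comm {h : ℝ → ℝ → ℝ} (hh : Smooth2 h) :
    dS 1 (dPsi 1 h) = dPsi 1 (dS 1 h) := by
  funext s ψ
  have hF := smooth2_fderiv hh
  have hd : HasFDerivAt (fderiv ℝ (fun p : ℝ × ℝ => h p.1 p.2))
      (fderiv ℝ (fderiv ℝ (fun p : ℝ × ℝ => h p.1 p.2)) (s, ψ)) (s, ψ) :=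
    ((hF.differentiable (by simp)) (s, ψ)).hasFDerivAt
  have hsymm : IsSymmSndFDerivAt ℝ (fun p : ℝ × ℝ => h p.1 p.2) (s, ψ) :=
    ContDiffAt.isSymmSndFDerivAt (n := (⊤ : ℕ∞)) (ContDiff.contDiffAt hh) (by
      simp only [minSmoothness_of_isRCLikeNormedField]; exact WithTop.coe_le_coe.2 (le_top : (2:ℕ∞) ≤ ⊤))
  have e1 : dS 1 (dPsi 1 h) s ψ
      = fderiv ℝ (fderiv ℝ (fun p : ℝ × ℝ => h p.1 p.2)) (s, ψ) (1, 0) (0, 1) := by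
    rw [dS_one_apply]
    have : (fun s' => dPsi 1 h s' ψ)
        = fun s' => fderiv ℝ (fun p : ℝ × ℝ => h p.1 p.2) (s', ψ) (0, 1) := by
      funext s'; exact dPsi_one_eq hh s' ψ
    rw [this]
    have h2 : HasDerivAt (fun s' : ℝ => (s', ψ)) ((1 : ℝ), (0 : ℝ)) s :=
      (hasDerivAt_id s).prodMk (hasDerivAt_const s ψ)
    have h3 := HasFDerivAt.comp_hasDerivAt s (f := fun s' : ℝ => (s', ψ)) hd h2
    have h4 := h3.clm_apply (hasDerivAt_const s ((0 : ℝ), (1 : ℝ)))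
    simpa using h4.deriv
  have e2 : dPsi 1 (dS 1 h) s ψ
      = fderiv ℝ (fderiv ℝ (fun p : ℝ × ℝ => h p.1 p.2)) (s, ψ) (0, 1) (1, 0) := by
    rw [dPsi_one_apply]
    have : (fun ψ' => dS 1 h s ψ')
        = fun ψ' => fderiv ℝ (fun p : ℝ × ℝ => h p.1 p.2) (s, ψ') (1, 0) := by
      funext s'; exact dS_one_eq hh s s'
    rw [this]
    have h2 : HasDerivAt (fun ψ' : ℝ => (s, ψ')) ((0 : ℝ), (1 : ℝ)) ψ :=
      (hasDerivAt_const ψ s).prodMk (hasDerivAt_id ψ)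
    have h3 := HasFDerivAt.comp_hasDerivAt ψ (f := fun ψ' : ℝ => (s, ψ')) hd h2
    have h4 := h3.clm_apply (hasDerivAt_const ψ ((1 : ℝ), (0 : ℝ)))
    simpa using h4.deriv
  rw [e1, e2]
  exact hsymm (1, 0) (0, 1)

lemma dS_dPsi_two_comm {h : ℝ → ℝ → ℝ} (hh : Smooth2 h) :
    dS 1 (dPsi 2 h) = dPsi 2 (dS 1 h) := by
  rw [dPsi_two, dPsi_two, dS_dPsi_comm hh.dPsi_one, dS_dPsi_comm hh]

lemma Smooth2.mul {u v : ℝ → ℝ → ℝ} (hu : Smooth2 u) (hv : Smooth2 v) :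
    Smooth2 (fun s ψ => u s ψ * v s ψ) := ContDiff.mul hu hv
lemma Smooth2.add {u v : ℝ → ℝ → ℝ} (hu : Smooth2 u) (hv : Smooth2 v) :
    Smooth2 (fun s ψ => u s ψ + v s ψ) := ContDiff.add hu hv
lemma Smooth2.sub {u v : ℝ → ℝ → ℝ} (hu : Smooth2 u) (hv : Smooth2 v) :
    Smooth2 (fun s ψ => u s ψ - v s ψ) := ContDiff.sub hu hv
lemma Smooth2.of_s {q : ℝ → ℝ} (hq : ContDiff ℝ (⊤ : ℕ∞) q) : Smooth2 (fun s _ => q s) :=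
  hq.comp contDiff_fst
lemma Smooth2.of_psi {q : ℝ → ℝ} (hq : ContDiff ℝ (⊤ : ℕ∞) q) : Smooth2 (fun _ ψ => q ψ) :=
  hq.comp contDiff_snd

lemma dS_one_mul {u v : ℝ → ℝ → ℝ} (hu : Smooth2 u) (hv : Smooth2 v) :
    dS 1 (fun s ψ => u s ψ * v s ψ) = fun s ψ => dS 1 u s ψ * v s ψ + u s ψ * dS 1 v s ψ := by
  funext s ψ
  rw [dS_one_apply]; exact ((hu.hasS s ψ).mul (hv.hasS s ψ)).deriv
lemma dPsi_one_mul {u v : ℝ → ℝ → ℝ} (hu : Smooth2 u) (hv : Smooth2 v) :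
    dPsi 1 (fun s ψ => u s ψ * v s ψ)
      = fun s ψ => dPsi 1 u s ψ * v s ψ + u s ψ * dPsi 1 v s ψ := by
  funext s ψ
  rw [dPsi_one_apply]; exact ((hu.hasPsi s ψ).mul (hv.hasPsi s ψ)).deriv
lemma dS_one_add {u v : ℝ → ℝ → ℝ} (hu : Smooth2 u) (hv : Smooth2 v) :
    dS 1 (fun s ψ => u s ψ + v s ψ) = fun s ψ => dS 1 u s ψ + dS 1 v s ψ := by
  funext s ψ
  rw [dS_one_apply]; exact ((hu.hasS s ψ).add (hv.hasS s ψ)).deriv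
lemma dS_one_sub {u v : ℝ → ℝ → ℝ} (hu : Smooth2 u) (hv : Smooth2 v) :
    dS 1 (fun s ψ => u s ψ - v s ψ) = fun s ψ => dS 1 u s ψ - dS 1 v s ψ := by
  funext s ψ
  rw [dS_one_apply]; exact ((hu.hasS s ψ).sub (hv.hasS s ψ)).deriv
lemma dPsi_one_sub {u v : ℝ → ℝ → ℝ} (hu : Smooth2 u) (hv : Smooth2 v) :
    dPsi 1 (fun s ψ => u s ψ - v s ψ) = fun s ψ => dPsi 1 u s ψ - dPsi 1 v s ψ := by
  funext s ψ
  rw [dPsi_one_apply]; exact ((hu.hasPsi s ψ).sub (hv.hasPsi s ψ)).deriv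
lemma dS_k_sub {u v : ℝ → ℝ → ℝ} (hu : Smooth2 u) (hv : Smooth2 v) (k : ℕ) :
    dS k (fun s ψ => u s ψ - v s ψ) = fun s ψ => dS k u s ψ - dS k v s ψ := by
  induction k with
  | zero => simp only [dS_zero]
  | succ k ih => rw [dS_succ, ih, dS_one_sub (hu.dS_k k) (hv.dS_k k), ← dS_succ, ← dS_succ]
lemma dPsi_two_sub {u v : ℝ → ℝ → ℝ} (hu : Smooth2 u) (hv : Smooth2 v) :
    dPsi 2 (fun s ψ => u s ψ - v s ψ) = fun s ψ => dPsi 2 u s ψ - dPsi 2 v s ψ := by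
  rw [dPsi_two, dPsi_one_sub hu hv, dPsi_one_sub hu.dPsi_one hv.dPsi_one, ← dPsi_two, ← dPsi_two]

lemma periodic_dS_one {L : ℝ} {h : ℝ → ℝ → ℝ} (hp : PeriodicS L h) : PeriodicS L (dS 1 h) := by
  intro ψ s
  simp only [dS_one_apply]
  rw [← deriv_comp_add_const (fun s' => h s' ψ) L s]
  congr 1
  funext x; exact hp ψ x
lemma periodic_dS {L : ℝ} {h : ℝ → ℝ → ℝ} (hp : PeriodicS L h) (k : ℕ) :
    PeriodicS L (dS k h) := by
  induction k with
  | zero => rwa [dS_zero]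
  | succ k ih => rw [dS_succ]; exact periodic_dS_one ih
lemma periodic_dPsi_one {L : ℝ} {h : ℝ → ℝ → ℝ} (hp : PeriodicS L h) :
    PeriodicS L (dPsi 1 h) := by
  intro ψ s
  simp only [dPsi_one_apply]
  congr 1
  funext x; exact hp x s

/-! ### Integration in the tangential variable -/

/-- integral over one period in `s` -/
noncomputable def SL (L : ℝ) (h : ℝ → ℝ → ℝ) (ψ : ℝ) : ℝ := ∫ s in (0:ℝ)..L, h s ψ

lemma Smooth2.cont_s {h : ℝ → ℝ → ℝ} (hh : Smooth2 h) (ψ : ℝ) : Continuous (fun s => h s ψ) :=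
  hh.continuous.comp (by fun_prop : Continuous fun s : ℝ => (s, ψ))

lemma SL_hasDerivAt (L : ℝ) {h : ℝ → ℝ → ℝ} (hh : Smooth2 h) (ψ : ℝ) :
    HasDerivAt (SL L h) (SL L (dPsi 1 h) ψ) ψ := by
  have hc : Continuous (fun p : ℝ × ℝ => dPsi 1 h p.1 p.2) := hh.dPsi_one.continuous
  obtain ⟨C, hC⟩ := ((isCompact_uIcc (a := (0:ℝ)) (b := L)).prod
    (isCompact_Icc (a := ψ - 1) (b := ψ + 1))).exists_bound_of_continuousOn hc.continuousOn
  refine (intervalIntegral.hasDerivAt_integral_of_dominated_loc_of_deriv_le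
    (F := fun ψ s => h s ψ) (F' := fun ψ s => dPsi 1 h s ψ) (s := Icc (ψ-1) (ψ+1))
    (bound := fun _ => C) (Icc_mem_nhds (by linarith) (by linarith)) ?_ ?_ ?_ ?_ ?_ ?_).2
  · exact Eventually.of_forall fun x => (hh.cont_s x).aestronglyMeasurable
  · exact (hh.cont_s ψ).intervalIntegrable _ _
  · exact (hh.dPsi_one.cont_s ψ).aestronglyMeasurable
  · refine Eventually.of_forall fun t ht x hx => hC (t, x) ⟨uIoc_subset_uIcc ht, hx⟩
  · exact intervalIntegrable_const
  · exact Eventually.of_forall fun t _ x _ => hh.hasPsi t x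

lemma SL_dS (L : ℝ) {h : ℝ → ℝ → ℝ} (hh : Smooth2 h) (hp : PeriodicS L h) (ψ : ℝ) :
    SL L (dS 1 h) ψ = 0 := by
  unfold SL
  rw [intervalIntegral.integral_eq_sub_of_hasDerivAt (fun s _ => hh.hasS s ψ)
    ((hh.dS_one.cont_s ψ).intervalIntegrable _ _)]
  have := hp ψ 0
  simp only [zero_add] at this
  rw [this, sub_self]

lemma SL_continuous (L : ℝ) {h : ℝ → ℝ → ℝ} (hh : Smooth2 h) : Continuous (SL L h) :=
  continuous_iff_continuousAt.2 fun ψ => (SL_hasDerivAt L hh ψ).continuousAt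

/-- fundamental domain -/
def reg (L : ℝ) : Set (ℝ × ℝ) := Ioc (0:ℝ) L ×ˢ Ioi (0:ℝ)

lemma reg_meas (L : ℝ) : MeasurableSet (reg L) := measurableSet_Ioc.prod measurableSet_Ioi

lemma fubini {L : ℝ} (hL : 0 < L) {Φ : ℝ → ℝ → ℝ}
    (hi : IntegrableOn (fun p : ℝ × ℝ => Φ p.1 p.2) (reg L)) :
    IntegrableOn (SL L Φ) (Ioi 0) ∧ ∫ p in reg L, Φ p.1 p.2 = ∫ ψ in Ioi (0:ℝ), SL L Φ ψ := by
  have hi' : Integrable (fun p : ℝ × ℝ => Φ p.1 p.2)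
      ((volume.restrict (Ioc 0 L)).prod (volume.restrict (Ioi 0))) := by
    rw [Measure.prod_restrict]; exact hi
  have e : SL L Φ = fun ψ => ∫ s in Ioc 0 L, Φ s ψ := by
    funext ψ; unfold SL; rw [intervalIntegral.integral_of_le hL.le]
  rw [e]
  refine ⟨hi'.integral_prod_right, ?_⟩
  rw [← integral_prod_symm (fun p : ℝ × ℝ => Φ p.1 p.2) hi', Measure.prod_restrict]
  rfl

/-! ### Part 2: one-dimensional inequalities and weighted spaces -/

lemma cs_one {L : ℝ} (hL : 0 < L) {f : ℝ → ℝ} (hf : Continuous f) :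
    (∫ s in (0:ℝ)..L, f s) ^ 2 ≤ L * ∫ s in (0:ℝ)..L, (f s) ^ 2 := by
  set I := ∫ s in (0:ℝ)..L, f s with hI
  set m := I / L with hm
  have h0 : 0 ≤ ∫ s in (0:ℝ)..L, (f s - m) ^ 2 :=
    intervalIntegral.integral_nonneg hL.le (fun s _ => sq_nonneg _)
  have h1 : ∫ s in (0:ℝ)..L, (f s - m) ^ 2
      = (∫ s in (0:ℝ)..L, (f s) ^ 2) - 2 * m * I + m ^ 2 * L := by
    have : ∀ s, (f s - m) ^ 2 = ((f s) ^ 2 - 2 * m * f s) + m ^ 2 := fun s => by ring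
    simp only [this]
    rw [intervalIntegral.integral_add, intervalIntegral.integral_sub,
      intervalIntegral.integral_const_mul, intervalIntegral.integral_const]
    · simp; ring
    all_goals exact Continuous.intervalIntegrable (by fun_prop) _ _
  rw [h1] at h0
  have h2 : m * L = I := by rw [hm]; field_simp
  have h3 : m * I * L = I ^ 2 := by rw [← h2]; ring
  have h4 : m ^ 2 * L * L = I ^ 2 := by rw [← h2]; ring
  nlinarith [mul_nonneg h0 hL.le]

lemma diff_sq_le {L : ℝ} (hL : 0 < L) {h h' : ℝ → ℝ} (hd : ∀ s, HasDerivAt h (h' s) s)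
    (hc : Continuous h') {s t : ℝ} (hs : s ∈ Icc 0 L) (ht : t ∈ Icc 0 L) :
    (h s - h t) ^ 2 ≤ L * ∫ x in (0:ℝ)..L, (h' x) ^ 2 := by
  have e : h s - h t = ∫ x in t..s, h' x :=
    (intervalIntegral.integral_eq_sub_of_hasDerivAt (fun x _ => hd x)
      (hc.intervalIntegrable _ _)).symm
  have h1 : |h s - h t| ≤ ∫ x in (0:ℝ)..L, |h' x| := by
    rw [e]
    calc abs (∫ x in t..s, h' x) ≤ abs (∫ x in t..s, |h' x|) := by
          simpa using intervalIntegral.norm_integral_le_abs_integral_norm (f := h') (a := t)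
            (b := s) (μ := volume)
      _ ≤ abs (∫ x in (0:ℝ)..L, |h' x|) := by
          apply intervalIntegral.abs_integral_mono_interval
          · rw [uIoc_of_le hL.le]
            intro x hx
            rw [mem_uIoc] at hx
            rcases hx with hx | hx
            · exact ⟨lt_of_le_of_lt ht.1 hx.1, hx.2.trans hs.2⟩
            · exact ⟨lt_of_le_of_lt hs.1 hx.1, hx.2.trans ht.2⟩
          · exact Eventually.of_forall fun x => abs_nonneg _
          · exact (hc.abs).intervalIntegrable _ _
      _ = ∫ x in (0:ℝ)..L, |h' x| := abs_of_nonneg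
          (intervalIntegral.integral_nonneg hL.le (fun s _ => abs_nonneg _))
  have h2 := cs_one hL hc.abs
  simp only [sq_abs] at h2
  refine le_trans ?_ h2
  rw [← sq_abs (h s - h t)]
  exact pow_le_pow_left₀ (abs_nonneg _) h1 2

lemma sobolev_s {L : ℝ} (hL : 0 < L) {h h' : ℝ → ℝ} (hd : ∀ s, HasDerivAt h (h' s) s)
    (hc : Continuous h') {s : ℝ} (hs : s ∈ Icc 0 L) :
    (h s) ^ 2 ≤ 2 / L * (∫ x in (0:ℝ)..L, (h x) ^ 2) + 2 * L * ∫ x in (0:ℝ)..L, (h' x) ^ 2 := by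
  have hcont : Continuous h := continuous_iff_continuousAt.2 fun x => (hd x).continuousAt
  set c := L * ∫ x in (0:ℝ)..L, (h' x) ^ 2
  have h1 : ∫ t in (0:ℝ)..L, (h s) ^ 2 ≤ ∫ t in (0:ℝ)..L, (2 * (h t) ^ 2 + 2 * c) := by
    apply intervalIntegral.integral_mono_on hL.le
    · exact intervalIntegrable_const
    · exact Continuous.intervalIntegrable (by fun_prop) _ _
    · intro t ht
      have := diff_sq_le hL hd hc hs ht
      nlinarith [sq_nonneg (h s - 2 * h t)]
  rw [intervalIntegral.integral_add, intervalIntegral.integral_const_mul,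
    intervalIntegral.integral_const, intervalIntegral.integral_const] at h1
  · simp only [sub_zero, smul_eq_mul] at h1
    have : (h s) ^ 2 ≤ (2 * (∫ t in (0:ℝ)..L, (h t) ^ 2) + L * (2 * c)) / L := by
      rw [le_div_iff₀ hL]; linarith
    refine this.trans (le_of_eq ?_)
    simp only [c]; field_simp
  all_goals exact Continuous.intervalIntegrable (by fun_prop) _ _

lemma poincare_s {L : ℝ} (hL : 0 < L) {q : ℝ → ℝ} (hq : Continuous q) (hqpos : ∀ s, 0 < q s)
    {h h' : ℝ → ℝ} (hd : ∀ s, HasDerivAt h (h' s) s) (hc : Continuous h') :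
    (∫ x in (0:ℝ)..L, (h x) ^ 2) ≤
      2 * L / (∫ x in (0:ℝ)..L, q x) ^ 2 * (∫ x in (0:ℝ)..L, q x * h x) ^ 2
      + 2 * L ^ 2 * ∫ x in (0:ℝ)..L, (h' x) ^ 2 := by
  have hcont : Continuous h := continuous_iff_continuousAt.2 fun x => (hd x).continuousAt
  set c := L * ∫ x in (0:ℝ)..L, (h' x) ^ 2 with hcdef
  have hc0 : 0 ≤ c := mul_nonneg hL.le
    (intervalIntegral.integral_nonneg hL.le (fun s _ => sq_nonneg _))
  set Iq := ∫ x in (0:ℝ)..L, q x with hIq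
  have hIqpos : 0 < Iq := intervalIntegral.intervalIntegral_pos_of_pos
    (hq.intervalIntegrable _ _) hqpos hL
  set m := (∫ x in (0:ℝ)..L, q x * h x) / Iq with hm
  have key : ∀ s ∈ Icc (0:ℝ) L, (h s) ^ 2 ≤ 2 * m ^ 2 + 2 * c := by
    intro s hs
    have e1 : ∫ t in (0:ℝ)..L, q t * (h s - h t) = (h s - m) * Iq := by
      have : ∀ t, q t * (h s - h t) = h s * q t - q t * h t := fun t => by ring
      simp only [this]
      rw [intervalIntegral.integral_sub, intervalIntegral.integral_const_mul]
      · have hmI : m * Iq = ∫ x in (0:ℝ)..L, q x * h x := div_mul_cancel₀ _ hIqpos.ne'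
        rw [sub_mul, hmI]
      all_goals exact Continuous.intervalIntegrable (by fun_prop) _ _
    have e2 : |∫ t in (0:ℝ)..L, q t * (h s - h t)| ≤ ∫ t in (0:ℝ)..L, q t * Real.sqrt c := by
      refine (intervalIntegral.abs_integral_le_integral_abs hL.le).trans ?_
      apply intervalIntegral.integral_mono_on hL.le
      · exact Continuous.intervalIntegrable (by fun_prop) _ _
      · exact Continuous.intervalIntegrable (by fun_prop) _ _
      · intro t ht
        rw [abs_mul, abs_of_pos (hqpos t)]
        exact mul_le_mul_of_nonneg_left (Real.abs_le_sqrt (diff_sq_le hL hd hc hs ht))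
          (hqpos t).le
    rw [intervalIntegral.integral_mul_const, e1, abs_mul, abs_of_pos hIqpos, mul_comm] at e2
    have e3 : |h s - m| ≤ Real.sqrt c := le_of_mul_le_mul_left e2 hIqpos
    have e4 : (h s - m) ^ 2 ≤ c := by
      rw [← sq_abs]
      calc |h s - m| ^ 2 ≤ (Real.sqrt c) ^ 2 := pow_le_pow_left₀ (abs_nonneg _) e3 2
        _ = c := Real.sq_sqrt hc0
    nlinarith [sq_nonneg (h s - 2 * m)]
  have h1 : ∫ t in (0:ℝ)..L, (h t) ^ 2 ≤ ∫ t in (0:ℝ)..L, (2 * m ^ 2 + 2 * c) := by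
    apply intervalIntegral.integral_mono_on hL.le
    · exact Continuous.intervalIntegrable (by fun_prop) _ _
    · exact intervalIntegrable_const
    · exact key
  rw [intervalIntegral.integral_const] at h1
  simp only [sub_zero, smul_eq_mul] at h1
  refine h1.trans (le_of_eq ?_)
  rw [hm, hcdef]; field_simp

/-! weighted spaces -/

/-- weighted square -/
noncomputable def E (L : ℝ) (h : ℝ → ℝ → ℝ) : ℝ := L2sq L (wt 50 h)
/-- weighted finiteness -/
def Fi (L : ℝ) (h : ℝ → ℝ → ℝ) : Prop := FiniteL2 L (wt 50 h)

lemma E_eq (L : ℝ) (h : ℝ → ℝ → ℝ) :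
    E L h = ∫ p in reg L, (1 + p.2) ^ 100 * (h p.1 p.2) ^ 2 := by
  unfold E L2sq wt reg
  congr 1; funext p; ring

lemma Fi_iff (L : ℝ) (h : ℝ → ℝ → ℝ) :
    Fi L h ↔ IntegrableOn (fun p : ℝ × ℝ => (1 + p.2) ^ 100 * (h p.1 p.2) ^ 2) (reg L) := by
  unfold Fi FiniteL2 wt reg
  have : (fun p : ℝ × ℝ => ((1 + p.2) ^ 50 * h p.1 p.2) ^ 2)
    = fun p => (1 + p.2) ^ 100 * (h p.1 p.2) ^ 2 := by funext p; ring
  rw [this]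

lemma E_nonneg (L : ℝ) (h : ℝ → ℝ → ℝ) : 0 ≤ E L h := by
  unfold E L2sq; exact integral_nonneg fun p => sq_nonneg _

lemma integrable_of_dom {L : ℝ} {Φ B : ℝ × ℝ → ℝ} (hc : Continuous Φ)
    (hB : IntegrableOn B (reg L)) (hle : ∀ p ∈ reg L, |Φ p| ≤ B p) : IntegrableOn Φ (reg L) := by
  refine Integrable.mono' hB hc.aestronglyMeasurable ?_
  exact (ae_restrict_iff' (reg_meas L)).2 (Eventually.of_forall fun p hp => hle p hp)

lemma E_dom {L : ℝ} {h : ℝ → ℝ → ℝ} (hc : Continuous (fun p : ℝ × ℝ => h p.1 p.2))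
    {B : ℝ × ℝ → ℝ} (hB : IntegrableOn B (reg L))
    (hle : ∀ p ∈ reg L, (1 + p.2) ^ 100 * (h p.1 p.2) ^ 2 ≤ B p) :
    Fi L h ∧ E L h ≤ ∫ p in reg L, B p := by
  have h1 : IntegrableOn (fun p : ℝ × ℝ => (1 + p.2) ^ 100 * (h p.1 p.2) ^ 2) (reg L) := by
    refine integrable_of_dom (by fun_prop) hB fun p hp => ?_
    rw [abs_of_nonneg]
    · exact hle p hp
    · have : (0:ℝ) < p.2 := hp.2
      positivity
  refine ⟨(Fi_iff L h).2 h1, ?_⟩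
  rw [E_eq]
  exact setIntegral_mono_on h1 hB (reg_meas L) hle

lemma E_lin {L : ℝ} {n : ℕ} {h : ℝ → ℝ → ℝ} (hc : Continuous (fun p : ℝ × ℝ => h p.1 p.2))
    (c : Fin n → ℝ) (u : Fin n → ℝ → ℝ → ℝ) (hu : ∀ i, Fi L (u i))
    (hle : ∀ s ∈ Ioc 0 L, ∀ ψ > 0, (h s ψ) ^ 2 ≤ ∑ i, c i * (u i s ψ) ^ 2) :
    Fi L h ∧ E L h ≤ ∑ i, c i * E L (u i) := by
  have hi : ∀ i ∈ Finset.univ, IntegrableOn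
      (fun p : ℝ × ℝ => c i * ((1 + p.2) ^ 100 * (u i p.1 p.2) ^ 2)) (reg L) :=
    fun i _ => Integrable.const_mul ((Fi_iff L (u i)).1 (hu i)) (c i)
  have := E_dom (L := L) hc (B := fun p => ∑ i, c i * ((1 + p.2) ^ 100 * (u i p.1 p.2) ^ 2))
    (integrable_finsetSum _ hi) (fun p hp => by
      have h1 := hle p.1 hp.1 p.2 hp.2
      have h2 : (0:ℝ) < p.2 := hp.2
      calc (1 + p.2) ^ 100 * (h p.1 p.2) ^ 2
          ≤ (1 + p.2) ^ 100 * ∑ i, c i * (u i p.1 p.2) ^ 2 :=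
            mul_le_mul_of_nonneg_left h1 (by positivity)
        _ = ∑ i, c i * ((1 + p.2) ^ 100 * (u i p.1 p.2) ^ 2) := by
            rw [Finset.mul_sum]; exact Finset.sum_congr rfl fun i _ => by ring)
  refine ⟨this.1, this.2.trans (le_of_eq ?_)⟩
  rw [integral_finsetSum _ hi]
  refine Finset.sum_congr rfl fun i _ => ?_
  rw [integral_const_mul, E_eq]

lemma E_lin1 {L : ℝ} {h u : ℝ → ℝ → ℝ} (hc : Continuous (fun p : ℝ × ℝ => h p.1 p.2))
    (c : ℝ) (hu : Fi L u)
    (hle : ∀ s ∈ Ioc 0 L, ∀ ψ > 0, (h s ψ) ^ 2 ≤ c * (u s ψ) ^ 2) :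
    Fi L h ∧ E L h ≤ c * E L u := by
  have := E_lin (n := 1) hc ![c] ![u] (by simpa using hu) (by simpa using hle)
  simpa using this

lemma E_lin2 {L : ℝ} {h u v : ℝ → ℝ → ℝ} (hc : Continuous (fun p : ℝ × ℝ => h p.1 p.2))
    (c d : ℝ) (hu : Fi L u) (hv : Fi L v)
    (hle : ∀ s ∈ Ioc 0 L, ∀ ψ > 0, (h s ψ) ^ 2 ≤ c * (u s ψ) ^ 2 + d * (v s ψ) ^ 2) :
    Fi L h ∧ E L h ≤ c * E L u + d * E L v := by
  have := E_lin (n := 2) hc ![c, d] ![u, v] (by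
    intro i; fin_cases i <;> simpa) (by simpa [Fin.sum_univ_succ] using hle)
  simpa [Fin.sum_univ_succ] using this

lemma E_lin3 {L : ℝ} {h u v w : ℝ → ℝ → ℝ} (hc : Continuous (fun p : ℝ × ℝ => h p.1 p.2))
    (c d e : ℝ) (hu : Fi L u) (hv : Fi L v) (hw : Fi L w)
    (hle : ∀ s ∈ Ioc 0 L, ∀ ψ > 0,
      (h s ψ) ^ 2 ≤ c * (u s ψ) ^ 2 + d * (v s ψ) ^ 2 + e * (w s ψ) ^ 2) :
    Fi L h ∧ E L h ≤ c * E L u + d * E L v + e * E L w := by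
  have := E_lin (n := 3) hc ![c, d, e] ![u, v, w] (by
    intro i; fin_cases i <;> simpa) (by simpa [Fin.sum_univ_succ, add_assoc] using hle)
  simpa [Fin.sum_univ_succ, add_assoc] using this

lemma Fi_sub {L : ℝ} {u v : ℝ → ℝ → ℝ} (hcu : Continuous (fun p : ℝ × ℝ => u p.1 p.2))
    (hcv : Continuous (fun p : ℝ × ℝ => v p.1 p.2)) (hu : Fi L u) (hv : Fi L v) :
    Fi L (fun s ψ => u s ψ - v s ψ) ∧
      E L (fun s ψ => u s ψ - v s ψ) ≤ 2 * E L u + 2 * E L v :=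
  E_lin2 (hcu.sub hcv) 2 2 hu hv fun s _ ψ _ => by nlinarith [sq_nonneg (u s ψ + v s ψ)]

/-- products of two weighted functions, with any weight below `⟨ψ⟩^100` -/
lemma integrable_prod {L : ℝ} {u v : ℝ → ℝ → ℝ} {ρ : ℝ → ℝ} {C : ℝ} (hρc : Continuous ρ)
    (hρ : ∀ ψ > 0, |ρ ψ| ≤ C * (1 + ψ) ^ 100)
    (hcu : Continuous (fun p : ℝ × ℝ => u p.1 p.2))
    (hcv : Continuous (fun p : ℝ × ℝ => v p.1 p.2)) (hu : Fi L u) (hv : Fi L v) :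
    IntegrableOn (fun p : ℝ × ℝ => ρ p.2 * (u p.1 p.2 * v p.1 p.2)) (reg L) := by
  have h1 := (Integrable.add ((Fi_iff L u).1 hu) ((Fi_iff L v).1 hv)).const_mul (C / 2)
  refine integrable_of_dom (by fun_prop) h1 fun p hp => ?_
  have h2 : (0:ℝ) < p.2 := hp.2
  have h3 := hρ p.2 h2
  rw [abs_mul, abs_mul]
  have h4 : |u p.1 p.2| * |v p.1 p.2| ≤ ((u p.1 p.2) ^ 2 + (v p.1 p.2) ^ 2) / 2 := by
    nlinarith [sq_nonneg (|u p.1 p.2| - |v p.1 p.2|), sq_abs (u p.1 p.2), sq_abs (v p.1 p.2)]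
  calc |ρ p.2| * (|u p.1 p.2| * |v p.1 p.2|)
      ≤ (C * (1 + p.2) ^ 100) * (((u p.1 p.2) ^ 2 + (v p.1 p.2) ^ 2) / 2) :=
        mul_le_mul h3 h4 (by positivity) (le_trans (abs_nonneg _) h3)
    _ = _ := by simp only [Pi.add_apply]; ring

lemma trace_aux {L : ℝ} (hL : 0 < L) {ρ ρ' : ℝ → ℝ} (hρ : ∀ ψ, HasDerivAt ρ (ρ' ψ) ψ)
    {Φ Z : ℝ → ℝ → ℝ} (hΦ : Smooth2 Φ)
    (hZ : ∀ ψ, SL L (dPsi 1 Φ) ψ = SL L Z ψ)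
    (i1 : IntegrableOn (fun p : ℝ × ℝ => ρ p.2 * Φ p.1 p.2) (reg L))
    (i2 : IntegrableOn (fun p : ℝ × ℝ => ρ' p.2 * Φ p.1 p.2) (reg L))
    (i3 : IntegrableOn (fun p : ℝ × ℝ => ρ p.2 * Z p.1 p.2) (reg L)) :
    IntegrableOn (fun ψ => ρ' ψ * SL L Φ ψ) (Ioi 0) ∧ IntegrableOn (fun ψ => ρ ψ * SL L Z ψ) (Ioi 0)
    ∧ ∀ a ≥ 0, -(ρ a * SL L Φ a)
      = ∫ ψ in Ioi a, (ρ' ψ * SL L Φ ψ + ρ ψ * SL L Z ψ) := by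
  have eSL : ∀ (r : ℝ → ℝ) (Ψ : ℝ → ℝ → ℝ),
      SL L (fun s ψ => r ψ * Ψ s ψ) = fun ψ => r ψ * SL L Ψ ψ := by
    intro r Ψ; funext ψ; unfold SL; rw [intervalIntegral.integral_const_mul]
  have j1 := (fubini hL (Φ := fun s ψ => ρ ψ * Φ s ψ) i1).1
  have j2 := (fubini hL (Φ := fun s ψ => ρ' ψ * Φ s ψ) i2).1
  have j3 := (fubini hL (Φ := fun s ψ => ρ ψ * Z s ψ) i3).1
  rw [eSL] at j1 j2 j3
  refine ⟨j2, j3, ?_⟩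
  have hd : ∀ ψ, HasDerivAt (fun ψ => ρ ψ * SL L Φ ψ) (ρ' ψ * SL L Φ ψ + ρ ψ * SL L Z ψ) ψ := by
    intro ψ
    rw [← hZ]
    exact (hρ ψ).mul (SL_hasDerivAt L hΦ ψ)
  have ht : Tendsto (fun ψ => ρ ψ * SL L Φ ψ) atTop (nhds 0) :=
    tendsto_zero_of_hasDerivAt_of_integrableOn_Ioi (a := 0) (fun x _ => hd x) (j2.add j3) j1
  intro a ha
  have := integral_Ioi_of_hasDerivAt_of_tendsto' (a := a) (fun x _ => hd x)
    ((j2.add j3).mono_set (Ioi_subset_Ioi ha)) ht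
  rw [show (∫ ψ in Ioi a, (ρ' ψ * SL L Φ ψ + ρ ψ * SL L Z ψ)) = _ from this]; ring

lemma ibp_psi {L : ℝ} (hL : 0 < L) {ρ ρ' : ℝ → ℝ} (hρ : ∀ ψ, HasDerivAt ρ (ρ' ψ) ψ)
    {Φ Z : ℝ → ℝ → ℝ} (hΦ : Smooth2 Φ)
    (hZ : ∀ ψ, SL L (dPsi 1 Φ) ψ = SL L Z ψ) (h0 : ∀ s, Φ s 0 = 0)
    (i1 : IntegrableOn (fun p : ℝ × ℝ => ρ p.2 * Φ p.1 p.2) (reg L))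
    (i2 : IntegrableOn (fun p : ℝ × ℝ => ρ' p.2 * Φ p.1 p.2) (reg L))
    (i3 : IntegrableOn (fun p : ℝ × ℝ => ρ p.2 * Z p.1 p.2) (reg L)) :
    ∫ p in reg L, ρ p.2 * Z p.1 p.2 = - ∫ p in reg L, ρ' p.2 * Φ p.1 p.2 := by
  obtain ⟨j2, j3, h⟩ := trace_aux hL hρ hΦ hZ i1 i2 i3
  have eSL : ∀ (r : ℝ → ℝ) (Ψ : ℝ → ℝ → ℝ),
      SL L (fun s ψ => r ψ * Ψ s ψ) = fun ψ => r ψ * SL L Ψ ψ := by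
    intro r Ψ; funext ψ; unfold SL; rw [intervalIntegral.integral_const_mul]
  have k2 := (fubini hL (Φ := fun s ψ => ρ' ψ * Φ s ψ) i2).2
  have k3 := (fubini hL (Φ := fun s ψ => ρ ψ * Z s ψ) i3).2
  rw [eSL] at k2 k3
  rw [k2, k3]
  have := h 0 le_rfl
  rw [integral_add j2 j3] at this
  have z : SL L Φ 0 = 0 := by simp [SL, h0]
  rw [z, mul_zero] at this
  linarith

lemma hasDerivAt_wt100 (δ ψ : ℝ) :
    HasDerivAt (fun ψ => (1 + δ * ψ) ^ 100) (100 * δ * (1 + δ * ψ) ^ 99) ψ := by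
  have h1 : HasDerivAt (fun ψ => 1 + δ * ψ) δ ψ := by
    simpa using ((hasDerivAt_id ψ).const_mul δ).const_add 1
  refine (h1.pow 100).congr_deriv ?_
  norm_num; ring

lemma alg_trace {A B k d : ℝ} (hA : 0 ≤ A) (hAB : A ≤ B) :
    |100 * A * (k * k) + B * (2 * (k * d))| ≤ B * (101 * k ^ 2 + d ^ 2) := by
  have hB : 0 ≤ B := hA.trans hAB
  rw [abs_le]
  constructor
  · nlinarith [mul_nonneg hB (sq_nonneg (k + d)), mul_nonneg hA (sq_nonneg k),
      mul_nonneg hB (sq_nonneg k)]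
  · nlinarith [mul_nonneg hB (sq_nonneg (k - d)),
      mul_le_mul_of_nonneg_right hAB (sq_nonneg k)]

lemma alg_sup {P h2 a b x1 x2 n1 n2 n3 n4 : ℝ} (hP : 0 ≤ P) (ha : 0 ≤ a) (hb : 0 ≤ b)
    (n1p : 0 ≤ n1) (n2p : 0 ≤ n2) (n3p : 0 ≤ n3) (n4p : 0 ≤ n4)
    (h1 : P * x1 ≤ 101 * n1 + n2) (h3 : P * x2 ≤ 101 * n3 + n4) (h : h2 ≤ a * x1 + b * x2) :
    P * h2 ≤ 101 * (a + b) * (n1 + n2 + n3 + n4) := by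
  have e1 := mul_le_mul_of_nonneg_left h hP
  have e2 := mul_le_mul_of_nonneg_left h1 ha
  have e3 := mul_le_mul_of_nonneg_left h3 hb
  nlinarith [mul_nonneg ha n1p, mul_nonneg ha n2p, mul_nonneg ha n3p, mul_nonneg ha n4p,
    mul_nonneg hb n1p, mul_nonneg hb n2p, mul_nonneg hb n3p, mul_nonneg hb n4p]

lemma trace_bound {L : ℝ} (hL : 0 < L) {k : ℝ → ℝ → ℝ} (hk : Smooth2 k) (f0 : Fi L k)
    (f1 : Fi L (dPsi 1 k)) {a : ℝ} (ha : 0 ≤ a) :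
    (1 + a) ^ 100 * SL L (fun s ψ => (k s ψ) ^ 2) a ≤ 101 * E L k + E L (dPsi 1 k) := by
  have ck := hk.continuous
  have ck' := hk.dPsi_one.continuous
  have hρ : ∀ ψ : ℝ, HasDerivAt (fun ψ => (1 + ψ) ^ 100) (100 * (1 + ψ) ^ 99) ψ := by
    intro ψ; simpa using hasDerivAt_wt100 1 ψ
  have w1 : ∀ ψ > (0:ℝ), |(1 + ψ) ^ 100| ≤ 1 * (1 + ψ) ^ 100 := fun ψ hψ => by
    rw [abs_of_nonneg (by positivity), one_mul]
  have w2 : ∀ ψ > (0:ℝ), |100 * (1 + ψ) ^ 99| ≤ 100 * (1 + ψ) ^ 100 := fun ψ hψ => by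
    rw [abs_of_nonneg (by positivity)]
    exact mul_le_mul_of_nonneg_left (pow_le_pow_right₀ (by linarith) (by norm_num)) (by norm_num)
  have i1 := integrable_prod (L := L) (by fun_prop) w1 ck ck f0 f0
  have i2 := integrable_prod (L := L) (by fun_prop) w2 ck ck f0 f0
  have i3 := (integrable_prod (L := L) (by fun_prop) w1 ck ck' f0 f1).const_mul 2
  have hZ : dPsi 1 (fun s ψ => k s ψ * k s ψ) = fun s ψ => 2 * (k s ψ * dPsi 1 k s ψ) := by
    rw [dPsi_one_mul hk hk]; funext s ψ; ring
  obtain ⟨j2, j3, h⟩ := trace_aux hL hρ (hk.mul hk)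
    (Z := fun s ψ => 2 * (k s ψ * dPsi 1 k s ψ)) (by rw [hZ]; intro _; rfl) i1 i2
    (i3.congr (Eventually.of_forall fun p => by simp only []; ring))
  have hB : IntegrableOn (fun p : ℝ × ℝ => (1 + p.2) ^ 100 *
      (101 * (k p.1 p.2) ^ 2 + (dPsi 1 k p.1 p.2) ^ 2)) (reg L) := by
    refine ((((Fi_iff L k).1 f0).const_mul 101).add ((Fi_iff L _).1 f1)).congr
      (Eventually.of_forall fun p => by simp only [Pi.add_apply]; ring)
  obtain ⟨b1, b2⟩ := fubini hL (Φ := fun s ψ => (1 + ψ) ^ 100 *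
      (101 * (k s ψ) ^ 2 + (dPsi 1 k s ψ) ^ 2)) hB
  have hEB : ∫ p in reg L, (1 + p.2) ^ 100 * (101 * (k p.1 p.2) ^ 2 + (dPsi 1 k p.1 p.2) ^ 2)
      = 101 * E L k + E L (dPsi 1 k) := by
    rw [E_eq, E_eq, ← integral_const_mul, ← integral_add (((Fi_iff L k).1 f0).const_mul 101)
      ((Fi_iff L _).1 f1)]
    congr 1; funext p; ring
  rw [hEB] at b2
  rw [b2]
  have h2 := h a ha
  have e0 : SL L (fun s ψ => (k s ψ) ^ 2) = SL L (fun s ψ => k s ψ * k s ψ) := by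
    congr 1; funext s ψ; ring
  rw [e0]
  have hpt : ∀ ψ > (0:ℝ), |100 * (1 + ψ) ^ 99 * SL L (fun s ψ => k s ψ * k s ψ) ψ
      + (1 + ψ) ^ 100 * SL L (fun s ψ => 2 * (k s ψ * dPsi 1 k s ψ)) ψ|
      ≤ SL L (fun s ψ => (1 + ψ) ^ 100 * (101 * (k s ψ) ^ 2 + (dPsi 1 k s ψ) ^ 2)) ψ := by
    intro ψ hψ
    have cs := hk.cont_s ψ
    have cs' := hk.dPsi_one.cont_s ψ
    unfold SL
    rw [← intervalIntegral.integral_const_mul, ← intervalIntegral.integral_const_mul,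
      ← intervalIntegral.integral_add]
    · refine (intervalIntegral.abs_integral_le_integral_abs hL.le).trans ?_
      apply intervalIntegral.integral_mono_on hL.le
      · exact Continuous.intervalIntegrable (by fun_prop) _ _
      · exact Continuous.intervalIntegrable (by fun_prop) _ _
      · intro s _
        exact alg_trace (pow_nonneg (by linarith) 99)
          (pow_le_pow_right₀ (by linarith) (by norm_num))
    all_goals exact Continuous.intervalIntegrable (by fun_prop) _ _
  have h3 : (1 + a) ^ 100 * SL L (fun s ψ => k s ψ * k s ψ) a
      ≤ |∫ ψ in Ioi a, (100 * (1 + ψ) ^ 99 * SL L (fun s ψ => k s ψ * k s ψ) ψ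
      + (1 + ψ) ^ 100 * SL L (fun s ψ => 2 * (k s ψ * dPsi 1 k s ψ)) ψ)| := by
    rw [← h2, abs_neg]; exact le_abs_self _
  have hnn : ∀ ψ > (0:ℝ), 0 ≤
      SL L (fun s ψ => (1 + ψ) ^ 100 * (101 * (k s ψ) ^ 2 + (dPsi 1 k s ψ) ^ 2)) ψ :=
    fun ψ hψ => (abs_nonneg _).trans (hpt ψ hψ)
  calc _ ≤ _ := h3
    _ ≤ ∫ ψ in Ioi a, |100 * (1 + ψ) ^ 99 * SL L (fun s ψ => k s ψ * k s ψ) ψ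
      + (1 + ψ) ^ 100 * SL L (fun s ψ => 2 * (k s ψ * dPsi 1 k s ψ)) ψ| :=
        abs_integral_le_integral_abs
    _ ≤ ∫ ψ in Ioi a, SL L (fun s ψ => (1 + ψ) ^ 100 *
          (101 * (k s ψ) ^ 2 + (dPsi 1 k s ψ) ^ 2)) ψ := by
        refine setIntegral_mono_on ?_ (b1.mono_set (Ioi_subset_Ioi ha)) measurableSet_Ioi
          (fun ψ hψ => hpt ψ (lt_of_le_of_lt ha hψ))
        exact ((j2.add j3).mono_set (Ioi_subset_Ioi ha)).abs
    _ ≤ _ := by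
        refine setIntegral_mono_set b1 ?_ (Ioi_subset_Ioi ha).eventuallyLE
        exact (ae_restrict_iff' measurableSet_Ioi).2 (Eventually.of_forall fun ψ hψ => hnn ψ hψ)

/-- weighted sup bound -/
lemma sup_bound {L : ℝ} (hL : 0 < L) {h : ℝ → ℝ → ℝ} (hh : Smooth2 h) (f0 : Fi L h)
    (f1 : Fi L (dPsi 1 h)) (f2 : Fi L (dS 1 h)) (f3 : Fi L (dPsi 1 (dS 1 h)))
    {s : ℝ} (hs : s ∈ Icc 0 L) {ψ : ℝ} (hψ : 0 ≤ ψ) :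
    ((1 + ψ) ^ 50 * h s ψ) ^ 2 ≤ 101 * (2 / L + 2 * L) *
      (E L h + E L (dPsi 1 h) + E L (dS 1 h) + E L (dPsi 1 (dS 1 h))) := by
  have a1 := trace_bound hL hh f0 f1 hψ
  have a2 := trace_bound hL hh.dS_one f2 f3 hψ
  have a3 := sobolev_s hL (fun s => hh.hasS s ψ) (hh.dS_one.cont_s ψ) hs
  simp only [SL] at a1 a2
  have e : ((1 + ψ) ^ 50 * h s ψ) ^ 2 = (1 + ψ) ^ 100 * (h s ψ) ^ 2 := by ring
  rw [e]
  exact alg_sup (pow_nonneg (by linarith) 100) (by positivity) (by positivity) (E_nonneg _ _)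
    (E_nonneg _ _) (E_nonneg _ _) (E_nonneg _ _) a1 a2 a3

/-! ### Part 3: the weighted energy estimate -/

/-- slowly varying weight -/
noncomputable def wd (δ ψ : ℝ) : ℝ := (1 + δ * ψ) ^ 100
/-- derivative of the slowly varying weight -/
noncomputable def wd' (δ ψ : ℝ) : ℝ := 100 * δ * (1 + δ * ψ) ^ 99

lemma wd_hasDeriv (δ ψ : ℝ) : HasDerivAt (wd δ) (wd' δ ψ) ψ := hasDerivAt_wt100 δ ψ
lemma wd_cont (δ : ℝ) : Continuous (wd δ) := by unfold wd; fun_prop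
lemma wd'_cont (δ : ℝ) : Continuous (wd' δ) := by unfold wd'; fun_prop
lemma wd_one (ψ : ℝ) : wd 1 ψ = (1 + ψ) ^ 100 := by unfold wd; rw [one_mul]
lemma wd_pos {δ ψ : ℝ} (hδ : 0 ≤ δ) (hψ : 0 ≤ ψ) : 0 < wd δ ψ := by unfold wd; positivity
lemma wd_le {δ ψ : ℝ} (hδ : 0 ≤ δ) (hδ1 : δ ≤ 1) (hψ : 0 ≤ ψ) : wd δ ψ ≤ wd 1 ψ := by
  unfold wd
  exact pow_le_pow_left₀ (by positivity) (by nlinarith) _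
lemma wd_ge {δ ψ : ℝ} (hδ : 0 ≤ δ) (hδ1 : δ ≤ 1) (hψ : 0 ≤ ψ) :
    δ ^ 100 * wd 1 ψ ≤ wd δ ψ := by
  unfold wd
  rw [← mul_pow]
  exact pow_le_pow_left₀ (by positivity) (by nlinarith) _
lemma wd'_nonneg {δ ψ : ℝ} (hδ : 0 ≤ δ) (hψ : 0 ≤ ψ) : 0 ≤ wd' δ ψ := by
  unfold wd'; positivity
lemma wd'_le {δ ψ : ℝ} (hδ : 0 ≤ δ) (hψ : 0 ≤ ψ) : wd' δ ψ ≤ 100 * δ * wd δ ψ := by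
  unfold wd wd'
  have h1 : (1:ℝ) ≤ 1 + δ * ψ := by nlinarith [mul_nonneg hδ hψ]
  exact mul_le_mul_of_nonneg_left (pow_le_pow_right₀ h1 (by norm_num)) (by positivity)

/-- weighted bilinear form -/
noncomputable def Rb (L δ : ℝ) (u v : ℝ → ℝ → ℝ) : ℝ :=
  ∫ p in reg L, wd δ p.2 * (u p.1 p.2 * v p.1 p.2)

section
variable {L δ : ℝ}

lemma Rb_int (hδ : 0 ≤ δ) (hδ1 : δ ≤ 1) {u v : ℝ → ℝ → ℝ}
    (hcu : Continuous (fun p : ℝ × ℝ => u p.1 p.2))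
    (hcv : Continuous (fun p : ℝ × ℝ => v p.1 p.2)) (hu : Fi L u) (hv : Fi L v) :
    IntegrableOn (fun p : ℝ × ℝ => wd δ p.2 * (u p.1 p.2 * v p.1 p.2)) (reg L) := by
  refine integrable_prod (C := 1) (wd_cont δ) (fun ψ hψ => ?_) hcu hcv hu hv
  rw [abs_of_pos (wd_pos hδ hψ.le), one_mul, ← wd_one]
  exact wd_le hδ hδ1 hψ.le

lemma Rb_int' (hδ : 0 ≤ δ) (hδ1 : δ ≤ 1) {u v : ℝ → ℝ → ℝ}
    (hcu : Continuous (fun p : ℝ × ℝ => u p.1 p.2))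
    (hcv : Continuous (fun p : ℝ × ℝ => v p.1 p.2)) (hu : Fi L u) (hv : Fi L v) :
    IntegrableOn (fun p : ℝ × ℝ => wd' δ p.2 * (u p.1 p.2 * v p.1 p.2)) (reg L) := by
  refine integrable_prod (C := 100) (wd'_cont δ) (fun ψ hψ => ?_) hcu hcv hu hv
  rw [abs_of_nonneg (wd'_nonneg hδ hψ.le), ← wd_one]
  have h1 := wd'_le hδ hψ.le
  have h2 := wd_le hδ hδ1 hψ.le
  have h3 := wd_pos hδ hψ.le
  nlinarith

lemma E_eq_wd (L : ℝ) (h : ℝ → ℝ → ℝ) : E L h = Rb L 1 h h := by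
  rw [E_eq]; unfold Rb
  refine setIntegral_congr_fun (reg_meas L) fun p _ => ?_
  change (1 + p.2) ^ 100 * (h p.1 p.2) ^ 2 = wd 1 p.2 * (h p.1 p.2 * h p.1 p.2)
  rw [wd_one, pow_two (h p.1 p.2)]

lemma Rb_self_le (hδ : 0 ≤ δ) (hδ1 : δ ≤ 1) {u : ℝ → ℝ → ℝ}
    (hcu : Continuous (fun p : ℝ × ℝ => u p.1 p.2)) (hu : Fi L u) : Rb L δ u u ≤ E L u := by
  rw [E_eq_wd]
  refine setIntegral_mono_on (Rb_int hδ hδ1 hcu hcu hu hu)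
    (Rb_int zero_le_one le_rfl hcu hcu hu hu) (reg_meas L) fun p hp => ?_
  exact mul_le_mul_of_nonneg_right (wd_le hδ hδ1 (le_of_lt hp.2)) (mul_self_nonneg _)

lemma Rb_self_ge (hδ : 0 ≤ δ) (hδ1 : δ ≤ 1) {u : ℝ → ℝ → ℝ}
    (hcu : Continuous (fun p : ℝ × ℝ => u p.1 p.2)) (hu : Fi L u) :
    δ ^ 100 * E L u ≤ Rb L δ u u := by
  rw [E_eq_wd]; unfold Rb
  rw [← integral_const_mul]
  refine setIntegral_mono_on ((Rb_int zero_le_one le_rfl hcu hcu hu hu).const_mul _)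
    (Rb_int hδ hδ1 hcu hcu hu hu) (reg_meas L) fun p hp => ?_
  rw [← mul_assoc]
  exact mul_le_mul_of_nonneg_right (wd_ge hδ hδ1 (le_of_lt hp.2)) (mul_self_nonneg _)

lemma Rb_self_nonneg (hδ : 0 ≤ δ) (u : ℝ → ℝ → ℝ) : 0 ≤ Rb L δ u u :=
  setIntegral_nonneg (reg_meas L) fun p hp =>
    mul_nonneg (wd_pos hδ (le_of_lt hp.2)).le (mul_self_nonneg _)

/-- the error term produced by the derivative of the weight -/
lemma Rb_err (hδ : 0 ≤ δ) (hδ1 : δ ≤ 1) {u v : ℝ → ℝ → ℝ}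
    (hcu : Continuous (fun p : ℝ × ℝ => u p.1 p.2))
    (hcv : Continuous (fun p : ℝ × ℝ => v p.1 p.2)) (hu : Fi L u) (hv : Fi L v) :
    - ∫ p in reg L, wd' δ p.2 * (u p.1 p.2 * v p.1 p.2)
      ≤ 50 * δ * (Rb L δ u u + Rb L δ v v) := by
  unfold Rb
  rw [← integral_add (Rb_int hδ hδ1 hcu hcu hu hu) (Rb_int hδ hδ1 hcv hcv hv hv),
    ← integral_const_mul, ← integral_neg]
  refine setIntegral_mono_on (Rb_int' hδ hδ1 hcu hcv hu hv).neg
    (((Rb_int hδ hδ1 hcu hcu hu hu).add (Rb_int hδ hδ1 hcv hcv hv hv)).const_mul _)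
    (reg_meas L) fun p hp => ?_
  have h0 : (0:ℝ) ≤ p.2 := le_of_lt hp.2
  have h1 := wd'_le hδ h0
  have h2 := wd'_nonneg hδ h0
  generalize wd' δ p.2 = x at *
  generalize wd δ p.2 = y at *
  generalize u p.1 p.2 = a at *
  generalize v p.1 p.2 = b at *
  nlinarith [mul_nonneg h2 (mul_self_nonneg (a + b)),
    mul_nonneg (sub_nonneg.2 h1) (add_nonneg (mul_self_nonneg a) (mul_self_nonneg b))]

end

lemma energy_alg {qm qM K a b c h γ η δ X ω : ℝ} (hqm : 0 < qm) (hqM : 0 < qM) (hK : 0 ≤ K)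
    (hδ : δ = min (1/100) (1 / (400 * qM * (1 + (2 * K + 8 / qm ^ 2)))))
    (hω0 : 0 < ω) (hω : ω ≤ 2)
    (ha : 0 ≤ a) (hb : 0 ≤ b) (hh : 0 ≤ h) (hγ : 0 ≤ γ) (hη : 0 ≤ η)
    (h2 : a / (2 * qM) ≤ ω * X + γ / (2 * qm)) (hX : X ≤ 50 * δ * (a + b))
    (h3 : b ≤ (h + c) / 2 + 50 * δ * (h + b))
    (h4 : c ≤ 8 / qm ^ 2 * (a + γ)) (h5 : h ≤ K * (a + η)) :
    a ≤ (2 + 2 * (qM / qm)) * (γ + η) ∧ b ≤ (2 * K + 8 / qm ^ 2) * (a + γ + η) := by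
  set K2 := 2 * K + 8 / qm ^ 2 with hK2
  set r := 8 / qm ^ 2 with hr
  have hr0 : 0 < r := by positivity
  have hK20 : 0 < K2 := by positivity
  have hδ1 : δ ≤ 1/100 := hδ ▸ min_le_left _ _
  have hδ2 : δ ≤ 1 / (400 * qM * (1 + K2)) := hδ ▸ min_le_right _ _
  have hδ0 : 0 < δ := by rw [hδ]; positivity
  have hb2 : b ≤ K2 * (a + γ + η) := by
    have : 50 * δ * (h + b) ≤ 1/2 * (h + b) :=
      mul_le_mul_of_nonneg_right (by linarith) (by linarith)
    have e : b ≤ 2 * h + c := by linarith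
    nlinarith [mul_nonneg hK hγ, mul_nonneg hr0.le hη]
  refine ⟨?_, hb2⟩
  have hX2 : ω * X ≤ 100 * δ * (a + b) := by
    calc ω * X ≤ ω * (50 * δ * (a + b)) := mul_le_mul_of_nonneg_left hX hω0.le
      _ ≤ 2 * (50 * δ * (a + b)) := mul_le_mul_of_nonneg_right hω (by positivity)
      _ = _ := by ring
  have hδ3 : δ * (400 * qM * (1 + K2)) ≤ 1 := by
    rwa [le_div_iff₀ (by positivity)] at hδ2
  have e1 : a ≤ 2 * qM * (100 * δ * (a + b)) + (qM / qm) * γ := by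
    have : a / (2 * qM) ≤ 100 * δ * (a + b) + γ / (2 * qm) := h2.trans (by linarith)
    rw [div_le_iff₀ (by positivity)] at this
    calc a ≤ _ := this
      _ = _ := by field_simp
  have e2 : 2 * qM * (100 * δ * (a + b)) ≤ 1/2 * (a + γ + η) := by
    have hs : a + b ≤ (1 + K2) * (a + γ + η) := by nlinarith
    calc 2 * qM * (100 * δ * (a + b)) ≤ 2 * qM * (100 * δ * ((1 + K2) * (a + γ + η))) := by
          gcongr
      _ = 1/2 * (δ * (400 * qM * (1 + K2))) * (a + γ + η) := by ring
      _ ≤ 1/2 * 1 * (a + γ + η) := by gcongr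
      _ = _ := by ring
  have : 0 ≤ qM / qm := by positivity
  nlinarith [mul_nonneg this hη]

/-- Weighted energy estimate for the linear problem with zero boundary data. -/
lemma energy {L : ℝ} (hL : 0 < L) {q : ℝ → ℝ} {qm qM K : ℝ} (hqm : 0 < qm)
    (hqb : ∀ s, qm ≤ q s ∧ q s ≤ qM) (hK : 0 ≤ K) :
    ∃ C : ℝ, 0 < C ∧ ∀ (ω : ℝ), 1/2 ≤ ω → ω ≤ 2 → ∀ (W G : ℝ → ℝ → ℝ), Smooth2 W → PeriodicS L W →
      Smooth2 G → (∀ s, W s 0 = 0) → Fi L W → Fi L (dS 1 W) → Fi L (dPsi 1 W) →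
      Fi L (dPsi 2 W) → Fi L G →
      (∀ s ψ, dS 1 W s ψ - ω * q s * dPsi 2 W s ψ = G s ψ) →
      ∀ η : ℝ, 0 ≤ η →
      (∀ δ, 0 < δ → δ ≤ 1 → Rb L δ W W ≤ K * (Rb L δ (dS 1 W) (dS 1 W) + η)) →
      E L W + E L (dS 1 W) + E L (dPsi 1 W) + E L (dPsi 2 W) ≤ C * (E L G + η) := by
  have hqM : 0 < qM := hqm.trans_le ((hqb 0).1.trans (hqb 0).2)
  set δ := min (1/100) (1 / (400 * qM * (1 + (2 * K + 8 / qm ^ 2)))) with hδdef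
  have hδ0 : 0 < δ := by positivity
  have hδ1 : δ ≤ 1 := (min_le_left _ _).trans (by norm_num)
  set Ca := 2 + 2 * (qM / qm) with hCa
  set Kb := 2 * K + 8 / qm ^ 2 with hKb
  have hCa0 : 0 < Ca := by positivity
  have hKb0 : 0 < Kb := by positivity
  refine ⟨(K * (Ca + 1) + Ca + Kb * (Ca + 1) + 8 / qm ^ 2 * (Ca + 1)) / δ ^ 100,
    by positivity, ?_⟩
  intro ω hω1 hω2 W G hW hp hG hW0 fW fs fp fpp fG heq η hη hpo
  have cW := hW.continuous
  have cs := hW.dS_one.continuous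
  have cp := hW.dPsi_one.continuous
  have cpp := hW.dPsi_two.continuous
  have cG := hG.continuous
  have hω0 : 0 < ω := by linarith
  -- (1) multiplier `∂_s W`
  have I1 : Rb L δ (dS 1 W) (dPsi 2 W)
      ≤ 50 * δ * (Rb L δ (dS 1 W) (dS 1 W) + Rb L δ (dPsi 1 W) (dPsi 1 W)) := by
    have hZ : ∀ ψ, SL L (dPsi 1 (fun s ψ => dS 1 W s ψ * dPsi 1 W s ψ)) ψ
        = SL L (fun s ψ => dS 1 W s ψ * dPsi 2 W s ψ) ψ := by
      intro ψ
      rw [dPsi_one_mul hW.dS_one hW.dPsi_one, ← dPsi_two, ← dS_dPsi_comm hW]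
      have hsq : Smooth2 (fun s ψ => dPsi 1 W s ψ * dPsi 1 W s ψ) := hW.dPsi_one.mul hW.dPsi_one
      have h0 : SL L (dS 1 (fun s ψ => dPsi 1 W s ψ * dPsi 1 W s ψ)) ψ = 0 := by
        refine SL_dS L hsq ?_ ψ
        intro ψ s
        have := periodic_dPsi_one hp ψ s
        simp only [] at this ⊢
        rw [this]
      rw [dS_one_mul hW.dPsi_one hW.dPsi_one] at h0
      have c1 := hW.dPsi_one.dS_one.cont_s ψ
      have c2 := hW.dPsi_one.cont_s ψ
      have c3 := hW.dS_one.cont_s ψ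
      have c4 := hW.dPsi_two.cont_s ψ
      unfold SL at h0 ⊢
      rw [intervalIntegral.integral_add (Continuous.intervalIntegrable (by fun_prop) _ _)
        (Continuous.intervalIntegrable (by fun_prop) _ _)]
      have e : ∫ s in (0:ℝ)..L, dS 1 (dPsi 1 W) s ψ * dPsi 1 W s ψ = 0 := by
        have : ∀ s, dS 1 (dPsi 1 W) s ψ * dPsi 1 W s ψ = (1/2) *
          (dS 1 (dPsi 1 W) s ψ * dPsi 1 W s ψ + dPsi 1 W s ψ * dS 1 (dPsi 1 W) s ψ) := by
          intro s; ring
        rw [intervalIntegral.integral_congr (fun s _ => this s),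
          intervalIntegral.integral_const_mul, h0, mul_zero]
      rw [e, zero_add]
    have hz : ∀ s, dS 1 W s 0 * dPsi 1 W s 0 = 0 := by
      intro s
      have : dS 1 W s 0 = 0 := by
        rw [dS_one_apply]
        have : (fun s' => W s' 0) = fun _ => 0 := by funext s'; exact hW0 s'
        rw [this]; simp
      rw [this, zero_mul]
    have := ibp_psi hL (wd_hasDeriv δ) (hW.dS_one.mul hW.dPsi_one)
      (Z := fun s ψ => dS 1 W s ψ * dPsi 2 W s ψ) hZ hz
      (Rb_int hδ0.le hδ1 cs cp fs fp) (Rb_int' hδ0.le hδ1 cs cp fs fp)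
      (Rb_int hδ0.le hδ1 cs cpp fs fpp)
    unfold Rb at *
    rw [this]
    exact Rb_err hδ0.le hδ1 cs cp fs fp
  -- (2) pointwise use of the equation
  have I2 : Rb L δ (dS 1 W) (dS 1 W) / (2 * qM)
      ≤ ω * Rb L δ (dS 1 W) (dPsi 2 W) + Rb L δ G G / (2 * qm) := by
    have ia := Rb_int hδ0.le hδ1 cs cs fs fs
    have ib := Rb_int hδ0.le hδ1 cs cpp fs fpp
    have ic := Rb_int hδ0.le hδ1 cG cG fG fG
    unfold Rb
    rw [← integral_div, ← integral_div, ← integral_const_mul,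
      ← integral_add (ib.const_mul _) (ic.div_const _)]
    refine setIntegral_mono_on (ia.div_const _) ((ib.const_mul _).add (ic.div_const _))
      (reg_meas L) fun p hp => ?_
    have hw := wd_pos hδ0.le (le_of_lt hp.2 : (0:ℝ) ≤ p.2)
    have he := heq p.1 p.2
    obtain ⟨hq1, hq2⟩ := hqb p.1
    generalize wd δ p.2 = y at *
    generalize dS 1 W p.1 p.2 = a at *
    generalize dPsi 2 W p.1 p.2 = c at *
    generalize G p.1 p.2 = g at *
    generalize q p.1 = Q at *
    have hQ : 0 < Q := hqm.trans_le hq1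
    have key : a * a / (2 * qM) ≤ ω * (a * c) + g * g / (2 * qm) := by
      have k1 : a * a / (2 * qM) ≤ a * a / (2 * Q) :=
        div_le_div_of_nonneg_left (mul_self_nonneg a) (by positivity) (by linarith)
      have k2 : g * g / (2 * Q) ≤ g * g / (2 * qm) :=
        div_le_div_of_nonneg_left (mul_self_nonneg g) (by positivity) (by linarith)
      have k3 : ω * (a * c) + g * g / (2 * Q) - a * a / (2 * Q) = (a - g) ^ 2 / (2 * Q) := by
        have : ω * c = (a - g) / Q := by field_simp; linarith
        have : ω * (a * c) = a * ((a - g) / Q) := by rw [← this]; ring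
        rw [this]; field_simp; ring
      have k4 : 0 ≤ (a - g) ^ 2 / (2 * Q) := by positivity
      linarith
    calc y * (a * a) / (2 * qM) = y * (a * a / (2 * qM)) := by ring
      _ ≤ y * (ω * (a * c) + g * g / (2 * qm)) := mul_le_mul_of_nonneg_left key hw.le
      _ = _ := by ring
  -- (3) interpolation
  have I3 : Rb L δ (dPsi 1 W) (dPsi 1 W) ≤ (Rb L δ W W + Rb L δ (dPsi 2 W) (dPsi 2 W)) / 2
      + 50 * δ * (Rb L δ W W + Rb L δ (dPsi 1 W) (dPsi 1 W)) := by
    have ia := Rb_int hδ0.le hδ1 cp cp fp fp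
    have ib := Rb_int hδ0.le hδ1 cW cpp fW fpp
    have ic := Rb_int hδ0.le hδ1 cW cW fW fW
    have id := Rb_int hδ0.le hδ1 cpp cpp fpp fpp
    have hZ : dPsi 1 (fun s ψ => W s ψ * dPsi 1 W s ψ)
        = fun s ψ => dPsi 1 W s ψ * dPsi 1 W s ψ + W s ψ * dPsi 2 W s ψ := by
      rw [dPsi_one_mul hW hW.dPsi_one, ← dPsi_two]
    have i3 : IntegrableOn (fun p : ℝ × ℝ => wd δ p.2 *
        (dPsi 1 W p.1 p.2 * dPsi 1 W p.1 p.2 + W p.1 p.2 * dPsi 2 W p.1 p.2)) (reg L) :=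
      (ia.add ib).congr (Eventually.of_forall fun p => (mul_add _ _ _).symm)
    have hib := ibp_psi hL (wd_hasDeriv δ) (hW.mul hW.dPsi_one)
      (Z := fun s ψ => dPsi 1 W s ψ * dPsi 1 W s ψ + W s ψ * dPsi 2 W s ψ)
      (by rw [hZ]; intro _; rfl) (fun s => by rw [hW0, zero_mul])
      (Rb_int hδ0.le hδ1 cW cp fW fp) (Rb_int' hδ0.le hδ1 cW cp fW fp) i3
    have herr := Rb_err hδ0.le hδ1 cW cp fW fp
    rw [← hib] at herr
    have hsum : ∫ p in reg L, wd δ p.2 *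
        (dPsi 1 W p.1 p.2 * dPsi 1 W p.1 p.2 + W p.1 p.2 * dPsi 2 W p.1 p.2)
        = Rb L δ (dPsi 1 W) (dPsi 1 W) + Rb L δ W (dPsi 2 W) := by
      unfold Rb
      rw [← integral_add ia ib]
      congr 1; funext p; ring
    rw [hsum] at herr
    have hyoung : -Rb L δ W (dPsi 2 W) ≤ (Rb L δ W W + Rb L δ (dPsi 2 W) (dPsi 2 W)) / 2 := by
      unfold Rb
      rw [← integral_add ic id, ← integral_div, ← integral_neg]
      refine setIntegral_mono_on ib.neg ((ic.add id).div_const _) (reg_meas L) fun p hp => ?_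
      have hw := wd_pos hδ0.le (le_of_lt hp.2 : (0:ℝ) ≤ p.2)
      generalize wd δ p.2 = y at *
      generalize W p.1 p.2 = a at *
      generalize dPsi 2 W p.1 p.2 = c at *
      nlinarith [mul_nonneg hw.le (mul_self_nonneg (a + c))]
    linarith
  -- (4) the equation again
  have I4 : Rb L δ (dPsi 2 W) (dPsi 2 W)
      ≤ 8 / qm ^ 2 * (Rb L δ (dS 1 W) (dS 1 W) + Rb L δ G G) := by
    have ia := Rb_int hδ0.le hδ1 cs cs fs fs
    have ib := Rb_int hδ0.le hδ1 cpp cpp fpp fpp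
    have ic := Rb_int hδ0.le hδ1 cG cG fG fG
    unfold Rb
    rw [← integral_add ia ic, ← integral_const_mul]
    refine setIntegral_mono_on ib ((ia.add ic).const_mul _) (reg_meas L) fun p hp => ?_
    have hw := wd_pos hδ0.le (le_of_lt hp.2 : (0:ℝ) ≤ p.2)
    have he := heq p.1 p.2
    obtain ⟨hq1, hq2⟩ := hqb p.1
    generalize wd δ p.2 = y at *
    generalize dS 1 W p.1 p.2 = a at *
    generalize dPsi 2 W p.1 p.2 = c at *
    generalize G p.1 p.2 = g at *
    generalize q p.1 = Q at *
    have hQ : 0 < Q := hqm.trans_le hq1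
    have key : c * c ≤ 8 / qm ^ 2 * (a * a + g * g) := by
      rw [div_mul_eq_mul_div, le_div_iff₀ (by positivity)]
      have h1 : qm / 2 ≤ ω * Q := by nlinarith
      have h2 : (qm / 2) ^ 2 ≤ (ω * Q) ^ 2 := pow_le_pow_left₀ (by positivity) h1 2
      have h3 : (ω * Q * c) ^ 2 = (a - g) ^ 2 := by
        rw [show ω * Q * c = a - g by linarith]
      have h4 : (qm / 2) ^ 2 * (c * c) ≤ (a - g) ^ 2 := by
        rw [← h3, mul_pow, pow_two c]
        exact mul_le_mul_of_nonneg_right h2 (mul_self_nonneg c)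
      nlinarith [sq_nonneg (a + g)]
    calc y * (c * c) ≤ y * (8 / qm ^ 2 * (a * a + g * g)) := mul_le_mul_of_nonneg_left key hw.le
      _ = _ := by ring
  have I5 := hpo δ hδ0 hδ1
  have na := Rb_self_nonneg (L := L) hδ0.le (dS 1 W)
  have nb := Rb_self_nonneg (L := L) hδ0.le (dPsi 1 W)
  have nh := Rb_self_nonneg (L := L) hδ0.le W
  have ng := Rb_self_nonneg (L := L) hδ0.le G
  obtain ⟨r1, r2⟩ := energy_alg hqm hqM hK hδdef hω0 hω2 na nb nh ng hη I2 I1 I3 I4 I5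
  have g1 := Rb_self_ge hδ0.le hδ1 cW fW
  have g2 := Rb_self_ge hδ0.le hδ1 cs fs
  have g3 := Rb_self_ge hδ0.le hδ1 cp fp
  have g4 := Rb_self_ge hδ0.le hδ1 cpp fpp
  have g5 := Rb_self_le hδ0.le hδ1 cG fG
  have hd : 0 < δ ^ 100 := pow_pos hδ0 100
  rw [← hCa] at r1
  rw [← hKb] at r2
  have hr0 : 0 ≤ 8 / qm ^ 2 := by positivity
  generalize 8 / qm ^ 2 = r at *
  generalize δ ^ 100 = d at *
  generalize Rb L δ W W = xh at *
  generalize Rb L δ (dS 1 W) (dS 1 W) = xa at *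
  generalize Rb L δ (dPsi 1 W) (dPsi 1 W) = xb at *
  generalize Rb L δ (dPsi 2 W) (dPsi 2 W) = xc at *
  generalize Rb L δ G G = xg at *
  generalize E L G = eg at *
  rw [div_mul_eq_mul_div, le_div_iff₀ hd]
  have s1 : xa ≤ Ca * (eg + η) := r1.trans (by gcongr)
  have s2 : xa + xg + η ≤ (Ca + 1) * (eg + η) := by linarith
  have s3 : xh ≤ K * ((Ca + 1) * (eg + η)) := I5.trans (by gcongr; linarith)
  have s4 : xb ≤ Kb * ((Ca + 1) * (eg + η)) := r2.trans (by gcongr)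
  have s5 : xc ≤ r * ((Ca + 1) * (eg + η)) := I4.trans (by gcongr; linarith)
  nlinarith

/-! ### Part 4: the linear estimate -/

lemma SL_wd_sq (L δ : ℝ) (W : ℝ → ℝ → ℝ) (ψ : ℝ) :
    SL L (fun s ψ => wd δ ψ * (W s ψ * W s ψ)) ψ = wd δ ψ * ∫ s in (0:ℝ)..L, (W s ψ) ^ 2 := by
  unfold SL
  rw [← intervalIntegral.integral_const_mul]
  exact intervalIntegral.integral_congr fun s _ => by
    change wd δ ψ * (W s ψ * W s ψ) = wd δ ψ * (W s ψ) ^ 2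
    rw [pow_two]

lemma poincare_Rb {L : ℝ} (hL : 0 < L) {q : ℝ → ℝ} (hq : Continuous q) (hqpos : ∀ s, 0 < q s)
    {W : ℝ → ℝ → ℝ} (hW : Smooth2 W) (fW : Fi L W) (fs : Fi L (dS 1 W)) {η : ℝ}
    (hi : IntegrableOn (fun ψ => wd 1 ψ * (SL L (fun s ψ => q s * W s ψ) ψ) ^ 2) (Ioi 0))
    (hη : ∫ ψ in Ioi (0:ℝ), wd 1 ψ * (SL L (fun s ψ => q s * W s ψ) ψ) ^ 2 ≤ η)
    {δ : ℝ} (hδ : 0 < δ) (hδ1 : δ ≤ 1) :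
    Rb L δ W W ≤ (2 * L / (∫ x in (0:ℝ)..L, q x) ^ 2 + 2 * L ^ 2) *
      (Rb L δ (dS 1 W) (dS 1 W) + η) := by
  have cW := hW.continuous
  have cs := hW.dS_one.continuous
  obtain ⟨i1, e1⟩ := fubini hL (Φ := fun s ψ => wd δ ψ * (W s ψ * W s ψ))
    (Rb_int hδ.le hδ1 cW cW fW fW)
  obtain ⟨i2, e2⟩ := fubini hL (Φ := fun s ψ => wd δ ψ * (dS 1 W s ψ * dS 1 W s ψ))
    (Rb_int hδ.le hδ1 cs cs fs fs)
  set c := 2 * L / (∫ x in (0:ℝ)..L, q x) ^ 2 with hc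
  have hc0 : 0 ≤ c := by positivity
  have key : Rb L δ W W ≤ c * η + 2 * L ^ 2 * Rb L δ (dS 1 W) (dS 1 W) := by
    have : Rb L δ W W ≤ ∫ ψ in Ioi (0:ℝ), (c * (wd 1 ψ * (SL L (fun s ψ => q s * W s ψ) ψ) ^ 2)
        + 2 * L ^ 2 * SL L (fun s ψ => wd δ ψ * (dS 1 W s ψ * dS 1 W s ψ)) ψ) := by
      unfold Rb
      rw [e1]
      refine setIntegral_mono_on i1 ((hi.const_mul c).add (i2.const_mul _)) measurableSet_Ioi
        fun ψ hψ => ?_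
      rw [SL_wd_sq, SL_wd_sq]
      have hp := poincare_s hL hq hqpos (fun s => hW.hasS s ψ) (hW.dS_one.cont_s ψ)
      have h0 := wd_pos hδ.le (le_of_lt hψ)
      have h1 := wd_le hδ.le hδ1 (le_of_lt hψ)
      have h2 := mul_le_mul_of_nonneg_left hp h0.le
      have h3 : wd δ ψ * (c * (SL L (fun s ψ => q s * W s ψ) ψ) ^ 2)
        ≤ wd 1 ψ * (c * (SL L (fun s ψ => q s * W s ψ) ψ) ^ 2) :=
        mul_le_mul_of_nonneg_right h1 (by positivity)
      simp only [SL] at h3 ⊢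
      linarith
    refine this.trans ?_
    rw [integral_add (hi.const_mul c) (i2.const_mul _), integral_const_mul, integral_const_mul,
      ← e2]
    change c * _ + 2 * L ^ 2 * Rb L δ (dS 1 W) (dS 1 W) ≤ _
    have := mul_le_mul_of_nonneg_left hη hc0
    linarith
  have r0 := Rb_self_nonneg (L := L) hδ.le (dS 1 W)
  have hη0 : 0 ≤ η := le_trans (setIntegral_nonneg measurableSet_Ioi fun ψ hψ =>
    mul_nonneg (wd_pos zero_le_one (le_of_lt hψ)).le (sq_nonneg _)) hη
  have : 0 ≤ 2 * L ^ 2 := by positivity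
  nlinarith [mul_nonneg hc0 r0, mul_nonneg this hη0]

/-- the linear operator -/
noncomputable def Gop (ω : ℝ) (q : ℝ → ℝ) (W : ℝ → ℝ → ℝ) : ℝ → ℝ → ℝ :=
  fun s ψ => dS 1 W s ψ - ω * q s * dPsi 2 W s ψ

lemma Gop_smooth {ω : ℝ} {q : ℝ → ℝ} (hq : ContDiff ℝ (⊤ : ℕ∞) q) {W : ℝ → ℝ → ℝ}
    (hW : Smooth2 W) : Smooth2 (Gop ω q W) :=
  hW.dS_one.sub (Smooth2.mul (u := fun s _ => ω * q s) (Smooth2.of_s (contDiff_const.mul hq))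
    hW.dPsi_two)

lemma smooth_deriv {q : ℝ → ℝ} (hq : ContDiff ℝ (⊤ : ℕ∞) q) : ContDiff ℝ (⊤ : ℕ∞) (deriv q) := by
  have := (contDiff_succ_iff_deriv (n := (⊤ : ℕ∞)) (f := q)).1 (by simpa using hq)
  exact this.2.2

lemma dS_one_coef {ω : ℝ} {q : ℝ → ℝ} (hq : ContDiff ℝ (⊤ : ℕ∞) q) {W : ℝ → ℝ → ℝ}
    (hW : Smooth2 W) : dS 1 (fun s ψ => ω * q s * W s ψ)
      = fun s ψ => ω * deriv q s * W s ψ + ω * q s * dS 1 W s ψ := by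
  funext s ψ
  rw [dS_one_apply]
  have h1 : HasDerivAt q (deriv q s) s := ((hq.differentiable (by simp)) s).hasDerivAt
  exact ((h1.const_mul ω).mul (hW.hasS s ψ)).deriv

lemma Gop_dS {ω : ℝ} {q : ℝ → ℝ} (hq : ContDiff ℝ (⊤ : ℕ∞) q) {W : ℝ → ℝ → ℝ}
    (hW : Smooth2 W) (s ψ : ℝ) :
    dS 1 (Gop ω q W) s ψ = Gop ω q (dS 1 W) s ψ - ω * deriv q s * dPsi 2 W s ψ := by
  have h1 : dS 1 (Gop ω q W) = fun s ψ => dS 1 (dS 1 W) s ψ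
      - dS 1 (fun s ψ => ω * q s * dPsi 2 W s ψ) s ψ :=
    dS_one_sub hW.dS_one (Smooth2.mul (u := fun s _ => ω * q s)
      (Smooth2.of_s (contDiff_const.mul hq)) hW.dPsi_two)
  rw [h1, dS_one_coef hq hW.dPsi_two, dS_dPsi_two_comm hW]
  simp only [Gop]; ring

lemma Gop_dS_two {ω : ℝ} {q : ℝ → ℝ} (hq : ContDiff ℝ (⊤ : ℕ∞) q) {W : ℝ → ℝ → ℝ}
    (hW : Smooth2 W) (s ψ : ℝ) :
    dS 2 (Gop ω q W) s ψ = Gop ω q (dS 2 W) s ψ - 2 * (ω * deriv q s * dPsi 2 (dS 1 W) s ψ)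
      - ω * deriv (deriv q) s * dPsi 2 W s ψ := by
  have e : dS 1 (Gop ω q W) = fun s ψ => Gop ω q (dS 1 W) s ψ - ω * deriv q s * dPsi 2 W s ψ := by
    funext s ψ; exact Gop_dS hq hW s ψ
  have hq' := smooth_deriv hq
  rw [dS_succ 1, e, dS_one_sub (Gop_smooth hq hW.dS_one) (Smooth2.mul (u := fun s _ => ω * deriv q s)
      (Smooth2.of_s (contDiff_const.mul hq')) hW.dPsi_two)]
  rw [dS_one_coef hq' hW.dPsi_two, dS_dPsi_two_comm hW]
  simp only [Gop_dS hq hW.dS_one]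
  rw [← dS_succ 1]; ring

/-- the weighted norm with the top weight only -/
noncomputable def XX (L : ℝ) (h : ℝ → ℝ → ℝ) : ℝ := ∑ k ∈ Finset.range 3,
  (E L (dS k h) + E L (dS (k+1) h) + E L (dPsi 1 (dS k h)) + E L (dPsi 2 (dS k h)))

/-- finiteness with the top weight -/
def XF (L : ℝ) (h : ℝ → ℝ → ℝ) : Prop := ∀ k ≤ 2,
  Fi L (dS k h) ∧ Fi L (dS (k+1) h) ∧ Fi L (dPsi 1 (dS k h)) ∧ Fi L (dPsi 2 (dS k h))

lemma periodic_bdd {L : ℝ} (hL : 0 < L) {q : ℝ → ℝ} (hq : Continuous q) (hp : Periodic q L) :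
    ∃ P : ℝ, 0 < P ∧ ∀ s, |q s| ≤ P := by
  obtain ⟨C, hC⟩ := (isCompact_Icc (a := (0:ℝ)) (b := L)).exists_bound_of_continuousOn
    hq.continuousOn
  refine ⟨|C| + 1, by positivity, fun s => ?_⟩
  obtain ⟨y, hy, e⟩ := hp.exists_mem_Ico₀ hL s
  rw [e]
  have := hC y ⟨hy.1, hy.2.le⟩
  rw [Real.norm_eq_abs] at this
  linarith [le_abs_self C]

lemma periodic_deriv {L : ℝ} {q : ℝ → ℝ} (hp : Periodic q L) : Periodic (deriv q) L := by
  intro s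
  rw [← deriv_comp_add_const q L s]
  congr 1
  funext x; exact hp x

lemma periodic_lb {L : ℝ} (hL : 0 < L) {q : ℝ → ℝ} (hq : Continuous q) (hp : Periodic q L)
    (hpos : ∀ s, 0 < q s) : ∃ m : ℝ, 0 < m ∧ ∀ s, m ≤ q s := by
  obtain ⟨P, hP, hb⟩ := periodic_bdd hL (q := fun s => (q s)⁻¹)
    (hq.inv₀ fun s => (hpos s).ne') (fun s => by simp only [hp s])
  refine ⟨P⁻¹, by positivity, fun s => ?_⟩
  have := hb s
  rw [abs_of_pos (inv_pos.2 (hpos s))] at this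
  exact inv_le_of_inv_le₀ (hpos s) this

lemma sq_coef {ω a P x : ℝ} (h1 : 1/2 ≤ ω) (h2 : ω ≤ 2) (ha : |a| ≤ P) :
    (ω * a * x) ^ 2 ≤ 4 * P ^ 2 * x ^ 2 := by
  have h3 : a ^ 2 ≤ P ^ 2 := sq_le_sq' (by linarith [abs_le.1 ha]) (by linarith [abs_le.1 ha])
  have h4 : ω ^ 2 ≤ 4 := by nlinarith
  have : ω ^ 2 * a ^ 2 ≤ 4 * P ^ 2 := mul_le_mul h4 h3 (sq_nonneg _) (by norm_num)
  calc (ω * a * x) ^ 2 = (ω ^ 2 * a ^ 2) * x ^ 2 := by ring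
    _ ≤ _ := mul_le_mul_of_nonneg_right this (sq_nonneg _)

lemma linear_alg {C p r x0 x1 x2 a b d1 d2 γ1 γ2 G0 G1 G2 η : ℝ} (hC : 0 < C) (hp : 0 ≤ p)
    (hr : 0 ≤ r) (g0 : 0 ≤ G0) (g1 : 0 ≤ G1) (g2 : 0 ≤ G2) (hη : 0 ≤ η)
    (A0 : x0 ≤ C * (G0 + η)) (A1 : x1 ≤ C * (γ1 + d1)) (A2 : x2 ≤ C * (γ2 + d2))
    (B1 : γ1 ≤ 2 * G1 + 2 * (4 * p) * a)
    (B2 : γ2 ≤ 3 * G2 + 3 * (4 * (4 * p)) * b + 3 * (4 * r) * a)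
    (hd1 : d1 ≤ x0) (hd2 : d2 ≤ x1) (ha : a ≤ x0) (hb : b ≤ x1) :
    x0 + x1 + x2 ≤ (C + C * (2 + (8 * p + 1) * C) +
      C * (3 + (48 * p + 1) * (C * (2 + (8 * p + 1) * C)) + 12 * r * C)) * (G0 + G1 + G2 + η) := by
  set S := G0 + G1 + G2 + η with hS
  have h0 : x0 ≤ C * S := A0.trans (mul_le_mul_of_nonneg_left (by linarith) hC.le)
  have h1 : x1 ≤ C * (2 + (8 * p + 1) * C) * S := by
    have : γ1 + d1 ≤ (2 + (8 * p + 1) * C) * S := by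
      have := mul_le_mul_of_nonneg_left (ha.trans h0) hp
      nlinarith
    calc x1 ≤ _ := A1
      _ ≤ C * ((2 + (8 * p + 1) * C) * S) := mul_le_mul_of_nonneg_left this hC.le
      _ = _ := by ring
  set C1 := C * (2 + (8 * p + 1) * C) with hC1
  have h2 : x2 ≤ C * (3 + (48 * p + 1) * C1 + 12 * r * C) * S := by
    have : γ2 + d2 ≤ (3 + (48 * p + 1) * C1 + 12 * r * C) * S := by
      have t1 := mul_le_mul_of_nonneg_left (hb.trans h1) hp
      have t2 := mul_le_mul_of_nonneg_left (ha.trans h0) hr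
      nlinarith
    calc x2 ≤ _ := A2
      _ ≤ C * ((3 + (48 * p + 1) * C1 + 12 * r * C) * S) := mul_le_mul_of_nonneg_left this hC.le
      _ = _ := by ring
  linarith

set_option maxHeartbeats 1000000 in
lemma linear_est {L : ℝ} (hL : 0 < L) {q : ℝ → ℝ} (hq : ContDiff ℝ (⊤ : ℕ∞) q)
    (hqp : Periodic q L) (hqpos : ∀ s, 0 < q s) :
    ∃ C : ℝ, 0 < C ∧ ∀ ω : ℝ, 1/2 ≤ ω → ω ≤ 2 → ∀ W : ℝ → ℝ → ℝ, Smooth2 W → PeriodicS L W →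
      (∀ s, W s 0 = 0) → XF L W → ∀ η : ℝ,
      IntegrableOn (fun ψ => wd 1 ψ * (SL L (fun s ψ => q s * W s ψ) ψ) ^ 2) (Ioi 0) →
      ∫ ψ in Ioi (0:ℝ), wd 1 ψ * (SL L (fun s ψ => q s * W s ψ) ψ) ^ 2 ≤ η →
      XX L W ≤ C * (E L (Gop ω q W) + E L (dS 1 (Gop ω q W)) + E L (dS 2 (Gop ω q W)) + η) := by
  obtain ⟨qM, hqM, hqMb⟩ := periodic_bdd hL hq.continuous hqp
  obtain ⟨qm, hqm, hqmb⟩ := periodic_lb hL hq.continuous hqp hqpos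
  have hq' := smooth_deriv hq
  have hq'' := smooth_deriv hq'
  obtain ⟨P1, hP1, hb1⟩ := periodic_bdd hL hq'.continuous (periodic_deriv hqp)
  obtain ⟨P2, hP2, hb2⟩ := periodic_bdd hL hq''.continuous (periodic_deriv (periodic_deriv hqp))
  set K := (2 * L / (∫ x in (0:ℝ)..L, q x) ^ 2 + 2 * L ^ 2) with hKdef
  have hK : 0 ≤ K := by positivity
  obtain ⟨C, hC, hen⟩ := energy hL hqm (fun s => ⟨hqmb s, (le_abs_self _).trans (hqMb s)⟩)
    (K := K + 1) (by positivity)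
  refine ⟨C + C * (2 + (8 * P1 ^ 2 + 1) * C) +
      C * (3 + (48 * P1 ^ 2 + 1) * (C * (2 + (8 * P1 ^ 2 + 1) * C)) + 12 * P2 ^ 2 * C),
      by positivity, ?_⟩
  intro ω hω1 hω2 W hW hp hW0 hF η hi hη
  obtain ⟨f0, f1, f2, f3⟩ := hF 0 (by norm_num)
  obtain ⟨g0, g1, g2, g3⟩ := hF 1 (by norm_num)
  obtain ⟨k0, k1, k2, k3⟩ := hF 2 (by norm_num)
  simp only [dS_zero, zero_add] at f0 f1 f2 f3
  norm_num at g1 k1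
  have hη0 : 0 ≤ η := le_trans (setIntegral_nonneg measurableSet_Ioi fun ψ hψ =>
    mul_nonneg (wd_pos zero_le_one (le_of_lt hψ)).le (sq_nonneg _)) hη
  -- finiteness of Gop
  have fG : ∀ V, Smooth2 V → Fi L (dS 1 V) → Fi L (dPsi 2 V) → Fi L (Gop ω q V) := by
    intro V hV a b
    refine (E_lin2 (Gop_smooth hq hV).continuous 2 (2 * (4 * qM ^ 2)) a b fun s _ ψ _ => ?_).1
    have := sq_coef (x := dPsi 2 V s ψ) hω1 hω2 (hqMb s)
    simp only [Gop]
    nlinarith [sq_nonneg (dS 1 V s ψ + ω * q s * dPsi 2 V s ψ)]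
  have hW1 := hW.dS_one
  have hW2 := hW.dS_k 2
  have z1 : ∀ k s, dS k W s 0 = 0 := by
    intro k s
    have : (fun s' => W s' 0) = fun _ => 0 := funext hW0
    simp only [dS, this]
    simp
  have s12 : dS 1 (dS 1 W) = dS 2 W := (dS_succ 1 W).symm
  have s23 : dS 1 (dS 2 W) = dS 3 W := (dS_succ 2 W).symm
  have fG0 := fG W hW f1 f3
  have fG1 := fG (dS 1 W) hW1 (by rw [s12]; exact g1) g3
  have fG2 := fG (dS 2 W) hW2 (by rw [s23]; exact k1) k3
  have A0 := hen ω hω1 hω2 W _ hW hp (Gop_smooth hq hW) hW0 f0 f1 f2 f3 fG0 (fun s ψ => rfl) η hη0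
    (fun δ h1 h2 => by
      refine (poincare_Rb hL hq.continuous hqpos hW f0 f1 hi hη h1 h2).trans ?_
      have := Rb_self_nonneg (L := L) h1.le (dS 1 W)
      exact mul_le_mul_of_nonneg_right (by linarith) (by linarith))
  have A1 := hen ω hω1 hω2 (dS 1 W) _ hW1 (periodic_dS hp 1) (Gop_smooth hq hW1) (z1 1) g0
    (by rw [s12]; exact g1) g2 g3 fG1 (fun s ψ => rfl) (E L (dS 1 W)) (E_nonneg _ _)
    (fun δ h1 h2 => by
      have r1 := Rb_self_le (L := L) h1.le h2 hW1.continuous g0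
      have r0 := Rb_self_nonneg (L := L) h1.le (dS 1 (dS 1 W))
      have e0 := E_nonneg L (dS 1 W)
      nlinarith [mul_nonneg hK r0, mul_nonneg hK e0])
  have A2 := hen ω hω1 hω2 (dS 2 W) _ hW2 (periodic_dS hp 2) (Gop_smooth hq hW2) (z1 2) k0
    (by rw [s23]; exact k1) k2 k3 fG2 (fun s ψ => rfl) (E L (dS 2 W)) (E_nonneg _ _)
    (fun δ h1 h2 => by
      have r1 := Rb_self_le (L := L) h1.le h2 hW2.continuous k0
      have r0 := Rb_self_nonneg (L := L) h1.le (dS 1 (dS 2 W))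
      have e0 := E_nonneg L (dS 2 W)
      nlinarith [mul_nonneg hK r0, mul_nonneg hK e0])
  -- commutators
  have hGs := Gop_smooth (ω := ω) hq hW
  have fdG1 : Fi L (dS 1 (Gop ω q W)) := by
    refine (E_lin2 hGs.dS_one.continuous 2 (2 * (4 * P1 ^ 2)) fG1 f3 fun s _ ψ _ => ?_).1
    have := sq_coef (x := dPsi 2 W s ψ) hω1 hω2 (hb1 s)
    rw [Gop_dS hq hW]
    nlinarith [sq_nonneg (Gop ω q (dS 1 W) s ψ + ω * deriv q s * dPsi 2 W s ψ)]
  have B1 : E L (Gop ω q (dS 1 W)) ≤ 2 * E L (dS 1 (Gop ω q W)) + 2 * (4 * P1 ^ 2) * E L (dPsi 2 W) := by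
    refine (E_lin2 (Gop_smooth hq hW1).continuous 2 (2 * (4 * P1 ^ 2)) fdG1 f3 fun s _ ψ _ => ?_).2
    have := sq_coef (x := dPsi 2 W s ψ) hω1 hω2 (hb1 s)
    have e := Gop_dS (ω := ω) hq hW s ψ
    have e' : Gop ω q (dS 1 W) s ψ = dS 1 (Gop ω q W) s ψ + ω * deriv q s * dPsi 2 W s ψ := by
      linarith
    rw [e']
    nlinarith [sq_nonneg (dS 1 (Gop ω q W) s ψ - ω * deriv q s * dPsi 2 W s ψ)]
  have sq3 : ∀ a b c : ℝ, (a + b + c) ^ 2 ≤ 3 * a ^ 2 + 3 * b ^ 2 + 3 * c ^ 2 := fun a b c => by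
    nlinarith [sq_nonneg (a - b), sq_nonneg (a - c), sq_nonneg (b - c)]
  have fdG2 : Fi L (dS 2 (Gop ω q W)) := by
    refine (E_lin3 (hGs.dS_k 2).continuous 3 (3 * (4 * (4 * P1 ^ 2))) (3 * (4 * P2 ^ 2)) fG2 g3 f3
      fun s _ ψ _ => ?_).1
    have t1 := sq_coef (x := dPsi 2 (dS 1 W) s ψ) hω1 hω2 (hb1 s)
    have t2 := sq_coef (x := dPsi 2 W s ψ) hω1 hω2 (hb2 s)
    rw [Gop_dS_two hq hW]
    have := sq3 (Gop ω q (dS 2 W) s ψ) (- (2 * (ω * deriv q s * dPsi 2 (dS 1 W) s ψ)))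
      (- (ω * deriv (deriv q) s * dPsi 2 W s ψ))
    nlinarith
  have B2 : E L (Gop ω q (dS 2 W)) ≤ 3 * E L (dS 2 (Gop ω q W))
      + 3 * (4 * (4 * P1 ^ 2)) * E L (dPsi 2 (dS 1 W)) + 3 * (4 * P2 ^ 2) * E L (dPsi 2 W) := by
    refine (E_lin3 (Gop_smooth hq hW2).continuous 3 (3 * (4 * (4 * P1 ^ 2))) (3 * (4 * P2 ^ 2))
      fdG2 g3 f3 fun s _ ψ _ => ?_).2
    have t1 := sq_coef (x := dPsi 2 (dS 1 W) s ψ) hω1 hω2 (hb1 s)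
    have t2 := sq_coef (x := dPsi 2 W s ψ) hω1 hω2 (hb2 s)
    have e := Gop_dS_two (ω := ω) hq hW s ψ
    have := sq3 (dS 2 (Gop ω q W) s ψ) (2 * (ω * deriv q s * dPsi 2 (dS 1 W) s ψ))
      (ω * deriv (deriv q) s * dPsi 2 W s ψ)
    have e' : Gop ω q (dS 2 W) s ψ = dS 2 (Gop ω q W) s ψ
      + 2 * (ω * deriv q s * dPsi 2 (dS 1 W) s ψ) + ω * deriv (deriv q) s * dPsi 2 W s ψ := by
      linarith
    rw [e']
    nlinarith
  rw [s12] at A1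
  rw [s23] at A2
  have hXX : XX L W = (E L W + E L (dS 1 W) + E L (dPsi 1 W) + E L (dPsi 2 W))
      + (E L (dS 1 W) + E L (dS 2 W) + E L (dPsi 1 (dS 1 W)) + E L (dPsi 2 (dS 1 W)))
      + (E L (dS 2 W) + E L (dS 3 W) + E L (dPsi 1 (dS 2 W)) + E L (dPsi 2 (dS 2 W))) := by
    unfold XX
    simp only [Finset.sum_range_succ, Finset.sum_range_zero, dS_zero, zero_add]
  rw [hXX]
  have n1 := E_nonneg L W
  have n2 := E_nonneg L (dS 1 W)
  have n3 := E_nonneg L (dPsi 1 W)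
  have n4 := E_nonneg L (dPsi 2 W)
  have n5 := E_nonneg L (dS 2 W)
  have n6 := E_nonneg L (dPsi 1 (dS 1 W))
  have n7 := E_nonneg L (dPsi 2 (dS 1 W))
  have m0 := E_nonneg L (Gop ω q W)
  have m1 := E_nonneg L (dS 1 (Gop ω q W))
  have m2 := E_nonneg L (dS 2 (Gop ω q W))
  have n8 := E_nonneg L (dS 3 W)
  have n9 := E_nonneg L (dPsi 1 (dS 2 W))
  have n10 := E_nonneg L (dPsi 2 (dS 2 W))
  exact linear_alg hC (sq_nonneg _) (sq_nonneg _) m0 m1 m2 hη0 A0 A1 A2 B1 B2 (by linarith)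
    (by linarith) (by linarith) (by linarith)

/-! ### Part 5: norms, and the zero mode -/

lemma L2sq_nonneg (L : ℝ) (h : ℝ → ℝ → ℝ) : 0 ≤ L2sq L h := by
  unfold L2sq; exact integral_nonneg fun p => sq_nonneg _

lemma L2sq_wt_le {L : ℝ} {m : ℕ} (hm : m ≤ 50) {u : ℝ → ℝ → ℝ}
    (hf : Fi L u) : L2sq L (wt m u) ≤ E L u := by
  unfold E L2sq
  refine integral_mono_of_nonneg (Eventually.of_forall fun p => sq_nonneg _) hf ?_
  refine (ae_restrict_iff' (reg_meas L)).2 (Eventually.of_forall fun p hp => ?_)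
  have h2 : (0:ℝ) < p.2 := hp.2
  have h3 : (1 + p.2) ^ m ≤ (1 + p.2) ^ 50 := pow_le_pow_right₀ (by linarith) hm
  have h4 : (0:ℝ) ≤ (1 + p.2) ^ m := by positivity
  simp only [wt]
  rw [mul_pow, mul_pow]
  exact mul_le_mul_of_nonneg_right (pow_le_pow_left₀ h4 h3 2) (sq_nonneg _)

lemma XnormSq_le {L : ℝ} {h : ℝ → ℝ → ℝ} (hF : XF L h) : XnormSq L 2 50 h ≤ 51 * XX L h := by
  unfold XnormSq XX
  rw [Finset.mul_sum]
  refine Finset.sum_le_sum fun k hk => ?_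
  obtain ⟨f0, f1, f2, f3⟩ := hF k (by have := Finset.mem_range.1 hk; omega)
  have : ∀ m ∈ Finset.range (50 + 1), (L2sq L (wt m (dS k h)) + L2sq L (wt m (dS (k+1) h))
      + L2sq L (wt m (dPsi 1 (dS k h))) + L2sq L (wt m (dPsi 2 (dS k h)))) ≤
      (E L (dS k h) + E L (dS (k+1) h) + E L (dPsi 1 (dS k h)) + E L (dPsi 2 (dS k h))) := by
    intro m hm
    have hm' : m ≤ 50 := by have := Finset.mem_range.1 hm; omega
    exact add_le_add (add_le_add (add_le_add (L2sq_wt_le hm' f0) (L2sq_wt_le hm' f1))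
      (L2sq_wt_le hm' f2)) (L2sq_wt_le hm' f3)
  refine (Finset.sum_le_card_nsmul _ _ _ this).trans (le_of_eq ?_)
  rw [Finset.card_range, nsmul_eq_mul]; norm_num

lemma XX_le (L : ℝ) (h : ℝ → ℝ → ℝ) : XX L h ≤ XnormSq L 2 50 h := by
  unfold XnormSq XX
  refine Finset.sum_le_sum fun k hk => ?_
  exact Finset.single_le_sum (f := fun m => L2sq L (wt m (dS k h)) + L2sq L (wt m (dS (k+1) h))
      + L2sq L (wt m (dPsi 1 (dS k h))) + L2sq L (wt m (dPsi 2 (dS k h))))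
      (fun m _ => by
        have := L2sq_nonneg L (wt m (dS k h)); have := L2sq_nonneg L (wt m (dS (k+1) h))
        have := L2sq_nonneg L (wt m (dPsi 1 (dS k h)))
        have := L2sq_nonneg L (wt m (dPsi 2 (dS k h)))
        positivity) (Finset.mem_range.2 (by norm_num : 50 < 50 + 1))

lemma XnormSq_nonneg (L : ℝ) (h : ℝ → ℝ → ℝ) : 0 ≤ XnormSq L 2 50 h := by
  unfold XnormSq
  refine Finset.sum_nonneg fun k _ => Finset.sum_nonneg fun m _ => ?_
  have := L2sq_nonneg L (wt m (dS k h)); have := L2sq_nonneg L (wt m (dS (k+1) h))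
  have := L2sq_nonneg L (wt m (dPsi 1 (dS k h)))
  have := L2sq_nonneg L (wt m (dPsi 2 (dS k h)))
  positivity

lemma XX_le_sq (L : ℝ) (h : ℝ → ℝ → ℝ) : XX L h ≤ Xnorm L 2 50 h ^ 2 := by
  unfold Xnorm; rw [Real.sq_sqrt (XnormSq_nonneg L h)]; exact XX_le L h

lemma XF_of {L : ℝ} {h : ℝ → ℝ → ℝ} (hF : XFinite L 2 50 h) : XF L h :=
  fun k hk => hF k hk 50 le_rfl

lemma XX_terms (L : ℝ) (h : ℝ → ℝ → ℝ) {k : ℕ} (hk : k ≤ 2) :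
    E L (dS k h) + E L (dS (k+1) h) + E L (dPsi 1 (dS k h)) + E L (dPsi 2 (dS k h)) ≤ XX L h := by
  unfold XX
  exact Finset.single_le_sum (f := fun k => E L (dS k h) + E L (dS (k+1) h)
    + E L (dPsi 1 (dS k h)) + E L (dPsi 2 (dS k h))) (fun k _ => by
      have := E_nonneg L (dS k h); have := E_nonneg L (dS (k+1) h)
      have := E_nonneg L (dPsi 1 (dS k h)); have := E_nonneg L (dPsi 2 (dS k h))
      positivity) (Finset.mem_range.2 (by omega))

lemma XX_nonneg (L : ℝ) (h : ℝ → ℝ → ℝ) : 0 ≤ XX L h := by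
  unfold XX
  refine Finset.sum_nonneg fun k _ => ?_
  have := E_nonneg L (dS k h); have := E_nonneg L (dS (k+1) h)
  have := E_nonneg L (dPsi 1 (dS k h)); have := E_nonneg L (dPsi 2 (dS k h))
  positivity

lemma XX_E1 (L : ℝ) (h : ℝ → ℝ → ℝ) {k : ℕ} (hk : k ≤ 3) : E L (dS k h) ≤ XX L h := by
  have a0 := E_nonneg L (dPsi 1 (dS 2 h))
  rcases Nat.lt_or_ge k 3 with h3 | h3
  · have := XX_terms L h (k := k) (by omega)
    have := E_nonneg L (dS (k+1) h)
    have := E_nonneg L (dPsi 1 (dS k h)); have := E_nonneg L (dPsi 2 (dS k h))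
    linarith
  · have e : k = 3 := by omega
    subst e
    have := XX_terms L h (k := 2) (by omega)
    have := E_nonneg L (dS 2 h)
    have := E_nonneg L (dPsi 2 (dS 2 h))
    linarith

lemma XX_E3 (L : ℝ) (h : ℝ → ℝ → ℝ) {k : ℕ} (hk : k ≤ 2) : E L (dPsi 2 (dS k h)) ≤ XX L h := by
  have := XX_terms L h (k := k) (by omega)
  have := E_nonneg L (dS k h); have := E_nonneg L (dS (k+1) h)
  have := E_nonneg L (dPsi 1 (dS k h))
  linarith

lemma XF_S {L : ℝ} {h : ℝ → ℝ → ℝ} (hF : XF L h) {k : ℕ} (hk : k ≤ 3) : Fi L (dS k h) := by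
  rcases Nat.lt_or_ge k 3 with h3 | h3
  · exact (hF k (by omega)).1
  · have e : k = 3 := by omega
    subst e; exact (hF 2 le_rfl).2.1

lemma XF_sub {L : ℝ} {u v : ℝ → ℝ → ℝ} (hu : Smooth2 u) (hv : Smooth2 v) (fu : XF L u)
    (fv : XF L v) : XF L (fun s ψ => u s ψ - v s ψ) ∧
      XX L (fun s ψ => u s ψ - v s ψ) ≤ 2 * XX L u + 2 * XX L v := by
  have key : ∀ k ≤ 2,
    (Fi L (dS k (fun s ψ => u s ψ - v s ψ)) ∧ E L (dS k (fun s ψ => u s ψ - v s ψ)) ≤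
      2 * E L (dS k u) + 2 * E L (dS k v)) ∧
    (Fi L (dS (k+1) (fun s ψ => u s ψ - v s ψ)) ∧ E L (dS (k+1) (fun s ψ => u s ψ - v s ψ)) ≤
      2 * E L (dS (k+1) u) + 2 * E L (dS (k+1) v)) ∧
    (Fi L (dPsi 1 (dS k (fun s ψ => u s ψ - v s ψ))) ∧
      E L (dPsi 1 (dS k (fun s ψ => u s ψ - v s ψ))) ≤
      2 * E L (dPsi 1 (dS k u)) + 2 * E L (dPsi 1 (dS k v))) ∧
    (Fi L (dPsi 2 (dS k (fun s ψ => u s ψ - v s ψ))) ∧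
      E L (dPsi 2 (dS k (fun s ψ => u s ψ - v s ψ))) ≤
      2 * E L (dPsi 2 (dS k u)) + 2 * E L (dPsi 2 (dS k v))) := by
    intro k hk
    obtain ⟨f0, f1, f2, f3⟩ := fu k hk
    obtain ⟨g0, g1, g2, g3⟩ := fv k hk
    rw [dS_k_sub hu hv, dS_k_sub hu hv, dPsi_one_sub (hu.dS_k k) (hv.dS_k k),
      dPsi_two_sub (hu.dS_k k) (hv.dS_k k)]
    exact ⟨Fi_sub (hu.dS_k _).continuous (hv.dS_k _).continuous f0 g0,
      Fi_sub (hu.dS_k _).continuous (hv.dS_k _).continuous f1 g1,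
      Fi_sub (hu.dS_k _).dPsi_one.continuous (hv.dS_k _).dPsi_one.continuous f2 g2,
      Fi_sub (hu.dS_k _).dPsi_two.continuous (hv.dS_k _).dPsi_two.continuous f3 g3⟩
  refine ⟨fun k hk => ?_, ?_⟩
  · obtain ⟨a, b, c, d⟩ := key k hk
    exact ⟨a.1, b.1, c.1, d.1⟩
  · unfold XX
    rw [Finset.mul_sum, Finset.mul_sum, ← Finset.sum_add_distrib]
    refine Finset.sum_le_sum fun k hk => ?_
    obtain ⟨a, b, c, d⟩ := key k (by have := Finset.mem_range.1 hk; omega)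
    linarith [a.2, b.2, c.2, d.2]

/-- pointwise decay from the norm -/
lemma sup_XX {L : ℝ} (hL : 0 < L) {h : ℝ → ℝ → ℝ} (hh : Smooth2 h) (hp : PeriodicS L h)
    (hF : XF L h) {k : ℕ} (hk : k ≤ 1) (s : ℝ) {ψ : ℝ} (hψ : 0 ≤ ψ) {N : ℝ} (hN : 0 ≤ N)
    (hXN : XX L h ≤ N ^ 2) :
    (1 + ψ) ^ 50 * |dS k h s ψ| ≤ Real.sqrt (202 * (2 / L + 2 * L)) * N := by
  obtain ⟨y, hy, e⟩ := (periodic_dS hp k ψ).exists_mem_Ico₀ hL s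
  have e' : dS k h s ψ = dS k h y ψ := e
  rw [e']
  have hb := sup_bound hL (hh.dS_k k) (hF k (by omega)).1 (hF k (by omega)).2.2.1
    (by rw [← dS_succ]; exact (hF k (by omega)).2.1)
    (by rw [← dS_succ]; exact (hF (k+1) (by omega)).2.2.1) (s := y) ⟨hy.1, hy.2.le⟩ hψ
  have t1 := XX_terms L h (k := k) (by omega)
  have t2 := XX_terms L h (k := k + 1) (by omega)
  rw [← dS_succ] at hb
  have n1 := E_nonneg L (dPsi 2 (dS k h))
  have n2 := E_nonneg L (dS (k+1) h)
  have n3 := E_nonneg L (dS (k+1+1) h)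
  have n4 := E_nonneg L (dPsi 2 (dS (k+1) h))
  have hc : 0 ≤ 101 * (2 / L + 2 * L) := by positivity
  have h1 : ((1 + ψ) ^ 50 * |dS k h y ψ|) ^ 2 ≤ (Real.sqrt (202 * (2 / L + 2 * L)) * N) ^ 2 := by
    rw [mul_pow (Real.sqrt _), Real.sq_sqrt (by positivity), mul_pow, sq_abs, ← mul_pow]
    refine hb.trans ?_
    calc _ ≤ 101 * (2 / L + 2 * L) * (2 * N ^ 2) := mul_le_mul_of_nonneg_left (by linarith) hc
      _ = _ := by ring
  exact (pow_le_pow_iff_left₀ (by positivity) (by positivity) two_ne_zero).1 h1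

lemma convex_decay {φ φ' φ'' : ℝ → ℝ} (hc : ContinuousOn φ (Ici 0))
    (h1 : ∀ x > 0, HasDerivAt φ (φ' x) x)
    (h2 : ∀ x > 0, HasDerivAt φ' (φ'' x) x) (h3 : ∀ x > 0, 0 ≤ φ'' x)
    (hl : Tendsto φ atTop (nhds 0)) {x : ℝ} (hx : 0 ≤ x) : 0 ≤ φ x := by
  have hconv : ConvexOn ℝ (Ici (0:ℝ)) φ := by
    refine convexOn_of_hasDerivWithinAt2_nonneg (f' := φ') (f'' := φ'') (convex_Ici 0) hc ?_ ?_ ?_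
    · intro y hy; rw [interior_Ici] at hy; exact (h1 y hy).hasDerivWithinAt
    · intro y hy; rw [interior_Ici] at hy; exact (h2 y hy).hasDerivWithinAt
    · intro y hy; rw [interior_Ici] at hy; exact h3 y hy
  have hmid : ∀ z ≥ (0:ℝ), φ (1/2 * x + 1/2 * z) ≤ 1/2 * φ x + 1/2 * φ z := by
    intro z hz
    have := hconv.2 (mem_Ici.2 hx) (mem_Ici.2 hz) (by norm_num : (0:ℝ) ≤ 1/2)
      (by norm_num : (0:ℝ) ≤ 1/2) (by norm_num)
    simpa only [smul_eq_mul] using this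
  have t1 : Tendsto (fun z => 1/2 * φ x + 1/2 * φ z) atTop (nhds (1/2 * φ x + 1/2 * 0)) :=
    (hl.const_mul _).const_add _
  have t2 : Tendsto (fun z : ℝ => φ (1/2 * x + 1/2 * z)) atTop (nhds 0) := by
    refine hl.comp ?_
    exact tendsto_atTop_add_const_left _ _ (tendsto_id.const_mul_atTop (by norm_num))
  have := le_of_tendsto_of_tendsto t2 t1
    ((eventually_ge_atTop 0).mono fun z hz => hmid z hz)
  linarith

lemma zpow_deriv (m : ℤ) {x : ℝ} (hx : 0 < 1 + x) :
    HasDerivAt (fun y : ℝ => (1 + y) ^ m) ((m:ℝ) * (1 + x) ^ (m - 1)) x := by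
  have := (hasDerivAt_zpow m (1 + x) (Or.inl hx.ne')).comp x ((hasDerivAt_id x).const_add 1)
  rw [mul_one] at this
  exact this

lemma decay_ode {v v' v'' : ℝ → ℝ} (h1 : ∀ x, HasDerivAt v (v' x) x)
    (h2 : ∀ x, HasDerivAt v' (v'' x) x) {K : ℝ} (hK : 0 ≤ K)
    (h3 : ∀ x > 0, |v'' x| ≤ K * (1 + x) ^ (-100 : ℤ))
    (hl : Tendsto v atTop (nhds 0)) {x : ℝ} (hx : 0 ≤ x) : |v x| ≤ K * (1 + x) ^ (-98 : ℤ) := by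
  set c := K / (99 * 98) with hcdef
  have hc0 : 0 ≤ c := by positivity
  have d1 : ∀ x ≥ (0:ℝ), HasDerivAt (fun y : ℝ => c * (1 + y) ^ (-98 : ℤ))
      (c * (-98 * (1 + x) ^ (-99 : ℤ))) x := by
    intro x hx
    have := (zpow_deriv (-98) (by linarith : 0 < 1 + x)).const_mul c
    norm_num at this ⊢
    exact this
  have d2 : ∀ x ≥ (0:ℝ), HasDerivAt (fun y : ℝ => c * (-98 * (1 + y) ^ (-99 : ℤ)))
      (K * (1 + x) ^ (-100 : ℤ)) x := by
    intro x hx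
    have := ((zpow_deriv (-99) (by linarith : 0 < 1 + x)).const_mul (-98)).const_mul c
    refine this.congr_deriv ?_
    norm_num [hcdef]
    ring
  have ul : Tendsto (fun y : ℝ => c * (1 + y) ^ (-98 : ℤ)) atTop (nhds 0) := by
    have := (tendsto_zpow_atTop_zero (𝕜 := ℝ) (n := -98) (by norm_num)).comp
      (tendsto_atTop_add_const_left atTop (1:ℝ) tendsto_id)
    have := this.const_mul c
    simpa using this
  have hcv : Continuous v := continuous_iff_continuousAt.2 fun x => (h1 x).continuousAt
  have hcu : ContinuousOn (fun y : ℝ => c * (1 + y) ^ (-98 : ℤ)) (Ici 0) :=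
    fun y hy => (d1 y hy).continuousAt.continuousWithinAt
  have P := convex_decay (φ := fun y => c * (1 + y) ^ (-98 : ℤ) + v y) (hcu.add hcv.continuousOn)
    (fun x hx => (d1 x hx.le).add (h1 x)) (fun x hx => (d2 x hx.le).add (h2 x))
    (fun x hx => by have := abs_le.1 (h3 x hx); linarith) (by simpa using ul.add hl) hx
  have M := convex_decay (φ := fun y => c * (1 + y) ^ (-98 : ℤ) - v y) (hcu.sub hcv.continuousOn)
    (fun x hx => (d1 x hx.le).sub (h1 x)) (fun x hx => (d2 x hx.le).sub (h2 x))
    (fun x hx => by have := abs_le.1 (h3 x hx); linarith) (by simpa using ul.sub hl) hx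
  have hle : c * (1 + x) ^ (-98 : ℤ) ≤ K * (1 + x) ^ (-98 : ℤ) := by
    refine mul_le_mul_of_nonneg_right ?_ (zpow_nonneg (by linarith) _)
    rw [hcdef]; exact div_le_self hK (by norm_num)
  rw [abs_le]
  constructor <;> linarith

/-- integrated version of the decay -/
lemma decay_int {v : ℝ → ℝ} (hc : Continuous v) {K : ℝ}
    (h : ∀ x > 0, |v x| ≤ K * (1 + x) ^ (-98 : ℤ)) :
    IntegrableOn (fun x => wd 1 x * v x ^ 2) (Ioi 0) ∧
      ∫ x in Ioi (0:ℝ), wd 1 x * v x ^ 2 ≤ 4 * K ^ 2 := by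
  have hb : ∀ x > 0, wd 1 x * v x ^ 2 ≤ K ^ 2 * (1 + x ^ 2)⁻¹ := by
    intro x hx
    have h1 : v x ^ 2 ≤ (K * (1 + x) ^ (-98 : ℤ)) ^ 2 := by
      rw [← sq_abs]; exact pow_le_pow_left₀ (abs_nonneg _) (h x hx) 2
    have hx1 : 0 < 1 + x := by linarith
    have e : wd 1 x * (K * (1 + x) ^ (-98 : ℤ)) ^ 2 = K ^ 2 * ((1 + x) ^ 96)⁻¹ := by
      rw [wd_one, zpow_neg]
      have e1 : (1 + x) ^ (98 : ℤ) = (1 + x) ^ 98 := by norm_cast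
      have e2 : ((1 + x) ^ 98) ^ 2 = (1 + x) ^ 100 * (1 + x) ^ 96 := by
        rw [← pow_mul, ← pow_add]
      rw [e1, mul_pow, inv_pow, e2, mul_inv]
      have : (1 + x) ^ 100 ≠ 0 := pow_ne_zero _ hx1.ne'
      field_simp
    refine (mul_le_mul_of_nonneg_left h1 (wd_pos zero_le_one hx.le).le).trans ?_
    rw [e]
    refine mul_le_mul_of_nonneg_left ?_ (sq_nonneg K)
    refine inv_anti₀ (by positivity) ?_
    have : (1 + x) ^ 2 ≤ (1 + x) ^ 96 := pow_le_pow_right₀ (by linarith) (by norm_num)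
    nlinarith
  have hi : IntegrableOn (fun x : ℝ => K ^ 2 * (1 + x ^ 2)⁻¹) (Ioi 0) :=
    (integrable_inv_one_add_sq.integrableOn).const_mul _
  have hi2 : IntegrableOn (fun x => wd 1 x * v x ^ 2) (Ioi 0) := by
    refine Integrable.mono' hi (((wd_cont 1).mul (hc.pow 2)).aestronglyMeasurable) ?_
    refine (ae_restrict_iff' measurableSet_Ioi).2 (Eventually.of_forall fun x hx => ?_)
    rw [Real.norm_eq_abs, abs_of_nonneg (mul_nonneg (wd_pos zero_le_one (le_of_lt hx)).le
      (sq_nonneg _))]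
    exact hb x hx
  refine ⟨hi2, (setIntegral_mono_on hi2 hi measurableSet_Ioi hb).trans ?_⟩
  rw [integral_const_mul, integral_Ioi_inv_one_add_sq]
  have := Real.pi_le_four
  simp only [Real.arctan_zero, sub_zero]
  nlinarith [sq_nonneg K]

/-! ### Part 7: pointwise estimates for the nonlinearity -/

/-- a pair of numbers with a common bound and a bound for the difference -/
def BD (x y A a : ℝ) : Prop := |x| ≤ A ∧ |y| ≤ A ∧ |x - y| ≤ a

lemma BD.mono {x y A a A' a' : ℝ} (h : BD x y A a) (h1 : A ≤ A') (h2 : a ≤ a') : BD x y A' a' :=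
  ⟨h.1.trans h1, h.2.1.trans h1, h.2.2.trans h2⟩

lemma BD.add {x y A a x' y' B b : ℝ} (h : BD x y A a) (h' : BD x' y' B b) :
    BD (x + x') (y + y') (A + B) (a + b) := by
  obtain ⟨h1, h2, h3⟩ := h
  obtain ⟨k1, k2, k3⟩ := h'
  refine ⟨(abs_add_le _ _).trans (add_le_add h1 k1), (abs_add_le _ _).trans (add_le_add h2 k2), ?_⟩
  have : x + x' - (y + y') = (x - y) + (x' - y') := by ring
  rw [this]; exact (abs_add_le _ _).trans (add_le_add h3 k3)

lemma BD.mul {x y A a x' y' B b : ℝ} (h : BD x y A a) (h' : BD x' y' B b) :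
    BD (x * x') (y * y') (A * B) (A * b + a * B) := by
  obtain ⟨h1, h2, h3⟩ := h
  obtain ⟨k1, k2, k3⟩ := h'
  have hA := (abs_nonneg _).trans h1
  have ha := (abs_nonneg _).trans h3
  refine ⟨?_, ?_, ?_⟩
  · rw [abs_mul]; exact mul_le_mul h1 k1 (abs_nonneg _) hA
  · rw [abs_mul]; exact mul_le_mul h2 k2 (abs_nonneg _) hA
  · have : x * x' - y * y' = x * (x' - y') + (x - y) * y' := by ring
    rw [this]
    refine (abs_add_le _ _).trans (add_le_add ?_ ?_)
    · rw [abs_mul]; exact mul_le_mul h1 k3 (abs_nonneg _) hA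
    · rw [abs_mul]; exact mul_le_mul h3 k2 (abs_nonneg _) ha

lemma BD.smul {x y A a : ℝ} (h : BD x y A a) (c : ℝ) :
    BD (c * x) (c * y) (|c| * A) (|c| * a) := by
  obtain ⟨h1, h2, h3⟩ := h
  refine ⟨?_, ?_, ?_⟩
  · rw [abs_mul]; exact mul_le_mul_of_nonneg_left h1 (abs_nonneg _)
  · rw [abs_mul]; exact mul_le_mul_of_nonneg_left h2 (abs_nonneg _)
  · rw [← mul_sub, abs_mul]; exact mul_le_mul_of_nonneg_left h3 (abs_nonneg _)

section
variable {M κ H J x y x' y' c c' : ℝ}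

lemma BD.t00 (hκ : 0 ≤ κ) (h : BD x y c (c * κ)) (h' : BD x' y' c' (c' * κ)) :
    BD (x * x') (y * y') (2 * c * c') (2 * c * c' * κ) := by
  have hc := (abs_nonneg _).trans h.1
  have hc' := (abs_nonneg _).trans h'.1
  have := mul_nonneg hc hc'
  exact (h.mul h').mono (by nlinarith) (by nlinarith)

lemma BD.t01 (hM : M ≤ 1) (hκ : 0 ≤ κ) (hc' : 0 ≤ c') (h : BD x y c (c * κ))
    (h' : BD x' y' (c' * M) (c' * κ)) :
    BD (x * x') (y * y') (2 * c * c' * M) (2 * c * c' * κ) := by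
  have hc := (abs_nonneg _).trans h.1
  have h2 := (abs_nonneg _).trans h'.1
  have := mul_nonneg hc hc'
  refine (h.mul h').mono ?_ ?_
  · have := mul_nonneg hc h2; nlinarith
  · have : c * κ * (c' * M) ≤ c * c' * κ := by
      have := mul_le_mul_of_nonneg_left hM (mul_nonneg this hκ); nlinarith
    nlinarith

lemma BD.t02 (h : BD x y c (c * κ))
    (h' : BD x' y' (c' * H) (c' * J)) :
    BD (x * x') (y * y') (c * c' * H) (c * c' * (κ * H + J)) :=
  (h.mul h').mono (le_of_eq (by ring)) (le_of_eq (by ring))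

lemma BD.t03 (hc' : 0 ≤ c') (hH : 0 ≤ H) (hκ : 0 ≤ κ) (hJ : 0 ≤ J) (h : BD x y c (c * κ))
    (h' : BD x' y' (c' * H) (c' * (κ * H + J))) :
    BD (x * x') (y * y') (2 * c * c' * H) (2 * c * c' * (κ * H + J)) := by
  have hc := (abs_nonneg _).trans h.1
  have h1 := mul_nonneg (mul_nonneg hc hc') hH
  have h2 := mul_nonneg (mul_nonneg hc hc') hJ
  exact (h.mul h').mono (by nlinarith) (by nlinarith)

lemma BD.t12 (hc : 0 ≤ c) (hc' : 0 ≤ c') (hH : 0 ≤ H) (hJ : 0 ≤ J) (hM : M ≤ 1)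
    (h : BD x y (c * M) (c * κ))
    (h' : BD x' y' (c' * H) (c' * J)) :
    BD (x * x') (y * y') (c * c' * H) (c * c' * (κ * H + J)) := by
  have h1 := mul_le_mul_of_nonneg_left hM (mul_nonneg (mul_nonneg hc hc') hH)
  have h2 := mul_le_mul_of_nonneg_left hM (mul_nonneg (mul_nonneg hc hc') hJ)
  exact (h.mul h').mono (by nlinarith) (by nlinarith)

lemma BD.f12 (h : BD x y (c * M) (c * κ)) (h' : BD x' y' (c' * H) (c' * J)) :
    |x * x' - y * y'| ≤ c * c' * (κ * H + M * J) :=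
  (h.mul h').2.2.trans (le_of_eq (by ring))

lemma BD.f31 (hc : 0 ≤ c) (hH : 0 ≤ H) (hJ : 0 ≤ J) (hM0 : 0 ≤ M) (hM : M ≤ 1) (hκ : 0 ≤ κ)
    (h : BD x y (c * H) (c * (κ * H + J))) (h' : BD x' y' M κ) :
    |x * x' - y * y'| ≤ 2 * c * (κ * H + M * J) := by
  refine (h.mul h').2.2.trans ?_
  have h1 := mul_le_mul_of_nonneg_left hM (mul_nonneg (mul_nonneg hc hH) hκ)
  have h2 := mul_nonneg (mul_nonneg hc hJ) hM0
  nlinarith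
end

/-- first derivative of the nonlinearity along `s` -/
noncomputable def nl1 (b r1 Q1 Q2 : ℝ) : ℝ := (1/2 * (b * b * b * r1)) * Q1 + (1 - b) * Q2

/-- second derivative of the nonlinearity along `s` -/
noncomputable def nl2 (b r1 r2 Q1 Q2 Q3 : ℝ) : ℝ :=
  (1/2 * (b * b * b * r2) + (-3/4) * (b * b * b * (b * b) * (r1 * r1))) * Q1
    + 2 * (1/2 * (b * b * b * r1)) * Q2 + (1 - b) * Q3

lemma b_diff {b b' r r' : ℝ} (h1 : 1/2 ≤ b) (h2 : b ≤ 2) (h1' : 1/2 ≤ b') (h2' : b' ≤ 2)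
    (e : b ^ 2 * (1 + r) = 1) (e' : b' ^ 2 * (1 + r') = 1) : |b - b'| ≤ 16 * |r - r'| := by
  have h3 : (b - b') * (b + b') = b ^ 2 * b' ^ 2 * (r' - r) := by
    have a1 : b ^ 2 * b' ^ 2 * (1 + r) = b' ^ 2 := by rw [mul_right_comm, e, one_mul]
    have a2 : b ^ 2 * b' ^ 2 * (1 + r') = b ^ 2 := by rw [mul_assoc, e', mul_one]
    linear_combination a1 - a2
  have h4 : |b - b'| * (b + b') = b ^ 2 * b' ^ 2 * |r - r'| := by
    rw [← abs_of_pos (by linarith : 0 < b + b'), ← abs_mul, h3, abs_mul, abs_sub_comm r',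
      abs_of_nonneg (by positivity : 0 ≤ b ^ 2 * b' ^ 2)]
  have h5 : b ^ 2 ≤ 4 := by nlinarith
  have h6 : b' ^ 2 ≤ 4 := by nlinarith
  have h7 : b ^ 2 * b' ^ 2 ≤ 16 := by nlinarith [sq_nonneg b, sq_nonneg b']
  have h8 := mul_le_mul_of_nonneg_right h7 (abs_nonneg (r - r'))
  nlinarith [abs_nonneg (b - b')]

lemma b_one {b r : ℝ} (h1 : 1/2 ≤ b) (h2 : b ≤ 2)
    (e : b ^ 2 * (1 + r) = 1) : |1 - b| ≤ 16 * |r| := by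
  have := b_diff (b := b) (b' := 1) (r' := 0) h1 h2 (by norm_num) (by norm_num) e (by norm_num)
  rwa [abs_sub_comm, sub_zero] at this

/-- hypotheses at a point, sizes `M, κ, H, J, d` and coefficient bound `P` -/
lemma nl_bounds {P d M κ H J l l' p p1 p2 Q Q1 Q2 Q3 R R1 R2 R3 b b' : ℝ} (hP : 1 ≤ P)
    (hd : 0 ≤ d) (hM0 : 0 ≤ M) (hM : M ≤ 1) (hκ : 0 ≤ κ) (hH : 0 ≤ H) (hJ : 0 ≤ J)
    (hdM : d * M ≤ κ) (hdH : d * H ≤ J) (hl : BD l l' 2 d) (hp : |p| ≤ P) (hp1 : |p1| ≤ P)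
    (hp2 : |p2| ≤ P) (q0 : BD Q R M κ) (q1 : BD Q1 R1 M κ) (q0' : BD Q R H J)
    (q1' : BD Q1 R1 H J) (q2 : BD Q2 R2 H J) (q3 : BD Q3 R3 H J)
    (b1 : 1/2 ≤ b) (b2 : b ≤ 2) (b1' : 1/2 ≤ b') (b2' : b' ≤ 2)
    (e : b ^ 2 * (1 + l * (Q * p)) = 1) (e' : b' ^ 2 * (1 + l' * (R * p)) = 1) :
    |(1 - b) * Q1 - (1 - b') * R1| ≤ 100 * (48 * P) ^ 7 * (κ * H + M * J) ∧
    |(1 - b) * Q1 - (1 - b') * R1| ≤ 100 * (48 * P) ^ 7 * (κ * M) ∧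
    |nl1 b (l * (Q1 * p + Q * p1)) Q1 Q2 - nl1 b' (l' * (R1 * p + R * p1)) R1 R2|
      ≤ 100 * (48 * P) ^ 7 * (κ * H + M * J) ∧
    |nl2 b (l * (Q1 * p + Q * p1)) (l * (Q2 * p + 2 * (Q1 * p1) + Q * p2)) Q1 Q2 Q3
      - nl2 b' (l' * (R1 * p + R * p1)) (l' * (R2 * p + 2 * (R1 * p1) + R * p2)) R1 R2 R3|
      ≤ 100 * (48 * P) ^ 7 * (κ * H + M * J) := by
  have hP0 : 0 ≤ P := by linarith
  have cst : ∀ {x y A a p : ℝ}, |p| ≤ P → BD x y A a → BD (x * p) (y * p) (P * A) (P * a) := by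
    intro x y A a p hp h
    have := h.smul p
    rw [mul_comm x, mul_comm y]
    exact this.mono (mul_le_mul_of_nonneg_right hp ((abs_nonneg _).trans h.1))
      (mul_le_mul_of_nonneg_right hp ((abs_nonneg _).trans h.2.2))
  have hPM : 0 ≤ P * M := mul_nonneg hP0 hM0
  have hPκ : 0 ≤ P * κ := mul_nonneg hP0 hκ
  have hPH : 0 ≤ P * H := mul_nonneg hP0 hH
  have hPJ : 0 ≤ P * J := mul_nonneg hP0 hJ
  have hPdM : P * (d * M) ≤ P * κ := mul_le_mul_of_nonneg_left hdM hP0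
  have hPdH : P * (d * H) ≤ P * J := mul_le_mul_of_nonneg_left hdH hP0
  -- r
  have r0 : BD (l * (Q * p)) (l' * (R * p)) (2 * (P * M)) (3 * (P * κ)) :=
    (hl.mul (cst hp q0)).mono le_rfl (by nlinarith)
  obtain ⟨B, hB⟩ : ∃ B, B = 48 * P := ⟨_, rfl⟩
  rw [← hB]
  have hB1 : 1 ≤ B := by linarith
  have hB0 : 0 ≤ B := by linarith
  have hBM : 0 ≤ B * M := mul_nonneg hB0 hM0
  have r1 : BD (l * (Q1 * p + Q * p1)) (l' * (R1 * p + R * p1)) (B * M) (B * κ) :=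
    (hl.mul ((cst hp q1).add (cst hp1 q0))).mono (by rw [hB]; nlinarith) (by rw [hB]; nlinarith)
  have r1' : BD (l * (Q1 * p + Q * p1)) (l' * (R1 * p + R * p1)) (B * H) (B * J) :=
    (hl.mul ((cst hp q1').add (cst hp1 q0'))).mono (by rw [hB]; nlinarith) (by rw [hB]; nlinarith)
  have q11 : BD (2 * (Q1 * p1)) (2 * (R1 * p1)) (2 * (P * H)) (2 * (P * J)) := by
    have := (cst hp1 q1').smul 2
    rwa [abs_of_pos (by norm_num : (0:ℝ) < 2)] at this
  have r2 : BD (l * (Q2 * p + 2 * (Q1 * p1) + Q * p2)) (l' * (R2 * p + 2 * (R1 * p1) + R * p2))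
      (B * H) (B * J) :=
    (hl.mul (((cst hp q2).add q11).add (cst hp2 q0'))).mono (by rw [hB]; nlinarith)
      (by rw [hB]; nlinarith)
  have bb : BD b b' B (B * κ) := by
    refine ⟨?_, ?_, ?_⟩
    · rw [abs_of_pos (by linarith)]; linarith
    · rw [abs_of_pos (by linarith)]; linarith
    · refine (b_diff b1 b2 b1' b2' e e').trans ?_
      rw [hB]; linarith [r0.2.2]
  have al : BD (1 - b) (1 - b') (B * M) (B * κ) := by
    refine ⟨(b_one b1 b2 e).trans ?_, (b_one b1' b2' e').trans ?_, ?_⟩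
    · rw [hB]; linarith [r0.1]
    · rw [hB]; linarith [r0.2.1]
    · have : 1 - b - (1 - b') = -(b - b') := by ring
      rw [this, abs_neg]; exact bb.2.2
  clear e e' r0 b1 b2 b1' b2' q11 hl cst hB
  set r := l * (Q1 * p + Q * p1)
  set r' := l' * (R1 * p + R * p1)
  set t := l * (Q2 * p + 2 * (Q1 * p1) + Q * p2)
  set t' := l' * (R2 * p + 2 * (R1 * p1) + R * p2)
  have bd2 := bb.t00 hκ bb
  have bd3 := bd2.t00 hκ bb
  have bd5 := bd3.t00 hκ bd2
  have a1 : BD (1/2 * (b * b * b * r)) (1/2 * (b' * b' * b' * r')) (8 * B ^ 4 * M) (8 * B ^ 4 * κ) := by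
    have := (bd3.t01 hM hκ hB0 r1).smul (1/2)
    rw [abs_of_pos (by norm_num : (0:ℝ) < 1/2)] at this
    have h1 : 0 ≤ B ^ 4 * M := by positivity
    have h2 : 0 ≤ B ^ 4 * κ := by positivity
    exact this.mono (by nlinarith) (by nlinarith)
  have a2 : BD (1/2 * (b * b * b * t) + (-3/4) * (b * b * b * (b * b) * (r * r)))
      (1/2 * (b' * b' * b' * t') + (-3/4) * (b' * b' * b' * (b' * b') * (r' * r')))
      (36 * B ^ 7 * H) (36 * B ^ 7 * (κ * H + J)) := by
    have u1 := (bd3.t02 r2).smul (1/2)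
    have u2 := (bd5.t03 (mul_nonneg hB0 hB0) hH hκ hJ (r1.t12 hB0 hB0 hH hJ hM r1')).smul (-3/4)
    rw [abs_of_pos (by norm_num : (0:ℝ) < 1/2)] at u1
    rw [show |(-3/4 : ℝ)| = 3/4 by norm_num [abs_of_neg]] at u2
    have h4 : B ^ 4 ≤ B ^ 7 := pow_le_pow_right₀ hB1 (by norm_num)
    have h1 : 0 ≤ B ^ 4 * H := by positivity
    have h2 : 0 ≤ B ^ 7 * H := by positivity
    have hs : 0 ≤ κ * H + J := by positivity
    have h3 : 0 ≤ B ^ 7 * (κ * H + J) := by positivity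
    have k1 := mul_le_mul_of_nonneg_right h4 hH
    have k2 := mul_le_mul_of_nonneg_right h4 hs
    refine (u1.add u2).mono ?_ ?_
    · have : 1 / 2 * (2 * (2 * B * B) * B * B * H)
        + 3 / 4 * (2 * (2 * (2 * (2 * B * B) * B) * (2 * B * B)) * (B * B) * H)
        = 2 * (B ^ 4 * H) + 24 * (B ^ 7 * H) := by ring
      rw [this]; linarith
    · have : 1 / 2 * (2 * (2 * B * B) * B * B * (κ * H + J))
        + 3 / 4 * (2 * (2 * (2 * (2 * B * B) * B) * (2 * B * B)) * (B * B) * (κ * H + J))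
        = 2 * (B ^ 4 * (κ * H + J)) + 24 * (B ^ 7 * (κ * H + J)) := by ring
      rw [this]; linarith
  have h17 : B ≤ B ^ 7 := le_self_pow₀ hB1 (by norm_num)
  have h47 : B ^ 4 ≤ B ^ 7 := pow_le_pow_right₀ hB1 (by norm_num)
  have hB7 : 0 ≤ B ^ 7 := by positivity
  set S := κ * H + M * J with hS
  have hS0 : 0 ≤ S := by positivity
  have s1 := mul_le_mul_of_nonneg_right h17 hS0
  have s4 := mul_le_mul_of_nonneg_right h47 hS0
  have s7 := mul_nonneg hB7 hS0
  have one : ∀ {x y A a : ℝ}, BD x y A a → BD x y (1 * A) (1 * a) := by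
    intro x y A a h; simpa using h
  clear_value r r' t t'
  have w0 := al.f12 (one q1')
  have w1 := a1.f12 (one q1')
  have w2 := al.f12 (one q2)
  have w3 := BD.f31 (by positivity) hH hJ hM0 hM hκ a2 q1
  have w4 := a1.f12 (one q2)
  have w5 := al.f12 (one q3)
  rw [← hS] at w0 w1 w2 w3 w4 w5
  clear_value S
  refine ⟨by linarith, ?_, ?_, ?_⟩
  · have := (al.mul q1).2.2
    have h0 : 0 ≤ κ * M := by positivity
    have := mul_le_mul_of_nonneg_right h17 h0
    have := mul_nonneg hB7 h0
    nlinarith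
  · unfold nl1
    have e : 1 / 2 * (b * b * b * r) * Q1 + (1 - b) * Q2
        - (1 / 2 * (b' * b' * b' * r') * R1 + (1 - b') * R2)
      = (1 / 2 * (b * b * b * r) * Q1 - 1 / 2 * (b' * b' * b' * r') * R1)
        + ((1 - b) * Q2 - (1 - b') * R2) := by ring
    rw [e]
    refine (abs_add_le _ _).trans ((add_le_add w1 w2).trans ?_)
    linarith
  · unfold nl2
    set A := 1 / 2 * (b * b * b * t) + -3 / 4 * (b * b * b * (b * b) * (r * r))
    set A' := 1/2 * (b' * b' * b' * t') + (-3/4) * (b' * b' * b' * (b' * b') * (r' * r'))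
    set D := 1 / 2 * (b * b * b * r)
    set D' := 1 / 2 * (b' * b' * b' * r')
    have e : A * Q1 + 2 * D * Q2 + (1 - b) * Q3 - (A' * R1 + 2 * D' * R2 + (1 - b') * R3)
      = (A * Q1 - A' * R1) + 2 * (D * Q2 - D' * R2) + ((1 - b) * Q3 - (1 - b') * R3) := by ring
    rw [e]
    have f1 := abs_add_le ((A * Q1 - A' * R1) + 2 * (D * Q2 - D' * R2)) ((1 - b) * Q3 - (1 - b') * R3)
    have f2 := abs_add_le (A * Q1 - A' * R1) (2 * (D * Q2 - D' * R2))
    rw [abs_mul, abs_of_pos (by norm_num : (0:ℝ) < 2)] at f2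
    linarith

/-! ### Part 8: the nonlinearity -/

lemma b_props {r : ℝ} (h : |r| ≤ 1/2) : 1/2 ≤ (Real.sqrt (1 + r))⁻¹ ∧ (Real.sqrt (1 + r))⁻¹ ≤ 2 ∧
    ((Real.sqrt (1 + r))⁻¹) ^ 2 * (1 + r) = 1 := by
  have h1 := abs_le.1 h
  have h0 : 0 < 1 + r := by linarith
  have hs : 0 < Real.sqrt (1 + r) := Real.sqrt_pos.2 h0
  have h2 : Real.sqrt (1 + r) ≤ 2 := by
    rw [Real.sqrt_le_left (by norm_num)]; linarith
  have h3 : 1/2 ≤ Real.sqrt (1 + r) := by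
    apply Real.le_sqrt_of_sq_le; linarith
  refine ⟨?_, ?_, ?_⟩
  · have := inv_anti₀ hs h2; linarith
  · have := inv_anti₀ (by norm_num) h3; linarith
  · rw [inv_pow, Real.sq_sqrt h0.le, inv_mul_cancel₀ h0.ne']

lemma b_deriv {r : ℝ → ℝ} {r1 s : ℝ} (hr : HasDerivAt r r1 s) (h0 : 0 < 1 + r s) :
    HasDerivAt (fun s => (Real.sqrt (1 + r s))⁻¹)
      (-(1/2 * ((Real.sqrt (1 + r s))⁻¹ * (Real.sqrt (1 + r s))⁻¹ * (Real.sqrt (1 + r s))⁻¹ * r1)))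
      s := by
  have hs : 0 < Real.sqrt (1 + r s) := Real.sqrt_pos.2 h0
  have h1 := ((hr.const_add 1).sqrt h0.ne').inv hs.ne'
  refine h1.congr_deriv ?_
  field_simp

lemma slice_derivs {l : ℝ} {p p1 p2 Q0 Q1 Q2 Q3 : ℝ → ℝ} (hp : ∀ s, HasDerivAt p (p1 s) s)
    (hp1 : ∀ s, HasDerivAt p1 (p2 s) s) (h0 : ∀ s, HasDerivAt Q0 (Q1 s) s)
    (h1 : ∀ s, HasDerivAt Q1 (Q2 s) s) (h2 : ∀ s, HasDerivAt Q2 (Q3 s) s)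
    (hr : ∀ s, |l * (Q0 s * p s)| ≤ 1/2) {b : ℝ → ℝ}
    (hb : b = fun s => (Real.sqrt (1 + l * (Q0 s * p s)))⁻¹) :
    (∀ s, HasDerivAt (fun s => (1 - b s) * Q1 s)
      (nl1 (b s) (l * (Q1 s * p s + Q0 s * p1 s)) (Q1 s) (Q2 s)) s) ∧
    (∀ s, HasDerivAt (fun s => nl1 (b s) (l * (Q1 s * p s + Q0 s * p1 s)) (Q1 s) (Q2 s))
      (nl2 (b s) (l * (Q1 s * p s + Q0 s * p1 s))
        (l * (Q2 s * p s + 2 * (Q1 s * p1 s) + Q0 s * p2 s)) (Q1 s) (Q2 s) (Q3 s)) s) := by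
  have hbd : ∀ s, HasDerivAt b
      (-(1/2 * (b s * b s * b s * (l * (Q1 s * p s + Q0 s * p1 s))))) s := by
    intro s
    rw [hb]
    exact b_deriv (r := fun s => l * (Q0 s * p s)) (((h0 s).mul (hp s)).const_mul l)
      (by have := abs_le.1 (hr s); linarith)
  have hrd : ∀ s, HasDerivAt (fun s => l * (Q1 s * p s + Q0 s * p1 s))
      (l * (Q2 s * p s + 2 * (Q1 s * p1 s) + Q0 s * p2 s)) s := by
    intro s
    have := (((h1 s).mul (hp s)).add ((h0 s).mul (hp1 s))).const_mul l
    refine this.congr_deriv ?_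
    ring
  clear hb
  constructor
  · intro s
    refine (((hbd s).const_sub 1).mul (h1 s)).congr_deriv ?_
    unfold nl1; ring
  · intro s
    unfold nl1
    have t1 := ((((((hbd s).mul (hbd s)).mul (hbd s)).mul (hrd s)).const_mul (1/2)).mul (h1 s)).add
      (((hbd s).const_sub 1).mul (h2 s))
    refine t1.congr_deriv ?_
    simp only [Pi.mul_apply]
    unfold nl2; ring

lemma fNonlin_eq {q : ℝ → ℝ} (hq : ∀ s, 0 < q s) {ω : ℝ} (hω : 0 < ω) (Q : ℝ → ℝ → ℝ) (s ψ : ℝ) :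
    fNonlin q ω Q s ψ = (1 - (Real.sqrt (1 + (ω ^ 2)⁻¹ * (Q s ψ * ((q s) ^ 2)⁻¹)))⁻¹) * dS 1 Q s ψ := by
  unfold fNonlin
  have hqs := hq s
  have e : ω ^ 2 * (q s) ^ 2 + Q s ψ
      = (ω * q s) ^ 2 * (1 + (ω ^ 2)⁻¹ * (Q s ψ * ((q s) ^ 2)⁻¹)) := by
    field_simp
  rw [e, Real.sqrt_mul (sq_nonneg _), Real.sqrt_sq (by positivity)]
  congr 2
  rw [div_mul_eq_div_div, div_self (by positivity), one_div]

lemma E_lin4 {L : ℝ} {h u v w : ℝ → ℝ → ℝ} (hc : Continuous (fun p : ℝ × ℝ => h p.1 p.2))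
    (c e : ℝ) (hu : XF L u) (hv : XF L v) (hw : XF L w) (hc0 : 0 ≤ c) (he0 : 0 ≤ e)
    (hle : ∀ s ∈ Ioc 0 L, ∀ ψ > 0, (h s ψ) ^ 2 ≤ ∑ j ∈ Finset.range 4,
      (c * ((dS j u s ψ) ^ 2 + (dS j v s ψ) ^ 2) + e * (dS j w s ψ) ^ 2)) :
    Fi L h ∧ E L h ≤ 4 * (c * (XX L u + XX L v) + e * XX L w) := by
  have iu : ∀ j ∈ Finset.range 4, IntegrableOn
      (fun p : ℝ × ℝ => c * ((1 + p.2) ^ 100 * (dS j u p.1 p.2) ^ 2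
        + (1 + p.2) ^ 100 * (dS j v p.1 p.2) ^ 2)
        + e * ((1 + p.2) ^ 100 * (dS j w p.1 p.2) ^ 2)) (reg L) := fun j hj => by
    have hj3 : j ≤ 3 := by have := Finset.mem_range.1 hj; omega
    exact Integrable.add (Integrable.const_mul (Integrable.add ((Fi_iff L _).1 (XF_S hu hj3))
      ((Fi_iff L _).1 (XF_S hv hj3))) c) (Integrable.const_mul ((Fi_iff L _).1 (XF_S hw hj3)) e)
  have := E_dom (L := L) hc (B := fun p => ∑ j ∈ Finset.range 4,
      (c * ((1 + p.2) ^ 100 * (dS j u p.1 p.2) ^ 2 + (1 + p.2) ^ 100 * (dS j v p.1 p.2) ^ 2)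
        + e * ((1 + p.2) ^ 100 * (dS j w p.1 p.2) ^ 2)))
    (integrable_finsetSum _ iu) (fun p hp => by
      have h1 := hle p.1 hp.1 p.2 hp.2
      have h2 : (0:ℝ) < p.2 := hp.2
      have h3 : (0:ℝ) ≤ (1 + p.2) ^ 100 := by positivity
      generalize (1 + p.2) ^ 100 = T at h3
      calc T * (h p.1 p.2) ^ 2 ≤ T * _ := mul_le_mul_of_nonneg_left h1 h3
        _ = _ := by
            rw [Finset.mul_sum]; exact Finset.sum_congr rfl fun i _ => by ring)
  refine ⟨this.1, this.2.trans ?_⟩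
  rw [integral_finsetSum _ iu]
  have : ∀ j ∈ Finset.range 4, (∫ p in reg L, (c * ((1 + p.2) ^ 100 * (dS j u p.1 p.2) ^ 2
        + (1 + p.2) ^ 100 * (dS j v p.1 p.2) ^ 2)
        + e * ((1 + p.2) ^ 100 * (dS j w p.1 p.2) ^ 2))) ≤ c * (XX L u + XX L v) + e * XX L w := by
    intro j hj
    have hj3 : j ≤ 3 := by have := Finset.mem_range.1 hj; omega
    have i1 := (Fi_iff L _).1 (XF_S hu hj3)
    have i2 := (Fi_iff L _).1 (XF_S hv hj3)
    have i3 := (Fi_iff L _).1 (XF_S hw hj3)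
    have i12 : IntegrableOn (fun p : ℝ × ℝ => (1 + p.2) ^ 100 * (dS j u p.1 p.2) ^ 2
        + (1 + p.2) ^ 100 * (dS j v p.1 p.2) ^ 2) (reg L) := i1.add i2
    rw [integral_add (i12.const_mul c) (i3.const_mul e), integral_const_mul,
      integral_const_mul, integral_add i1 i2, ← E_eq, ← E_eq, ← E_eq]
    exact add_le_add (mul_le_mul_of_nonneg_left (add_le_add (XX_E1 L u hj3) (XX_E1 L v hj3)) hc0)
      (mul_le_mul_of_nonneg_left (XX_E1 L w hj3) he0)
  refine (Finset.sum_le_card_nsmul _ _ _ this).trans (le_of_eq ?_)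
  rw [Finset.card_range, nsmul_eq_mul]; norm_num

/-- constant in the pointwise bound -/
noncomputable def cA (L : ℝ) : ℝ := Real.sqrt (202 * (2 / L + 2 * L)) + 1

lemma cA_pos (L : ℝ) : 1 ≤ cA L := by unfold cA; linarith [Real.sqrt_nonneg (202 * (2 / L + 2 * L))]

lemma sup_XX' {L : ℝ} (hL : 0 < L) {h : ℝ → ℝ → ℝ} (hh : Smooth2 h) (hp : PeriodicS L h)
    (hF : XF L h) {k : ℕ} (hk : k ≤ 1) (s : ℝ) {ψ : ℝ} (hψ : 0 ≤ ψ) {N : ℝ} (hN : 0 ≤ N)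
    (hXN : XX L h ≤ N ^ 2) :
    |dS k h s ψ| ≤ cA L * N * ((1 + ψ) ^ 50)⁻¹ := by
  have h1 := sup_XX hL hh hp hF hk s hψ hN hXN
  have h2 : (0:ℝ) < (1 + ψ) ^ 50 := by positivity
  rw [← div_eq_mul_inv, le_div_iff₀ h2, mul_comm]
  refine h1.trans (mul_le_mul_of_nonneg_right ?_ hN)
  unfold cA; linarith

lemma dS_k_slice {F : ℝ → ℝ → ℝ} {ψ : ℝ} {F0 F1 F2 : ℝ → ℝ} (h0 : ∀ s, F s ψ = F0 s)
    (h1 : ∀ s, HasDerivAt F0 (F1 s) s) (h2 : ∀ s, HasDerivAt F1 (F2 s) s) :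
    (∀ s, dS 1 F s ψ = F1 s) ∧ (∀ s, dS 2 F s ψ = F2 s) := by
  have e : (fun s => F s ψ) = F0 := funext h0
  have a1 : ∀ s, dS 1 F s ψ = F1 s := by
    intro s; rw [dS_one_apply, e]; exact (h1 s).deriv
  refine ⟨a1, fun s => ?_⟩
  rw [dS_succ 1, dS_one_apply, funext a1]; exact (h2 s).deriv

lemma sum4_sq (a b c d : ℝ) : (a + b + c + d) ^ 2 ≤ 4 * (a ^ 2 + b ^ 2 + c ^ 2 + d ^ 2) := by
  nlinarith [sq_nonneg (a - b), sq_nonneg (a - c), sq_nonneg (a - d), sq_nonneg (b - c),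
    sq_nonneg (b - d), sq_nonneg (c - d)]

lemma E_alg {K x κ M H J S kh mh d : ℝ} (hx : |x| ≤ K * (κ * H + M * J)) (hK : 0 ≤ K)
    (hH : 0 ≤ H) (hS : 0 ≤ S) (hJ : J = S + d * H) (hκ : κ ≤ kh) (hM : M ≤ mh) (hd : 0 ≤ d)
    (hmd : d * mh ≤ kh) : x ^ 2 ≤ K ^ 2 * (8 * kh ^ 2 * H ^ 2 + 2 * mh ^ 2 * S ^ 2) := by
  have h1 : κ * H + M * J ≤ 2 * kh * H + mh * S := by
    have a1 := mul_le_mul_of_nonneg_right hκ hH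
    have hJ0 : 0 ≤ J := by rw [hJ]; positivity
    have a2 := mul_le_mul_of_nonneg_right hM hJ0
    have a3 := mul_le_mul_of_nonneg_right hmd hH
    rw [hJ] at a2 ⊢
    nlinarith
  have h2 : |x| ≤ K * (2 * kh * H + mh * S) := hx.trans (mul_le_mul_of_nonneg_left h1 hK)
  have h3 : x ^ 2 ≤ (K * (2 * kh * H + mh * S)) ^ 2 := by
    rw [← sq_abs]; exact pow_le_pow_left₀ (abs_nonneg _) h2 2
  refine h3.trans ?_
  rw [mul_pow]
  refine mul_le_mul_of_nonneg_left ?_ (sq_nonneg K)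
  nlinarith [sq_nonneg (2 * kh * H - mh * S)]

set_option maxHeartbeats 1000000 in
lemma nonlin_est {L : ℝ} (hL : 0 < L) {q : ℝ → ℝ} (hq : ContDiff ℝ (⊤ : ℕ∞) q)
    (hqp : Periodic q L) (hqpos : ∀ s, 0 < q s) :
    ∃ C m : ℝ, 0 < C ∧ 0 < m ∧ ∀ ω1 ω2 : ℝ, 0 < ω1 → 0 < ω2 → (ω1 ^ 2)⁻¹ ≤ 2 → (ω2 ^ 2)⁻¹ ≤ 2 →
      ∀ Q R F : ℝ → ℝ → ℝ, Smooth2 Q → Smooth2 R → PeriodicS L Q → PeriodicS L R → XF L Q → XF L R →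
      Smooth2 F → ∀ M N d : ℝ, 0 ≤ M → M ≤ m → 0 ≤ N → |(ω1 ^ 2)⁻¹ - (ω2 ^ 2)⁻¹| ≤ d →
      XX L Q ≤ M ^ 2 → XX L R ≤ M ^ 2 → XX L (fun s ψ => Q s ψ - R s ψ) ≤ N ^ 2 →
      (∀ s, ∀ ψ > 0, F s ψ = fNonlin q ω1 Q s ψ - fNonlin q ω2 R s ψ) →
      (∀ s, ∀ ψ > 0, |F s ψ| ≤ C * (M * (N + d * M)) * (1 + ψ) ^ (-100 : ℤ)) ∧
      (∀ k ≤ 2, Fi L (dS k F) ∧ E L (dS k F) ≤ C * (M * (N + d * M)) ^ 2) := by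
  set p : ℝ → ℝ := fun s => ((q s) ^ 2)⁻¹ with hpdef
  have hp : ContDiff ℝ (⊤ : ℕ∞) p := (hq.pow 2).inv fun s => (pow_pos (hqpos s) 2).ne'
  have hpp : Periodic p L := fun s => by simp only [hpdef, hqp s]
  have hp1 := smooth_deriv hp
  have hp2 := smooth_deriv hp1
  obtain ⟨P0, hP0, hb0⟩ := periodic_bdd hL hp.continuous hpp
  obtain ⟨P1, hP1, hb1⟩ := periodic_bdd hL hp1.continuous (periodic_deriv hpp)
  obtain ⟨P2, hP2, hb2⟩ := periodic_bdd hL hp2.continuous (periodic_deriv (periodic_deriv hpp))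
  obtain ⟨P, hP⟩ : ∃ P, P = 1 + P0 + P1 + P2 := ⟨_, rfl⟩
  have hPone : 1 ≤ P := by linarith
  have dp : ∀ s, HasDerivAt p (deriv p s) s := fun s => ((hp.differentiable (by simp)) s).hasDerivAt
  have dp1 : ∀ s, HasDerivAt (deriv p) (deriv (deriv p) s) s :=
    fun s => ((hp1.differentiable (by simp)) s).hasDerivAt
  obtain ⟨A, hA⟩ : ∃ A, A = cA L := ⟨_, rfl⟩
  have hA1 : 1 ≤ A := hA ▸ cA_pos L
  have hA0 : 0 < A := by linarith
  obtain ⟨K, hK⟩ : ∃ K : ℝ, K = 100 * (48 * P) ^ 7 := ⟨_, rfl⟩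
  have hKpos : 0 < K := by rw [hK]; positivity
  refine ⟨K * A ^ 2 + 1000 * K ^ 2 * A ^ 2, 1 / (4 * A * P), by positivity, by positivity, ?_⟩
  intro ω1 ω2 hω1 hω2 hl1 hl2 Q R F hQ hR pQ pR fQ fR hF M N d hM hMm hN hd xQ xR xD hFe
  have hd0 : 0 ≤ d := (abs_nonneg _).trans hd
  have hMm' : A * M * (4 * P) ≤ 1 := by
    rw [le_div_iff₀ (by positivity)] at hMm; nlinarith
  obtain ⟨l1, hl1e⟩ : ∃ l, l = (ω1 ^ 2)⁻¹ := ⟨_, rfl⟩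
  obtain ⟨l2, hl2e⟩ : ∃ l, l = (ω2 ^ 2)⁻¹ := ⟨_, rfl⟩
  have l1p : 0 ≤ l1 := by rw [hl1e]; positivity
  have l2p : 0 ≤ l2 := by rw [hl2e]; positivity
  have pD : PeriodicS L (fun s ψ => Q s ψ - R s ψ) := fun ψ s => by
    have a := pQ ψ s; have b := pR ψ s
    simp only at a b ⊢; rw [a, b]
  have hD := hQ.sub hR
  have fD := (XF_sub hQ hR fQ fR).1
  rw [← hl1e] at hl1 hd
  rw [← hl2e] at hl2 hd
  -- pointwise core
  have core : ∀ s, ∀ ψ > 0, ∀ H J S w : ℝ, w = ((1 + ψ) ^ 50)⁻¹ →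
      H = ∑ j ∈ Finset.range 4, (|dS j Q s ψ| + |dS j R s ψ|) →
      S = ∑ j ∈ Finset.range 4, |dS j (fun s ψ => Q s ψ - R s ψ) s ψ| → J = S + d * H →
      |F s ψ| ≤ K * (A * (N + d * M) * w * H + A * M * w * J) ∧
      |F s ψ| ≤ K * (A * (N + d * M) * w * (A * M * w)) ∧
      |dS 1 F s ψ| ≤ K * (A * (N + d * M) * w * H + A * M * w * J) ∧
      |dS 2 F s ψ| ≤ K * (A * (N + d * M) * w * H + A * M * w * J) := by
    intro s ψ hψ H J S w hw hH hS hJ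
    have hw0 : 0 < w := by rw [hw]; positivity
    have hw1 : ∀ x : ℝ, 0 ≤ x → ((1 + x) ^ 50)⁻¹ ≤ 1 := fun x hx =>
      inv_le_one_of_one_le₀ (one_le_pow₀ (by linarith))
    have hw1' : w ≤ 1 := hw ▸ hw1 ψ hψ.le
    have supQ : ∀ k ≤ 1, ∀ s, |dS k Q s ψ| ≤ A * M * w := fun k hk s => by
      rw [hA, hw]; exact sup_XX' hL hQ pQ fQ hk s hψ.le hM xQ
    have supR : ∀ k ≤ 1, ∀ s, |dS k R s ψ| ≤ A * M * w := fun k hk s => by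
      rw [hA, hw]; exact sup_XX' hL hR pR fR hk s hψ.le hM xR
    have supD : ∀ k ≤ 1, ∀ s, |dS k Q s ψ - dS k R s ψ| ≤ A * N * w := fun k hk s => by
      have := sup_XX' hL hD pD fD hk s hψ.le hN xD
      rw [dS_k_sub hQ hR] at this
      rw [hA, hw]; exact this
    have hAM : 0 ≤ A * M := by positivity
    have hAMw : A * M * w ≤ A * M := mul_le_of_le_one_right hAM hw1'
    have rsm : ∀ l x y : ℝ, 0 ≤ l → l ≤ 2 → |x| ≤ A * M * w → |y| ≤ P → |l * (x * y)| ≤ 1/2 := by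
      intro l x y h0 h2 hx hy
      rw [abs_mul, abs_mul, abs_of_nonneg h0]
      have h3 : |x| * |y| ≤ A * M * P :=
        mul_le_mul (hx.trans hAMw) hy (abs_nonneg _) hAM
      have h4 : 0 ≤ |x| * |y| := by positivity
      nlinarith
    have bP0 : ∀ s, |p s| ≤ P := fun s => (hb0 s).trans (by linarith)
    have z0 : ∀ h s, dS 0 h s ψ = h s ψ := fun h s => by rw [dS_zero]
    have rQ : ∀ s, |l1 * (Q s ψ * p s)| ≤ 1/2 := fun s =>
      rsm l1 _ _ l1p hl1 (by rw [← z0 Q]; exact supQ 0 (by norm_num) s) (bP0 s)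
    have rR : ∀ s, |l2 * (R s ψ * p s)| ≤ 1/2 := fun s =>
      rsm l2 _ _ l2p hl2 (by rw [← z0 R]; exact supR 0 (by norm_num) s) (bP0 s)
    have der : ∀ {h : ℝ → ℝ → ℝ}, Smooth2 h → ∀ k s,
        HasDerivAt (fun s => dS k h s ψ) (dS (k+1) h s ψ) s := fun hh k s => by
      rw [dS_succ]; exact (hh.dS_k k).hasS s ψ
    obtain ⟨b, hb⟩ : ∃ b : ℝ → ℝ, b = fun s => (Real.sqrt (1 + l1 * (Q s ψ * p s)))⁻¹ := ⟨_, rfl⟩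
    obtain ⟨b', hb'⟩ : ∃ b : ℝ → ℝ, b = fun s => (Real.sqrt (1 + l2 * (R s ψ * p s)))⁻¹ := ⟨_, rfl⟩
    obtain ⟨u1, u2⟩ := slice_derivs dp dp1 (fun s => hQ.hasS s ψ) (der hQ 1) (der hQ 2) rQ hb
    obtain ⟨v1, v2⟩ := slice_derivs dp dp1 (fun s => hR.hasS s ψ) (der hR 1) (der hR 2) rR hb'
    have F0 : ∀ s, F s ψ = (1 - b s) * dS 1 Q s ψ - (1 - b' s) * dS 1 R s ψ := by
      intro s
      rw [hFe s ψ hψ, fNonlin_eq hqpos hω1, fNonlin_eq hqpos hω2, hb, hb', hl1e, hl2e]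
    obtain ⟨w1, w2⟩ := dS_k_slice F0 (fun s => (u1 s).sub (v1 s)) (fun s => (u2 s).sub (v2 s))
    rw [w1 s, w2 s, F0 s]
    obtain ⟨c1, c2, c3⟩ := b_props (rQ s)
    obtain ⟨c1', c2', c3'⟩ := b_props (rR s)
    have ebs : b s = (Real.sqrt (1 + l1 * (Q s ψ * p s)))⁻¹ := by rw [hb]
    have ebs' : b' s = (Real.sqrt (1 + l2 * (R s ψ * p s)))⁻¹ := by rw [hb']
    rw [← ebs] at c1 c2 c3
    rw [← ebs'] at c1' c2' c3'
    have S0 : 0 ≤ S := by rw [hS]; exact Finset.sum_nonneg fun j _ => abs_nonneg _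
    have H0 : 0 ≤ H := by rw [hH]; exact Finset.sum_nonneg fun j _ => by positivity
    have J0 : 0 ≤ J := by rw [hJ]; positivity
    have HQ : ∀ j < 4, |dS j Q s ψ| ≤ H := fun j hj => by
      have := Finset.single_le_sum (f := fun j => |dS j Q s ψ| + |dS j R s ψ|)
        (fun j _ => by positivity) (Finset.mem_range.2 hj)
      rw [← hH] at this
      linarith [abs_nonneg (dS j R s ψ)]
    have HR : ∀ j < 4, |dS j R s ψ| ≤ H := fun j hj => by
      have := Finset.single_le_sum (f := fun j => |dS j Q s ψ| + |dS j R s ψ|)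
        (fun j _ => by positivity) (Finset.mem_range.2 hj)
      rw [← hH] at this
      linarith [abs_nonneg (dS j Q s ψ)]
    have dH0 : 0 ≤ d * H := by positivity
    have HD : ∀ j < 4, |dS j Q s ψ - dS j R s ψ| ≤ J := fun j hj => by
      have := Finset.single_le_sum (f := fun j => |dS j (fun s ψ => Q s ψ - R s ψ) s ψ|)
        (fun j _ => by positivity) (Finset.mem_range.2 hj)
      rw [← hS] at this
      simp only [dS_k_sub hQ hR] at this
      linarith
    have hdMw : d * (A * M * w) ≤ A * (N + d * M) * w := by
      have : 0 ≤ A * N * w := by positivity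
      nlinarith
    have hκD : A * N * w ≤ A * (N + d * M) * w := by
      have : 0 ≤ d * (A * M * w) := by positivity
      nlinarith
    have q0 : ∀ k ≤ 1, BD (dS k Q s ψ) (dS k R s ψ) (A * M * w) (A * (N + d * M) * w) :=
      fun k hk => ⟨supQ k hk s, supR k hk s, (supD k hk s).trans hκD⟩
    have q1 : ∀ j < 4, BD (dS j Q s ψ) (dS j R s ψ) H J := fun j hj => ⟨HQ j hj, HR j hj, HD j hj⟩
    have := nl_bounds (P := P) (d := d) (M := A * M * w) (κ := A * (N + d * M) * w) (H := H) (J := J)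
      (l := l1) (l' := l2) (p := p s) (p1 := deriv p s) (p2 := deriv (deriv p) s)
      (Q := dS 0 Q s ψ) (R := dS 0 R s ψ) (b := b s) (b' := b' s)
      hPone hd0 (by positivity) (by nlinarith) (by positivity) H0 J0 hdMw (by linarith)
      ⟨by rw [abs_of_nonneg l1p]; exact hl1, by rw [abs_of_nonneg l2p]; exact hl2, hd⟩
      (bP0 s) ((hb1 s).trans (by linarith)) ((hb2 s).trans (by linarith))
      (q0 0 (by norm_num)) (q0 1 le_rfl) (q1 0 (by norm_num)) (q1 1 (by norm_num))
      (q1 2 (by norm_num)) (q1 3 (by norm_num)) c1 c2 c1' c2' (by rw [z0]; exact c3)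
      (by rw [z0]; exact c3')
    rw [← hK] at this
    simp only [z0] at this
    exact this
  constructor
  · intro s ψ hψ
    obtain ⟨-, h2, -, -⟩ := core s ψ hψ _ _ _ _ rfl rfl rfl rfl
    refine h2.trans ?_
    have hpos : 0 < 1 + ψ := by linarith
    have e : K * (A * (N + d * M) * ((1 + ψ) ^ 50)⁻¹ * (A * M * ((1 + ψ) ^ 50)⁻¹))
        = K * A ^ 2 * (M * (N + d * M)) * (1 + ψ) ^ (-100 : ℤ) := by
      have e1 : (1 + ψ) ^ (-100 : ℤ) = ((1 + ψ) ^ 50)⁻¹ * ((1 + ψ) ^ 50)⁻¹ := by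
        rw [← mul_inv, ← pow_add, zpow_neg]; norm_cast
      rw [e1]; ring
    rw [e]
    refine mul_le_mul_of_nonneg_right (mul_le_mul_of_nonneg_right ?_ (by positivity))
      (zpow_nonneg hpos.le _)
    have : 0 ≤ 1000 * K ^ 2 * A ^ 2 := by positivity
    linarith
  · intro k hk
    have key := E_lin4 (L := L) (h := dS k F) (u := Q) (v := R) (w := fun s ψ => Q s ψ - R s ψ)
      (hF.dS_k k).continuous
      (K ^ 2 * (8 * (A * (N + d * M)) ^ 2 * 8)) (K ^ 2 * (2 * (A * M) ^ 2 * 4)) fQ fR fD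
      (by positivity) (by positivity) ?_
    · refine ⟨key.1, key.2.trans ?_⟩
      have a1 : XX L Q + XX L R ≤ 2 * M ^ 2 := by linarith
      have a2 := mul_le_mul_of_nonneg_left a1
        (by positivity : 0 ≤ K ^ 2 * (8 * (A * (N + d * M)) ^ 2 * 8))
      have a3 := mul_le_mul_of_nonneg_left xD (by positivity : 0 ≤ K ^ 2 * (2 * (A * M) ^ 2 * 4))
      have hN2 : N ^ 2 ≤ (N + d * M) ^ 2 := pow_le_pow_left₀ hN (by
        have : 0 ≤ d * M := by positivity
        linarith) 2
      have a4 := mul_le_mul_of_nonneg_left hN2 (by positivity : 0 ≤ K ^ 2 * (2 * (A * M) ^ 2 * 4))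
      have a5 : 0 ≤ K * A ^ 2 * (M * (N + d * M)) ^ 2 := by positivity
      have a6 : 0 ≤ K ^ 2 * A ^ 2 * (M * (N + d * M)) ^ 2 := by positivity
      nlinarith
    · intro s _ ψ hψ
      obtain ⟨h0, -, h1, h2⟩ := core s ψ hψ _ _ _ _ rfl rfl rfl rfl
      have hx : |dS k F s ψ| ≤ K * (A * (N + d * M) * ((1 + ψ) ^ 50)⁻¹ *
          ∑ j ∈ Finset.range 4, (|dS j Q s ψ| + |dS j R s ψ|) +
          A * M * ((1 + ψ) ^ 50)⁻¹ * (∑ j ∈ Finset.range 4, |dS j (fun s ψ => Q s ψ - R s ψ) s ψ|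
            + d * ∑ j ∈ Finset.range 4, (|dS j Q s ψ| + |dS j R s ψ|))) := by
        interval_cases k
        · rw [dS_zero]; exact h0
        · exact h1
        · exact h2
      clear h0 h1 h2
      have hw1 : ((1 + ψ) ^ 50)⁻¹ ≤ 1 := inv_le_one_of_one_le₀ (one_le_pow₀ (by linarith))
      have S0 : 0 ≤ ∑ j ∈ Finset.range 4, |dS j (fun s ψ => Q s ψ - R s ψ) s ψ| :=
        Finset.sum_nonneg fun j _ => abs_nonneg _
      have H0 : 0 ≤ ∑ j ∈ Finset.range 4, (|dS j Q s ψ| + |dS j R s ψ|) :=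
        Finset.sum_nonneg fun j _ => by positivity
      have := E_alg (kh := A * (N + d * M)) (mh := A * M) hx hKpos.le H0 S0 rfl
        (mul_le_of_le_one_right (by positivity) hw1) (mul_le_of_le_one_right (by positivity) hw1)
        hd0 (by have : 0 ≤ A * N := by positivity
                nlinarith)
      refine this.trans ?_
      have sH : (∑ j ∈ Finset.range 4, (|dS j Q s ψ| + |dS j R s ψ|)) ^ 2 ≤
          8 * ∑ j ∈ Finset.range 4, ((dS j Q s ψ) ^ 2 + (dS j R s ψ) ^ 2) := by
        have h1 := sq_sum_le_card_mul_sum_sq (s := Finset.range 4)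
          (f := fun j => |dS j Q s ψ| + |dS j R s ψ|)
        rw [Finset.card_range] at h1
        have h2 : ∑ j ∈ Finset.range 4, (|dS j Q s ψ| + |dS j R s ψ|) ^ 2 ≤
          ∑ j ∈ Finset.range 4, 2 * ((dS j Q s ψ) ^ 2 + (dS j R s ψ) ^ 2) :=
          Finset.sum_le_sum fun j _ => by
            rw [← sq_abs (dS j Q s ψ), ← sq_abs (dS j R s ψ)]
            nlinarith [sq_nonneg (|dS j Q s ψ| - |dS j R s ψ|)]
        rw [← Finset.mul_sum] at h2
        push_cast at h1
        linarith
      have sS : (∑ j ∈ Finset.range 4, |dS j (fun s ψ => Q s ψ - R s ψ) s ψ|) ^ 2 ≤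
          4 * ∑ j ∈ Finset.range 4, (dS j (fun s ψ => Q s ψ - R s ψ) s ψ) ^ 2 := by
        have h1 := sq_sum_le_card_mul_sum_sq (s := Finset.range 4)
          (f := fun j => |dS j (fun s ψ => Q s ψ - R s ψ) s ψ|)
        rw [Finset.card_range] at h1
        simp only [sq_abs] at h1
        push_cast at h1
        exact h1
      have t1 := mul_le_mul_of_nonneg_left sH (by positivity : 0 ≤ 8 * (A * (N + d * M)) ^ 2)
      have t2 := mul_le_mul_of_nonneg_left sS (by positivity : 0 ≤ 2 * (A * M) ^ 2)
      have t3 := mul_le_mul_of_nonneg_left (add_le_add t1 t2) (sq_nonneg K)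
      refine t3.trans (le_of_eq ?_)
      clear * -
      simp only [Finset.sum_range_succ, Finset.sum_range_zero]
      ring

lemma exp_Fi {L : ℝ} : Fi L (fun _ ψ => Real.exp (-ψ)) := by
  rw [Fi_iff]
  obtain ⟨K, hK⟩ : ∃ K : ℝ, K = (Nat.factorial 100 : ℝ) := ⟨_, rfl⟩
  have hKpos : 0 < K := by rw [hK]; exact_mod_cast Nat.factorial_pos 100
  have hb : ∀ x : ℝ, 0 < x → (1 + x) ^ 100 * Real.exp (-x) ^ 2 ≤ K * Real.exp 1 * Real.exp (-x) := by
    intro x hx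
    have h1 := Real.pow_div_factorial_le_exp (1 + x) (by linarith) 100
    rw [← hK, div_le_iff₀ hKpos] at h1
    have h2 := mul_le_mul_of_nonneg_right h1 (sq_nonneg (Real.exp (-x)))
    refine h2.trans (le_of_eq ?_)
    have h3 : Real.exp (1 + x) * Real.exp (-x) = Real.exp 1 := by
      rw [← Real.exp_add]; ring_nf
    calc Real.exp (1 + x) * K * Real.exp (-x) ^ 2
        = K * (Real.exp (1 + x) * Real.exp (-x)) * Real.exp (-x) := by
          generalize Real.exp (1 + x) = a
          generalize Real.exp (-x) = b
          ring
      _ = _ := by rw [h3]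
  have hi : IntegrableOn (fun p : ℝ × ℝ => (1:ℝ) * (K * Real.exp 1 * Real.exp (-p.2))) (reg L) := by
    have h1 : Integrable (fun _ : ℝ => (1:ℝ)) (volume.restrict (Ioc 0 L)) :=
      integrable_const _
    have h2 : Integrable (fun x : ℝ => K * Real.exp 1 * Real.exp (-x)) (volume.restrict (Ioi 0)) :=
      (integrableOn_exp_neg_Ioi 0).const_mul _
    have h3 := Integrable.mul_prod h1 h2
    rw [Measure.prod_restrict] at h3
    exact h3
  refine integrable_of_dom (by fun_prop) hi fun p hp => ?_
  have : (0:ℝ) < p.2 := hp.2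
  rw [abs_of_nonneg (by positivity), one_mul]
  exact hb _ this

lemma prof_dS {c : ℝ → ℝ} (hc : ContDiff ℝ (⊤ : ℕ∞) c) :
    dS 1 (fun s ψ => c s * Real.exp (-ψ)) = fun s ψ => deriv c s * Real.exp (-ψ) := by
  funext s ψ
  rw [dS_one_apply]
  exact ((hc.differentiable (by simp) s).hasDerivAt.mul_const _).deriv

lemma prof_dPsi {c : ℝ → ℝ} :
    dPsi 1 (fun s ψ => c s * Real.exp (-ψ)) = fun s ψ => (-c s) * Real.exp (-ψ) := by
  funext s ψ
  rw [dPsi_one_apply]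
  have := ((hasDerivAt_neg ψ).exp.const_mul (c s)).deriv
  rw [this]; ring

lemma prof_dPsi_two {c : ℝ → ℝ} :
    dPsi 2 (fun s ψ => c s * Real.exp (-ψ)) = fun s ψ => c s * Real.exp (-ψ) := by
  rw [dPsi_two, prof_dPsi, prof_dPsi]; simp

lemma prof_smooth {c : ℝ → ℝ} (hc : ContDiff ℝ (⊤ : ℕ∞) c) :
    Smooth2 (fun s ψ => c s * Real.exp (-ψ)) :=
  (Smooth2.of_s hc).mul (Smooth2.of_psi (q := fun ψ => Real.exp (-ψ))
    (Real.contDiff_exp.comp contDiff_neg))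

lemma prof_E {L : ℝ} {c : ℝ → ℝ} (hc : Continuous c) {P β : ℝ} (hb : ∀ s, |c s| ≤ P * |β|) :
    Fi L (fun s ψ => c s * Real.exp (-ψ)) ∧
    E L (fun s ψ => c s * Real.exp (-ψ)) ≤ (P ^ 2 * E L (fun _ ψ => Real.exp (-ψ))) * β ^ 2 := by
  have := E_lin1 (L := L) (h := fun s ψ => c s * Real.exp (-ψ)) (by fun_prop) (P ^ 2 * β ^ 2)
    exp_Fi (fun s _ ψ _ => by
      rw [mul_pow, ← sq_abs (c s), ← sq_abs β, ← mul_pow P]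
      exact mul_le_mul_of_nonneg_right (pow_le_pow_left₀ (abs_nonneg _) (hb s) 2) (sq_nonneg _))
  refine ⟨this.1, this.2.trans (le_of_eq (by ring))⟩

lemma prof_XX {L : ℝ} (hL : 0 < L) {c : ℝ → ℝ} (hc : ContDiff ℝ (⊤ : ℕ∞) c) (hcp : Periodic c L) :
    ∃ K > 0, ∀ β : ℝ, XF L (fun s ψ => (β * c s) * Real.exp (-ψ)) ∧
      XX L (fun s ψ => (β * c s) * Real.exp (-ψ)) ≤ K * β ^ 2 := by
  have hc1 := smooth_deriv hc
  have hc2 := smooth_deriv hc1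
  have hc3 := smooth_deriv hc2
  have p1 := periodic_deriv hcp
  have p2 := periodic_deriv p1
  have p3 := periodic_deriv p2
  obtain ⟨P0, hP0, b0⟩ := periodic_bdd hL hc.continuous hcp
  obtain ⟨P1, hP1, b1⟩ := periodic_bdd hL hc1.continuous p1
  obtain ⟨P2, hP2, b2⟩ := periodic_bdd hL hc2.continuous p2
  obtain ⟨P3, hP3, b3⟩ := periodic_bdd hL hc3.continuous p3
  obtain ⟨e, he⟩ : ∃ e, e = E L (fun _ ψ => Real.exp (-ψ)) := ⟨_, rfl⟩
  have he0 : 0 ≤ e := by rw [he]; exact E_nonneg _ _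
  refine ⟨12 * ((P0 ^ 2 + P1 ^ 2 + P2 ^ 2 + P3 ^ 2) * e) + 1, by positivity, fun β => ?_⟩
  have key : ∀ (a : ℝ → ℝ) (P : ℝ), ContDiff ℝ (⊤ : ℕ∞) a → (∀ s, |a s| ≤ P) →
      ∀ σ : ℝ, |σ| = |β| →
      Fi L (fun s ψ => (σ * a s) * Real.exp (-ψ)) ∧
      E L (fun s ψ => (σ * a s) * Real.exp (-ψ)) ≤ P ^ 2 * e * β ^ 2 := by
    intro a P ha hb σ hσ
    rw [he]
    refine prof_E (c := fun s => σ * a s) (by have := ha.continuous; fun_prop) fun s => ?_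
    rw [abs_mul, hσ, mul_comm]
    exact mul_le_mul_of_nonneg_right (hb s) (abs_nonneg _)
  have hds : ∀ (a : ℝ → ℝ), ContDiff ℝ (⊤ : ℕ∞) a →
      dS 1 (fun s ψ => (β * a s) * Real.exp (-ψ)) = fun s ψ => (β * deriv a s) * Real.exp (-ψ) := by
    intro a ha
    rw [prof_dS (c := fun s => β * a s) (contDiff_const.mul ha)]
    funext s ψ
    rw [deriv_const_mul _ (ha.differentiable (by simp) s)]
  have d1 := hds c hc
  have d2 : dS 2 (fun s ψ => (β * c s) * Real.exp (-ψ)) =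
      fun s ψ => (β * deriv (deriv c) s) * Real.exp (-ψ) := by
    rw [dS_succ 1, d1, hds _ hc1]
  have d3 : dS 3 (fun s ψ => (β * c s) * Real.exp (-ψ)) =
      fun s ψ => (β * deriv (deriv (deriv c)) s) * Real.exp (-ψ) := by
    rw [dS_succ 2, d2, hds _ hc2]
  have hp1 : ∀ a : ℝ → ℝ, dPsi 1 (fun s ψ => (β * a s) * Real.exp (-ψ)) =
      fun s ψ => ((-β) * a s) * Real.exp (-ψ) := by
    intro a; rw [prof_dPsi (c := fun s => β * a s)]; funext s ψ; ring
  have hp2 : ∀ a : ℝ → ℝ, dPsi 2 (fun s ψ => (β * a s) * Real.exp (-ψ)) =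
      fun s ψ => (β * a s) * Real.exp (-ψ) := fun a => prof_dPsi_two (c := fun s => β * a s)
  have k0 := key c P0 hc b0 β rfl
  have k1 := key _ P1 hc1 b1 β rfl
  have k2 := key _ P2 hc2 b2 β rfl
  have k3 := key _ P3 hc3 b3 β rfl
  have n0 := key c P0 hc b0 (-β) (abs_neg β)
  have n1 := key _ P1 hc1 b1 (-β) (abs_neg β)
  have n2 := key _ P2 hc2 b2 (-β) (abs_neg β)
  constructor
  · intro k hk
    interval_cases k
    · rw [dS_zero, hp1, hp2, d1]; exact ⟨k0.1, k1.1, n0.1, k0.1⟩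
    · rw [d1, hp1, hp2, d2]; exact ⟨k1.1, k2.1, n1.1, k1.1⟩
    · rw [d2, hp1, hp2, d3]; exact ⟨k2.1, k3.1, n2.1, k2.1⟩
  · unfold XX
    simp only [Finset.sum_range_succ, Finset.sum_range_zero, zero_add, Nat.reduceAdd]
    rw [d1, d2, d3, dS_zero, hp1, hp2, hp1, hp2, hp1, hp2]
    have hβ := sq_nonneg β
    have q0 : 0 ≤ P0 ^ 2 * e * β ^ 2 := by positivity
    have q1 : 0 ≤ P1 ^ 2 * e * β ^ 2 := by positivity
    have q2 : 0 ≤ P2 ^ 2 * e * β ^ 2 := by positivity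
    have q3 : 0 ≤ P3 ^ 2 * e * β ^ 2 := by positivity
    have := k0.2; have := k1.2; have := k2.2; have := k3.2
    have := n0.2; have := n1.2; have := n2.2
    linarith

/-- multiplication by a smooth periodic coefficient -/
lemma coef_est {L : ℝ} (hL : 0 < L) {q : ℝ → ℝ} (hq : ContDiff ℝ (⊤ : ℕ∞) q) (hqp : Periodic q L) :
    ∃ K > 0, ∀ (c : ℝ) (W : ℝ → ℝ → ℝ), Smooth2 W → Fi L W → Fi L (dS 1 W) → Fi L (dS 2 W) →
      ∀ X, E L W ≤ X → E L (dS 1 W) ≤ X → E L (dS 2 W) ≤ X → ∀ k ≤ 2,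
      Fi L (dS k (fun s ψ => c * q s * W s ψ)) ∧
      E L (dS k (fun s ψ => c * q s * W s ψ)) ≤ K * (c ^ 2 * X) := by
  have hc1 := smooth_deriv hq
  have hc2 := smooth_deriv hc1
  have p1 := periodic_deriv hqp
  have p2 := periodic_deriv p1
  obtain ⟨P0, hP0, b0⟩ := periodic_bdd hL hq.continuous hqp
  obtain ⟨P1, hP1, b1⟩ := periodic_bdd hL hc1.continuous p1
  obtain ⟨P2, hP2, b2⟩ := periodic_bdd hL hc2.continuous p2
  refine ⟨12 * (P0 ^ 2 + P1 ^ 2 + P2 ^ 2) , by positivity, ?_⟩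
  intro c W hW f0 f1 f2 X x0 x1 x2 k hk
  have hX : 0 ≤ X := (E_nonneg _ _).trans x0
  have sc : ∀ {a P x : ℝ}, |a| ≤ P → (c * a * x) ^ 2 ≤ c ^ 2 * P ^ 2 * x ^ 2 := by
    intro a P x h
    have : a ^ 2 ≤ P ^ 2 := by rw [← sq_abs]; exact pow_le_pow_left₀ (abs_nonneg _) h 2
    have h2 := mul_le_mul_of_nonneg_left this (by positivity : 0 ≤ c ^ 2 * x ^ 2)
    nlinarith
  have sm : Smooth2 (fun s ψ => c * q s * W s ψ) :=
    (Smooth2.of_s (q := fun s => c * q s) (contDiff_const.mul hq)).mul hW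
  have e1 : dS 1 (fun s ψ => c * q s * W s ψ) = fun s ψ => c * deriv q s * W s ψ + c * q s * dS 1 W s ψ :=
    dS_one_coef hq hW
  have e2 : dS 2 (fun s ψ => c * q s * W s ψ) = fun s ψ => (c * deriv (deriv q) s * W s ψ +
      c * deriv q s * dS 1 W s ψ) + (c * deriv q s * dS 1 W s ψ + c * q s * dS 2 W s ψ) := by
    rw [dS_succ 1, e1, dS_one_add ((Smooth2.of_s (q := fun s => c * deriv q s)
      (contDiff_const.mul hc1)).mul hW) ((Smooth2.of_s (q := fun s => c * q s)
      (contDiff_const.mul hq)).mul hW.dS_one), dS_one_coef hc1 hW, dS_one_coef hq hW.dS_one,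
      dS_succ 1 W]
  have c0 : 0 ≤ c ^ 2 * P0 ^ 2 * X := by positivity
  have c1 : 0 ≤ c ^ 2 * P1 ^ 2 * X := by positivity
  have c2 : 0 ≤ c ^ 2 * P2 ^ 2 * X := by positivity
  have m0 : ∀ {Y}, Y ≤ X → c ^ 2 * P0 ^ 2 * Y ≤ c ^ 2 * P0 ^ 2 * X := fun h =>
    mul_le_mul_of_nonneg_left h (by positivity)
  have m1 : ∀ {Y}, Y ≤ X → c ^ 2 * P1 ^ 2 * Y ≤ c ^ 2 * P1 ^ 2 * X := fun h =>
    mul_le_mul_of_nonneg_left h (by positivity)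
  have m2 : ∀ {Y}, Y ≤ X → c ^ 2 * P2 ^ 2 * Y ≤ c ^ 2 * P2 ^ 2 * X := fun h =>
    mul_le_mul_of_nonneg_left h (by positivity)
  interval_cases k
  · have := E_lin1 (L := L) (sm.dS_k 0).continuous (c ^ 2 * P0 ^ 2) f0 (fun s _ ψ _ => by
      rw [dS_zero]; exact sc (b0 s))
    refine ⟨this.1, this.2.trans ?_⟩
    have := m0 x0
    linarith
  · have := E_lin2 (L := L) (sm.dS_k 1).continuous (2 * (c ^ 2 * P1 ^ 2)) (2 * (c ^ 2 * P0 ^ 2))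
      f0 f1 (fun s _ ψ _ => by
      rw [e1]
      have h1 := sc (x := W s ψ) (b1 s)
      have h2 := sc (x := dS 1 W s ψ) (b0 s)
      have h3 := sq_nonneg (c * deriv q s * W s ψ - c * q s * dS 1 W s ψ)
      simp only []
      nlinarith)
    refine ⟨this.1, this.2.trans ?_⟩
    have := m1 x0
    have := m0 x1
    linarith
  · have := E_lin3 (L := L) (sm.dS_k 2).continuous (3 * (c ^ 2 * P2 ^ 2)) (12 * (c ^ 2 * P1 ^ 2))
      (3 * (c ^ 2 * P0 ^ 2))
      f0 f1 f2 (fun s _ ψ _ => by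
      rw [e2]
      have h1 := sc (x := W s ψ) (b2 s)
      have h2 := sc (x := dS 1 W s ψ) (b1 s)
      have h3 := sc (x := dS 2 W s ψ) (b0 s)
      simp only []
      generalize c * deriv (deriv q) s * W s ψ = A at *
      generalize c * deriv q s * dS 1 W s ψ = B at *
      generalize c * q s * dS 2 W s ψ = D at *
      nlinarith [sq_nonneg (A - 2 * B), sq_nonneg (A - D), sq_nonneg (2 * B - D)])
    refine ⟨this.1, this.2.trans ?_⟩
    have := m2 x0
    have := m1 x1
    have := m0 x2
    linarith

lemma zero_mode_E {L : ℝ} (hL : 0 < L) {q : ℝ → ℝ} (hq : ContDiff ℝ (⊤ : ℕ∞) q) {P : ℝ}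
    (hb : ∀ s, |q s| ≤ P) {h : ℝ → ℝ → ℝ} (hh : Smooth2 h) (hF : Fi L h) :
    IntegrableOn (fun ψ => wd 1 ψ * (SL L (fun s ψ => q s * h s ψ) ψ) ^ 2) (Ioi 0) ∧
    ∫ ψ in Ioi 0, wd 1 ψ * (SL L (fun s ψ => q s * h s ψ) ψ) ^ 2 ≤ L * P ^ 2 * E L h := by
  have sm : Smooth2 (fun s ψ => q s * h s ψ) := (Smooth2.of_s hq).mul hh
  obtain ⟨i1, i2⟩ := fubini hL (Φ := fun s ψ => (1 + ψ) ^ 100 * (h s ψ) ^ 2) ((Fi_iff L h).1 hF)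
  have hS : ∀ ψ, SL L (fun s ψ => (1 + ψ) ^ 100 * (h s ψ) ^ 2) ψ =
      (1 + ψ) ^ 100 * ∫ s in (0:ℝ)..L, (h s ψ) ^ 2 := by
    intro ψ; unfold SL; rw [intervalIntegral.integral_const_mul]
  have hle : ∀ ψ ∈ Ioi (0:ℝ), wd 1 ψ * (SL L (fun s ψ => q s * h s ψ) ψ) ^ 2 ≤
      L * P ^ 2 * SL L (fun s ψ => (1 + ψ) ^ 100 * (h s ψ) ^ 2) ψ := by
    intro ψ hψ
    have hψ0 : (0:ℝ) < ψ := hψ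
    rw [hS, wd_one]
    have h1 := cs_one hL (sm.cont_s ψ)
    have h2 : ∫ s in (0:ℝ)..L, (q s * h s ψ) ^ 2 ≤ ∫ s in (0:ℝ)..L, P ^ 2 * (h s ψ) ^ 2 := by
      have := hh.cont_s ψ
      have := hq.continuous
      refine intervalIntegral.integral_mono_on hL.le (Continuous.intervalIntegrable (by fun_prop) _ _)
        (Continuous.intervalIntegrable (by fun_prop) _ _) fun s _ => ?_
      rw [mul_pow]
      refine mul_le_mul_of_nonneg_right ?_ (sq_nonneg _)
      rw [← sq_abs]; exact pow_le_pow_left₀ (abs_nonneg _) (hb s) 2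
    rw [intervalIntegral.integral_const_mul] at h2
    have h3 : (SL L (fun s ψ => q s * h s ψ) ψ) ^ 2 ≤ L * (P ^ 2 * ∫ s in (0:ℝ)..L, (h s ψ) ^ 2) :=
      h1.trans (mul_le_mul_of_nonneg_left h2 hL.le)
    have h4 := mul_le_mul_of_nonneg_left h3 (by positivity : (0:ℝ) ≤ (1 + ψ) ^ 100)
    refine h4.trans (le_of_eq ?_)
    generalize (1 + ψ) ^ 100 = w
    ring
  have hi : IntegrableOn (fun ψ => wd 1 ψ * (SL L (fun s ψ => q s * h s ψ) ψ) ^ 2) (Ioi 0) := by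
    refine Integrable.mono' (i1.const_mul (L * P ^ 2)) ?_ ?_
    · exact (Continuous.mul (wd_cont 1) ((SL_continuous L sm).pow 2)).aestronglyMeasurable
    · refine (ae_restrict_iff' measurableSet_Ioi).2 (Eventually.of_forall fun ψ hψ => ?_)
      have hψ0 : (0:ℝ) < ψ := hψ
      rw [Real.norm_eq_abs, abs_of_nonneg (mul_nonneg (wd_pos zero_le_one hψ0.le).le (sq_nonneg _))]
      exact hle ψ hψ
  refine ⟨hi, ?_⟩
  refine (setIntegral_mono_on hi (i1.const_mul (L * P ^ 2)) measurableSet_Ioi hle).trans ?_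
  rw [integral_const_mul, ← i2, E_eq]

/-- decay of the zero mode of the difference -/
lemma zero_mode_v {L : ℝ} (hL : 0 < L) {q : ℝ → ℝ} (hq : ContDiff ℝ (⊤ : ℕ∞) q)
    (hqp : Periodic q L) {ω1 ω2 : ℝ} {U V : ℝ → ℝ → ℝ} (hU : Smooth2 U) (hV : Smooth2 V)
    (pU : PeriodicS L U) (pV : PeriodicS L V) (fU : XF L U) (fV : XF L V) {K : ℝ} (hK : 0 ≤ K)
    (hF : ∀ s, ∀ ψ > 0, |Gop ω1 q U s ψ - Gop ω2 q V s ψ| ≤ K * (1 + ψ) ^ (-100 : ℤ)) :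
    IntegrableOn (fun ψ => wd 1 ψ *
      (SL L (fun s ψ => q s * (ω1 * U s ψ - ω2 * V s ψ)) ψ) ^ 2) (Ioi 0) ∧
    ∫ ψ in Ioi 0, wd 1 ψ * (SL L (fun s ψ => q s * (ω1 * U s ψ - ω2 * V s ψ)) ψ) ^ 2
      ≤ 4 * (L * K) ^ 2 := by
  have hcU : Smooth2 (fun s ψ => (ω1 * q s) * U s ψ) :=
    (Smooth2.of_s (q := fun s => ω1 * q s) (contDiff_const.mul hq)).mul hU
  have hcV : Smooth2 (fun s ψ => (ω2 * q s) * V s ψ) :=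
    (Smooth2.of_s (q := fun s => ω2 * q s) (contDiff_const.mul hq)).mul hV
  have eH : (fun s ψ => q s * (ω1 * U s ψ - ω2 * V s ψ)) =
      fun s ψ => (ω1 * q s) * U s ψ - (ω2 * q s) * V s ψ := by funext s ψ; ring
  obtain ⟨H, hH⟩ : ∃ H : ℝ → ℝ → ℝ, H = fun s ψ => q s * (ω1 * U s ψ - ω2 * V s ψ) := ⟨_, rfl⟩
  rw [← hH]
  have sH : Smooth2 H := by rw [hH, eH]; exact hcU.sub hcV
  -- second derivative
  have eH2 : ∀ s ψ, dPsi 2 H s ψ = (ω1 * q s) * dPsi 2 U s ψ - (ω2 * q s) * dPsi 2 V s ψ := by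
    intro s ψ
    have hc : ∀ (c : ℝ) (W : ℝ → ℝ → ℝ), Smooth2 W →
        dPsi 1 (fun s ψ => (c * q s) * W s ψ) = fun s ψ => (c * q s) * dPsi 1 W s ψ := by
      intro c W hW; funext s ψ
      rw [dPsi_one_apply]
      exact ((hW.hasPsi s ψ).const_mul (c * q s)).deriv
    rw [hH, eH, dPsi_two_sub hcU hcV, dPsi_two, dPsi_two, hc _ _ hU, hc _ _ hU.dPsi_one, hc _ _ hV,
      hc _ _ hV.dPsi_one, dPsi_two U, dPsi_two V]
  have h1 := fun ψ => SL_hasDerivAt L sH ψ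
  have h2 := fun ψ => SL_hasDerivAt L sH.dPsi_one ψ
  rw [← dPsi_two] at h2
  have h3 : ∀ x > 0, |SL L (dPsi 2 H) x| ≤ (L * K) * (1 + x) ^ (-100 : ℤ) := by
    intro x hx
    have i1 := SL_dS L hU pU x
    have i2 := SL_dS L hV pV x
    have e : SL L (dPsi 2 H) x =
        SL L (dS 1 U) x - SL L (dS 1 V) x - ∫ s in (0:ℝ)..L, (Gop ω1 q U s x - Gop ω2 q V s x) := by
      unfold SL
      have c1 := (Gop_smooth (ω := ω1) hq hU).cont_s x
      have c2 := (Gop_smooth (ω := ω2) hq hV).cont_s x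
      have c3 := hU.dS_one.cont_s x
      have c4 := hV.dS_one.cont_s x
      have c5 : Continuous (fun s => dS 1 U s x - dS 1 V s x) := c3.sub c4
      have c6 : Continuous (fun s => Gop ω1 q U s x - Gop ω2 q V s x) := c1.sub c2
      rw [← intervalIntegral.integral_sub (c3.intervalIntegrable _ _) (c4.intervalIntegrable _ _),
        ← intervalIntegral.integral_sub (c5.intervalIntegrable _ _)
          (c6.intervalIntegrable _ _)]
      congr 1; funext s
      rw [eH2]; simp only [Gop]; ring
    rw [e, i1, i2, sub_zero, zero_sub, abs_neg, ← Real.norm_eq_abs]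
    have := intervalIntegral.norm_integral_le_of_norm_le_const (a := 0) (b := L)
      (f := fun s => Gop ω1 q U s x - Gop ω2 q V s x) (C := K * (1 + x) ^ (-100 : ℤ))
      (fun s _ => by rw [Real.norm_eq_abs]; exact hF s x hx)
    rw [sub_zero, abs_of_pos hL] at this
    linarith
  -- limit at infinity
  have hl : Tendsto (SL L H) atTop (nhds 0) := by
    obtain ⟨P, hP, hb⟩ := periodic_bdd hL hq.continuous hqp
    obtain ⟨N1, hN1⟩ : ∃ N, N = Real.sqrt (XX L U) := ⟨_, rfl⟩
    obtain ⟨N2, hN2⟩ : ∃ N, N = Real.sqrt (XX L V) := ⟨_, rfl⟩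
    have n1 : 0 ≤ N1 := by rw [hN1]; exact Real.sqrt_nonneg _
    have n2 : 0 ≤ N2 := by rw [hN2]; exact Real.sqrt_nonneg _
    have hx1 : XX L U ≤ N1 ^ 2 := by rw [hN1, Real.sq_sqrt (XX_nonneg _ _)]
    have hx2 : XX L V ≤ N2 ^ 2 := by rw [hN2, Real.sq_sqrt (XX_nonneg _ _)]
    obtain ⟨A, hA⟩ : ∃ A, A = cA L := ⟨_, rfl⟩
    have hA1 : 1 ≤ A := by rw [hA]; exact cA_pos L
    have hbd : ∀ ψ ≥ (0:ℝ), ‖SL L H ψ‖ ≤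
        (L * (P * (|ω1| * (A * N1) + |ω2| * (A * N2)))) * (1 + ψ)⁻¹ := by
      intro ψ hψ
      have hw : ((1 + ψ) ^ 50)⁻¹ ≤ (1 + ψ)⁻¹ :=
        inv_anti₀ (by linarith) (le_self_pow₀ (by linarith) (by norm_num))
      have := intervalIntegral.norm_integral_le_of_norm_le_const (a := 0) (b := L)
        (f := fun s => H s ψ) (C := P * (|ω1| * (A * N1) + |ω2| * (A * N2)) * (1 + ψ)⁻¹)
        (fun s _ => by
          have a1 := sup_XX' hL hU pU fU (k := 0) (by norm_num) s hψ n1 hx1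
          have a2 := sup_XX' hL hV pV fV (k := 0) (by norm_num) s hψ n2 hx2
          rw [dS_zero, ← hA] at a1 a2
          have a1' := a1.trans (mul_le_mul_of_nonneg_left hw (by positivity))
          have a2' := a2.trans (mul_le_mul_of_nonneg_left hw (by positivity))
          rw [hH, Real.norm_eq_abs, abs_mul]
          have a3 : |ω1 * U s ψ - ω2 * V s ψ| ≤ (|ω1| * (A * N1) + |ω2| * (A * N2)) * (1 + ψ)⁻¹ := by
            refine (abs_sub _ _).trans ?_
            rw [abs_mul, abs_mul]
            have b1 := mul_le_mul_of_nonneg_left a1' (abs_nonneg ω1)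
            have b2 := mul_le_mul_of_nonneg_left a2' (abs_nonneg ω2)
            linarith
          rw [mul_assoc]
          exact mul_le_mul (hb s) a3 (abs_nonneg _) hP.le)
      rw [sub_zero, abs_of_pos hL] at this
      unfold SL
      linarith
    refine squeeze_zero_norm' ((eventually_ge_atTop 0).mono hbd) ?_
    have : Tendsto (fun ψ : ℝ => (1 + ψ)⁻¹) atTop (nhds 0) :=
      tendsto_inv_atTop_zero.comp (tendsto_atTop_add_const_left _ 1 tendsto_id)
    simpa using this.const_mul (L * (P * (|ω1| * (A * N1) + |ω2| * (A * N2))))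
  exact decay_int (SL_continuous L sH) fun x hx =>
    decay_ode h1 h2 (by positivity) h3 hl (le_of_lt hx)

lemma sq3 (a b c : ℝ) : (a + b - c) ^ 2 ≤ 3 * a ^ 2 + 3 * b ^ 2 + 3 * c ^ 2 := by
  nlinarith [sq_nonneg (a - b), sq_nonneg (a + c), sq_nonneg (b + c)]

lemma int3 {f g h : ℝ → ℝ} (a b c : ℝ) (hf : IntegrableOn f (Ioi 0)) (hg : IntegrableOn g (Ioi 0))
    (hh : IntegrableOn h (Ioi 0)) : ∫ x in Ioi (0:ℝ), (a * f x + b * g x + c * h x) =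
      a * (∫ x in Ioi (0:ℝ), f x) + b * (∫ x in Ioi (0:ℝ), g x) + c * (∫ x in Ioi (0:ℝ), h x) := by
  have h1 : Integrable (fun x => a * f x) (volume.restrict (Ioi 0)) := hf.const_mul a
  have h2 : Integrable (fun x => b * g x) (volume.restrict (Ioi 0)) := hg.const_mul b
  have h3 : Integrable (fun x => c * h x) (volume.restrict (Ioi 0)) := hh.const_mul c
  have h4 : Integrable (fun x => a * f x + b * g x) (volume.restrict (Ioi 0)) := h1.add h2
  rw [integral_add h4 h3, integral_add h1 h2, integral_const_mul, integral_const_mul,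
    integral_const_mul]

lemma core_alg {l Cn Kc Kp LL P S T b : ℝ} (hl : 0 ≤ l) (hCn : 0 ≤ Cn) (hKc : 0 ≤ Kc) (hKp : 0 ≤ Kp)
    (hLL : 0 ≤ LL) (hS : 0 ≤ S) (hT : 0 ≤ T) (hb : 0 ≤ b) {g0 g1 g2 x y : ℝ}
    (h0 : g0 ≤ 4 * (Cn * S) + 4 * (Kc * T) + (4 * (Kp * b) + 4 * (Kc * (4 * (Kp * b)))))
    (h1 : g1 ≤ 4 * (Cn * S) + 4 * (Kc * T) + (4 * (Kp * b) + 4 * (Kc * (4 * (Kp * b)))))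
    (h2 : g2 ≤ 4 * (Cn * S) + 4 * (Kc * T) + (4 * (Kp * b) + 4 * (Kc * (4 * (Kp * b)))))
    (hx : x ≤ l * (g0 + g1 + g2 + (48 * LL ^ 2 * Cn ^ 2 * S + 12 * LL * P ^ 2 * T + 3 * LL * P ^ 2 * (Kp * b))))
    (hy : y ≤ 2 * x + 2 * (Kp * b)) :
    y ≤ (2 * l * (3 * (4 * Cn + 4 * Kc + 4 * Kp + 16 * (Kc * Kp)) + 48 * LL ^ 2 * Cn ^ 2
      + 12 * LL * P ^ 2 + 3 * LL * P ^ 2 * Kp) + 2 * Kp + 1) * (S + T + b) := by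
  obtain ⟨K1, hK1⟩ : ∃ K1, K1 = 3 * (4 * Cn + 4 * Kc + 4 * Kp + 16 * (Kc * Kp)) + 48 * LL ^ 2 * Cn ^ 2
      + 12 * LL * P ^ 2 + 3 * LL * P ^ 2 * Kp := ⟨_, rfl⟩
  rw [← hK1]
  have key : g0 + g1 + g2 + (48 * LL ^ 2 * Cn ^ 2 * S + 12 * LL * P ^ 2 * T + 3 * LL * P ^ 2 * (Kp * b))
      ≤ K1 * (S + T + b) := by
    have t1 : 0 ≤ Kc * S := by positivity
    have t2 : 0 ≤ Kp * S := by positivity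
    have t3 : 0 ≤ Kc * Kp * S := by positivity
    have t4 : 0 ≤ LL * P ^ 2 * S := by positivity
    have t5 : 0 ≤ LL * P ^ 2 * Kp * S := by positivity
    have t6 : 0 ≤ Cn * T := by positivity
    have t7 : 0 ≤ Kp * T := by positivity
    have t8 : 0 ≤ Kc * Kp * T := by positivity
    have t9 : 0 ≤ LL ^ 2 * Cn ^ 2 * T := by positivity
    have s1 : 0 ≤ LL * P ^ 2 * Kp * T := by positivity
    have s2 : 0 ≤ Cn * b := by positivity
    have s3 : 0 ≤ Kc * b := by positivity
    have s4 : 0 ≤ LL ^ 2 * Cn ^ 2 * b := by positivity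
    have s5 : 0 ≤ LL * P ^ 2 * b := by positivity
    rw [hK1]
    linarith
  have h3 := hx.trans (mul_le_mul_of_nonneg_left key hl)
  have u1 : 0 ≤ Kp * S := by positivity
  have u2 : 0 ≤ Kp * T := by positivity
  linarith

set_option maxHeartbeats 1000000 in
lemma core_est {L : ℝ} (hL : 0 < L) {q : ℝ → ℝ} (hq : ContDiff ℝ (⊤ : ℕ∞) q)
    (hqp : Periodic q L) (hqpos : ∀ s, 0 < q s) :
    ∃ C m : ℝ, 0 < C ∧ 0 < m ∧ ∀ ω1 ω2 : ℝ, 1 / 2 ≤ ω1 → ω1 ≤ 2 → 0 < ω2 →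
      (ω1 ^ 2)⁻¹ ≤ 2 → (ω2 ^ 2)⁻¹ ≤ 2 →
      ∀ Q2 Q1 Q0 : ℝ → ℝ → ℝ, Smooth2 Q2 → Smooth2 Q1 → Smooth2 Q0 →
      PeriodicS L Q2 → PeriodicS L Q1 → PeriodicS L Q0 → XF L Q2 → XF L Q1 → XF L Q0 →
      ∀ M N d β : ℝ, 0 ≤ M → M ≤ m → 0 ≤ N → |(ω1 ^ 2)⁻¹ - (ω2 ^ 2)⁻¹| ≤ d → |ω1 - ω2| ≤ d →
      XX L Q2 ≤ M ^ 2 → XX L Q1 ≤ M ^ 2 → XX L (fun s ψ => Q1 s ψ - Q2 s ψ) ≤ N ^ 2 →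
      (∀ s, ∀ ψ > (0:ℝ), dS 1 Q0 s ψ - ω1 * q s * dPsi 2 Q0 s ψ = fNonlin q ω1 Q1 s ψ) →
      (∀ s, ∀ ψ > (0:ℝ), dS 1 Q1 s ψ - ω2 * q s * dPsi 2 Q1 s ψ = fNonlin q ω2 Q2 s ψ) →
      (∀ s, Q0 s 0 - Q1 s 0 = β * (q s) ^ 2) →
      XX L (fun s ψ => Q0 s ψ - Q1 s ψ) ≤ C * ((M * (N + d * M)) ^ 2 + d ^ 2 * M ^ 2 + β ^ 2) := by
  obtain ⟨l, hl, lin⟩ := linear_est hL hq hqp hqpos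
  obtain ⟨Cn, m, hCn, hm, nl⟩ := nonlin_est hL hq hqp hqpos
  have hq2 : ContDiff ℝ (⊤ : ℕ∞) (fun s => (q s) ^ 2) := hq.pow 2
  have hq2p : Periodic (fun s => (q s) ^ 2) L := fun s => by simp only [hqp s]
  obtain ⟨Kp, hKp, prof⟩ := prof_XX hL hq2 hq2p
  obtain ⟨Kc, hKc, coef⟩ := coef_est hL hq hqp
  obtain ⟨P, hP, hb⟩ := periodic_bdd hL hq.continuous hqp
  refine ⟨2 * l * (3 * (4 * Cn + 4 * Kc + 4 * Kp + 16 * (Kc * Kp)) + 48 * L ^ 2 * Cn ^ 2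
      + 12 * L * P ^ 2 + 3 * L * P ^ 2 * Kp) + 2 * Kp + 1, m, by positivity, hm, ?_⟩
  intro ω1 ω2 hω1 hω1' hω2 hi1 hi2 Q2 Q1 Q0 s2 s1 s0 p2 p1 p0 f2 f1 f0 M N d β hM hMm hN hd hd' x2 x1 xN
    pde0 pde1 bd
  have hd0 : 0 ≤ d := (abs_nonneg _).trans hd'
  have hωposA : 0 < ω1 := by linarith
  -- the nonlinear difference
  obtain ⟨F, hF⟩ : ∃ F : ℝ → ℝ → ℝ, F = fun s ψ => Gop ω1 q Q0 s ψ - Gop ω2 q Q1 s ψ := ⟨_, rfl⟩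
  have sF : Smooth2 F := by rw [hF]; exact (Gop_smooth hq s0).sub (Gop_smooth hq s1)
  obtain ⟨F1, F2⟩ := nl ω1 ω2 hωposA hω2 hi1 hi2 Q1 Q2 F s1 s2 p1 p2 f1 f2 sF M N d hM hMm hN hd x1 x2 xN
    (fun s ψ hψ => by rw [hF]; simp only [Gop]; rw [pde0 s ψ hψ, pde1 s ψ hψ])
  obtain ⟨S, hS⟩ : ∃ S, S = M * (N + d * M) := ⟨_, rfl⟩
  have hS0 : 0 ≤ S := by rw [hS]; positivity
  rw [← hS] at F1 F2 ⊢
  -- the boundary profile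
  obtain ⟨B, hB⟩ : ∃ B : ℝ → ℝ → ℝ, B = fun s ψ => (β * (q s) ^ 2) * Real.exp (-ψ) := ⟨_, rfl⟩
  obtain ⟨fB, xB⟩ := prof β
  obtain ⟨fB', xB'⟩ := prof (-β)
  have eB' : (fun s ψ => (-β * (q s) ^ 2) * Real.exp (-ψ)) = fun s ψ => - B s ψ := by
    rw [hB]; funext s ψ; ring
  rw [eB'] at fB' xB'
  rw [← hB] at fB xB
  rw [neg_sq] at xB'
  have sB : Smooth2 B := by rw [hB]; exact prof_smooth (contDiff_const.mul hq2)
  have sB' : Smooth2 (fun s ψ => - B s ψ) := by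
    rw [← eB']; exact prof_smooth (c := fun s => -β * (q s) ^ 2) (contDiff_const.mul hq2)
  have pB : PeriodicS L B := by
    intro ψ s; rw [hB]; simp only [hqp s]
  -- D and W
  have sD : Smooth2 (fun s ψ => Q0 s ψ - Q1 s ψ) := s0.sub s1
  obtain ⟨fD, -⟩ := XF_sub s0 s1 f0 f1
  obtain ⟨W, hW⟩ : ∃ W : ℝ → ℝ → ℝ, W = fun s ψ => (Q0 s ψ - Q1 s ψ) - B s ψ := ⟨_, rfl⟩
  have sW : Smooth2 W := by rw [hW]; exact sD.sub sB
  have pW : PeriodicS L W := by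
    intro ψ s
    have a0 := p0 ψ s
    have a1 := p1 ψ s
    have a2 := pB ψ s
    simp only [] at a0 a1 a2
    rw [hW]; simp only [a0, a1, a2]
  have fW : XF L W := by rw [hW]; exact (XF_sub sD sB fD fB).1
  have W0 : ∀ s, W s 0 = 0 := by
    intro s; rw [hW, hB]; simp only [bd s]; simp
  -- the equation for W
  have T1s : Smooth2 (fun s ψ => (ω2 - ω1) * q s * dPsi 2 Q1 s ψ) :=
    (Smooth2.of_s (q := fun s => (ω2 - ω1) * q s) (contDiff_const.mul hq)).mul s1.dPsi_two
  have T2s : Smooth2 (fun s ψ => ω1 * q s * dPsi 2 B s ψ) :=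
    (Smooth2.of_s (q := fun s => ω1 * q s) (contDiff_const.mul hq)).mul sB.dPsi_two
  have eG : Gop ω1 q W = fun s ψ => (F s ψ - (ω2 - ω1) * q s * dPsi 2 Q1 s ψ)
      - (dS 1 B s ψ - ω1 * q s * dPsi 2 B s ψ) := by
    funext s ψ
    rw [hW, hF]
    simp only [Gop]
    rw [dS_one_sub sD sB, dS_one_sub s0 s1, dPsi_two_sub sD sB, dPsi_two_sub s0 s1]
    ring
  have coefX : ∀ (c : ℝ) (V : ℝ → ℝ → ℝ) (X : ℝ), Smooth2 V → XF L V → XX L V ≤ X → ∀ k ≤ 2,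
      Fi L (dS k (fun s ψ => c * q s * dPsi 2 V s ψ)) ∧
      E L (dS k (fun s ψ => c * q s * dPsi 2 V s ψ)) ≤ Kc * (c ^ 2 * X) := by
    intro c V X sV fV xV k hk
    have e1 : dS 1 (dPsi 2 V) = dPsi 2 (dS 1 V) := dS_dPsi_two_comm sV
    have e2 : dS 2 (dPsi 2 V) = dPsi 2 (dS 2 V) := by
      rw [dS_succ 1, e1, dS_dPsi_two_comm sV.dS_one, ← dS_succ 1]
    have z0 := XX_E3 L V (k := 0) (by norm_num)
    have z1 := XX_E3 L V (k := 1) (by norm_num)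
    have z2 := XX_E3 L V (k := 2) (by norm_num)
    have y0 := (fV 0 (by norm_num)).2.2.2
    have y1 := (fV 1 (by norm_num)).2.2.2
    have y2 := (fV 2 (by norm_num)).2.2.2
    rw [dS_zero] at z0 y0
    exact coef c (dPsi 2 V) sV.dPsi_two y0 (by rw [e1]; exact y1) (by rw [e2]; exact y2) X
      (z0.trans xV) (by rw [e1]; exact z1.trans xV) (by rw [e2]; exact z2.trans xV) k hk
  have hΔ : (ω2 - ω1) ^ 2 ≤ d ^ 2 := by
    rw [← sq_abs, abs_sub_comm]; exact pow_le_pow_left₀ (abs_nonneg _) hd' 2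
  have hωsqA : ω1 ^ 2 ≤ 4 := by nlinarith
  have hG : ∀ k ≤ 2, E L (dS k (Gop ω1 q W)) ≤ 4 * (Cn * S ^ 2) + 4 * (Kc * (d ^ 2 * M ^ 2)) +
      (4 * (Kp * β ^ 2) + 4 * (Kc * (4 * (Kp * β ^ 2)))) := by
    intro k hk
    obtain ⟨a1, a2⟩ := F2 k hk
    obtain ⟨b1, b2⟩ := coefX (ω2 - ω1) Q1 (M ^ 2) s1 f1 x1 k hk
    obtain ⟨c1, c2⟩ := coefX ω1 B (Kp * β ^ 2) sB fB xB k hk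
    have eS : dS k (dS 1 B) = dS (k + 1) B := by
      interval_cases k
      · rw [dS_zero]
      · rw [← dS_succ]
      · rw [dS_succ 2, dS_succ 1, dS_succ 1 B]
    have g1 : Fi L (dS k (dS 1 B)) := by rw [eS]; exact XF_S fB (by omega)
    have g2 : E L (dS k (dS 1 B)) ≤ Kp * β ^ 2 := by
      rw [eS]; exact (XX_E1 L B (by omega)).trans xB
    rw [eG, dS_k_sub (sF.sub T1s) (sB.dS_one.sub T2s), dS_k_sub sF T1s, dS_k_sub sB.dS_one T2s]
    have u1 := Fi_sub (sF.dS_k k).continuous (T1s.dS_k k).continuous a1 b1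
    have u2 := Fi_sub (sB.dS_one.dS_k k).continuous (T2s.dS_k k).continuous g1 c1
    have u3 := Fi_sub ((sF.dS_k k).sub (T1s.dS_k k)).continuous
      ((sB.dS_one.dS_k k).sub (T2s.dS_k k)).continuous u1.1 u2.1
    have v1 : Kc * ((ω2 - ω1) ^ 2 * M ^ 2) ≤ Kc * (d ^ 2 * M ^ 2) :=
      mul_le_mul_of_nonneg_left (mul_le_mul_of_nonneg_right hΔ (sq_nonneg _)) hKc.le
    have v2 : Kc * (ω1 ^ 2 * (Kp * β ^ 2)) ≤ Kc * (4 * (Kp * β ^ 2)) :=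
      mul_le_mul_of_nonneg_left (mul_le_mul_of_nonneg_right hωsqA (by positivity)) hKc.le
    refine u3.2.trans ?_
    have := u1.2
    have := u2.2
    linarith
  -- zero mode
  obtain ⟨i1, j1⟩ := zero_mode_v (ω1 := ω1) (ω2 := ω2) hL hq hqp s0 s1 p0 p1 f0 f1
    (K := Cn * S) (by positivity) (fun s ψ hψ => by
      have := F1 s ψ hψ
      rw [hF] at this
      exact this)
  have fQ0 := (f1 0 (by norm_num)).1
  have fB0 := (fB 0 (by norm_num)).1
  rw [dS_zero] at fQ0 fB0
  obtain ⟨i2, j2⟩ := zero_mode_E hL hq hb s1 fQ0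
  obtain ⟨i3, j3⟩ := zero_mode_E hL hq hb sB fB0
  have eQ0 := XX_E1 L Q1 (k := 0) (by norm_num)
  have eB0 := XX_E1 L B (k := 0) (by norm_num)
  rw [dS_zero] at eQ0 eB0
  have hinv : ω1⁻¹ ≤ 2 := by
    rw [inv_le_comm₀ hωposA (by norm_num)]; linarith
  have hinv0 : 0 < ω1⁻¹ := by positivity
  have hinv2 : (ω1⁻¹) ^ 2 ≤ 4 := by nlinarith
  have dec : ∀ ψ, SL L (fun s ψ => q s * W s ψ) ψ =
      ω1⁻¹ * SL L (fun s ψ => q s * (ω1 * Q0 s ψ - ω2 * Q1 s ψ)) ψ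
      + ω1⁻¹ * (ω2 - ω1) * SL L (fun s ψ => q s * Q1 s ψ) ψ - SL L (fun s ψ => q s * B s ψ) ψ := by
    intro ψ
    unfold SL
    have c0 := hq.continuous
    have c1 := s0.cont_s ψ
    have c2 := s1.cont_s ψ
    have c3 := sB.cont_s ψ
    have d1 : Continuous (fun s => ω1⁻¹ * (q s * (ω1 * Q0 s ψ - ω2 * Q1 s ψ))) := by fun_prop
    have d2 : Continuous (fun s => ω1⁻¹ * (ω2 - ω1) * (q s * Q1 s ψ)) := by fun_prop
    have d3 : Continuous (fun s => q s * B s ψ) := by fun_prop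
    have d4 : Continuous (fun s => ω1⁻¹ * (q s * (ω1 * Q0 s ψ - ω2 * Q1 s ψ)) +
      ω1⁻¹ * (ω2 - ω1) * (q s * Q1 s ψ)) := d1.add d2
    rw [← intervalIntegral.integral_const_mul, ← intervalIntegral.integral_const_mul,
      ← intervalIntegral.integral_add (d1.intervalIntegrable _ _) (d2.intervalIntegrable _ _),
      ← intervalIntegral.integral_sub (d4.intervalIntegrable _ _) (d3.intervalIntegrable _ _)]
    congr 1; funext s
    rw [hW]
    field_simp
    ring
  have hle : ∀ ψ ∈ Ioi (0:ℝ), wd 1 ψ * (SL L (fun s ψ => q s * W s ψ) ψ) ^ 2 ≤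
      12 * (wd 1 ψ * (SL L (fun s ψ => q s * (ω1 * Q0 s ψ - ω2 * Q1 s ψ)) ψ) ^ 2)
      + 12 * d ^ 2 * (wd 1 ψ * (SL L (fun s ψ => q s * Q1 s ψ) ψ) ^ 2)
      + 3 * (wd 1 ψ * (SL L (fun s ψ => q s * B s ψ) ψ) ^ 2) := by
    intro ψ hψ
    have hψ0 : (0:ℝ) < ψ := hψ
    rw [dec]
    have hw := (wd_pos zero_le_one hψ0.le).le
    generalize wd 1 ψ = w at *
    generalize SL L (fun s ψ => q s * (ω1 * Q0 s ψ - ω2 * Q1 s ψ)) ψ = A1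
    generalize SL L (fun s ψ => q s * Q1 s ψ) ψ = A2
    generalize SL L (fun s ψ => q s * B s ψ) ψ = A3
    have h1 := sq3 (ω1⁻¹ * A1) (ω1⁻¹ * (ω2 - ω1) * A2) A3
    have h2 : (ω1⁻¹ * A1) ^ 2 ≤ 4 * A1 ^ 2 := by
      rw [mul_pow]; exact mul_le_mul_of_nonneg_right hinv2 (sq_nonneg _)
    have h3 : (ω1⁻¹ * (ω2 - ω1) * A2) ^ 2 ≤ 4 * d ^ 2 * A2 ^ 2 := by
      rw [mul_pow, mul_pow]
      exact mul_le_mul_of_nonneg_right (mul_le_mul hinv2 hΔ (sq_nonneg _) (by norm_num)) (sq_nonneg _)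
    have h4 : (ω1⁻¹ * A1 + ω1⁻¹ * (ω2 - ω1) * A2 - A3) ^ 2 ≤ 12 * A1 ^ 2 + 12 * d ^ 2 * A2 ^ 2
      + 3 * A3 ^ 2 := by linarith
    refine (mul_le_mul_of_nonneg_left h4 hw).trans (le_of_eq (by ring))
  have iR := ((i1.const_mul 12).add (i2.const_mul (12 * d ^ 2))).add (i3.const_mul 3)
  have sqW : Smooth2 (fun s ψ => q s * W s ψ) := (Smooth2.of_s hq).mul sW
  have iW : IntegrableOn (fun ψ => wd 1 ψ * (SL L (fun s ψ => q s * W s ψ) ψ) ^ 2) (Ioi 0) := by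
    refine Integrable.mono' iR
      (Continuous.mul (wd_cont 1) ((SL_continuous L sqW).pow 2)).aestronglyMeasurable ?_
    refine (ae_restrict_iff' measurableSet_Ioi).2 (Eventually.of_forall fun ψ hψ => ?_)
    have hψ0 : (0:ℝ) < ψ := hψ
    rw [Real.norm_eq_abs, abs_of_nonneg (mul_nonneg (wd_pos zero_le_one hψ0.le).le (sq_nonneg _))]
    exact hle ψ hψ
  have jW : ∫ ψ in Ioi 0, wd 1 ψ * (SL L (fun s ψ => q s * W s ψ) ψ) ^ 2 ≤
      48 * L ^ 2 * Cn ^ 2 * S ^ 2 + 12 * L * P ^ 2 * (d ^ 2 * M ^ 2) + 3 * L * P ^ 2 * (Kp * β ^ 2) := by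
    refine (setIntegral_mono_on iW iR measurableSet_Ioi hle).trans ?_
    have e : ∫ ψ in Ioi (0:ℝ), (12 * (wd 1 ψ * (SL L (fun s ψ => q s * (ω1 * Q0 s ψ - ω2 * Q1 s ψ)) ψ) ^ 2)
      + 12 * d ^ 2 * (wd 1 ψ * (SL L (fun s ψ => q s * Q1 s ψ) ψ) ^ 2)
      + 3 * (wd 1 ψ * (SL L (fun s ψ => q s * B s ψ) ψ) ^ 2)) =
      12 * (∫ ψ in Ioi (0:ℝ), wd 1 ψ * (SL L (fun s ψ => q s * (ω1 * Q0 s ψ - ω2 * Q1 s ψ)) ψ) ^ 2)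
      + 12 * d ^ 2 * (∫ ψ in Ioi (0:ℝ), wd 1 ψ * (SL L (fun s ψ => q s * Q1 s ψ) ψ) ^ 2)
      + 3 * (∫ ψ in Ioi (0:ℝ), wd 1 ψ * (SL L (fun s ψ => q s * B s ψ) ψ) ^ 2) := by
      exact int3 12 (12 * d ^ 2) 3 i1 i2 i3
    refine (le_of_eq e).trans ?_
    have t2 : L * P ^ 2 * E L Q1 ≤ L * P ^ 2 * M ^ 2 :=
      mul_le_mul_of_nonneg_left (eQ0.trans x1) (by positivity)
    have t3 : L * P ^ 2 * E L B ≤ L * P ^ 2 * (Kp * β ^ 2) :=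
      mul_le_mul_of_nonneg_left (eB0.trans xB) (by positivity)
    have t4 := mul_le_mul_of_nonneg_left (j2.trans t2) (by positivity : 0 ≤ 12 * d ^ 2)
    have t5 := j3.trans t3
    nlinarith
  have fin := lin ω1 hω1 hω1' W sW pW W0 fW _ iW jW
  have eD : (fun s ψ => Q0 s ψ - Q1 s ψ) = fun s ψ => W s ψ - (- B s ψ) := by
    rw [hW]; funext s ψ; ring
  have xD := (XF_sub sW sB' fW fB').2
  rw [← eD] at xD
  have G0 := hG 0 (by norm_num)
  rw [dS_zero] at G0
  exact core_alg hl.le hCn.le hKc.le hKp.le hL.le (sq_nonneg S) (by positivity) (sq_nonneg β)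
    G0 (hG 1 (by norm_num)) (hG 2 le_rfl) fin (xD.trans (by linarith))

lemma star_bdd {L : ℝ} {q g : ℝ → ℝ} (hq : Continuous q) (hg : Continuous g) :
    ∃ K : ℝ, 0 ≤ K ∧ ∀ ε : ℝ, 0 < ε → ε < 1 → |omegaBarStar L q g ε| ≤ K := by
  refine ⟨|1 / L| * (|∫ s in (0:ℝ)..L, 2 * g s * (q s) ^ 2| + |∫ s in (0:ℝ)..L, (g s) ^ 2 * q s|)
    / |(1/L) * ∫ s in (0:ℝ)..L, (q s) ^ 3|, by positivity, fun ε h0 h1 => ?_⟩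
  unfold omegaBarStar
  rw [abs_div, abs_mul]
  refine div_le_div_of_nonneg_right (mul_le_mul_of_nonneg_left ?_ (abs_nonneg _)) (abs_nonneg _)
  have c1 : Continuous (fun s => 2 * g s * (q s) ^ 2) := by fun_prop
  have c2 : Continuous (fun s => ε * ((g s) ^ 2 * q s)) := by fun_prop
  have e : ∫ s in (0:ℝ)..L, (2 * g s * (q s) ^ 2 + ε * (g s) ^ 2 * q s) =
      (∫ s in (0:ℝ)..L, 2 * g s * (q s) ^ 2) + ε * ∫ s in (0:ℝ)..L, (g s) ^ 2 * q s := by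
    rw [← intervalIntegral.integral_const_mul, ← intervalIntegral.integral_add
      (c1.intervalIntegrable _ _) (c2.intervalIntegrable _ _)]
    congr 1; funext s; ring
  rw [e]
  refine (abs_add_le _ _).trans (add_le_add le_rfl ?_)
  rw [abs_mul, abs_of_pos h0]
  exact mul_le_of_le_one_left (abs_nonneg _) h1.le

lemma ev_rpow {a δ : ℝ} (ha : 0 < a) (hδ : 0 < δ) : ∀ᶠ ε : ℝ in nhdsWithin 0 (Ioi 0), ε ^ a < δ := by
  have h : Tendsto (fun ε : ℝ => ε ^ a) (nhds 0) (nhds 0) := by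
    have := (Real.continuousAt_rpow_const 0 a (Or.inr ha.le)).tendsto
    rwa [Real.zero_rpow ha.ne'] at this
  exact (h.mono_left nhdsWithin_le_nhds).eventually (gt_mem_nhds hδ)

lemma omega_facts {ε ω w K : ℝ} (hε : 0 < ε) (hw : |w| ≤ K) (hK : ε * K ≤ 1 / 2) (hω : 0 < ω)
    (h : ω ^ 2 = 1 - ε * w) : 1 / 2 ≤ ω ∧ ω ≤ 2 ∧ (ω ^ 2)⁻¹ ≤ 2 := by
  have h1 : |ε * w| ≤ 1 / 2 := by
    rw [abs_mul, abs_of_pos hε]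
    exact (mul_le_mul_of_nonneg_left hw hε.le).trans hK
  rw [abs_le] at h1
  refine ⟨by nlinarith, by nlinarith, ?_⟩
  rw [inv_le_comm₀ (by positivity) (by norm_num)]
  linarith

lemma omega_diff {ε ω1 ω2 w1 w2 : ℝ} (hε : 0 < ε) (a1 : 1 / 2 ≤ ω1) (a2 : 1 / 2 ≤ ω2)
    (b1 : (ω1 ^ 2)⁻¹ ≤ 2) (b2 : (ω2 ^ 2)⁻¹ ≤ 2) (h1 : ω1 ^ 2 = 1 - ε * w1)
    (h2 : ω2 ^ 2 = 1 - ε * w2) :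
    |(ω1 ^ 2)⁻¹ - (ω2 ^ 2)⁻¹| ≤ 4 * ε * |w1 - w2| ∧ |ω1 - ω2| ≤ 4 * ε * |w1 - w2| := by
  have p1 : 0 < ω1 := by linarith
  have p2 : 0 < ω2 := by linarith
  have e0 : ω2 ^ 2 - ω1 ^ 2 = ε * (w1 - w2) := by rw [h1, h2]; ring
  have hn : 0 ≤ ε * |w1 - w2| := by positivity
  constructor
  · have e : (ω1 ^ 2)⁻¹ - (ω2 ^ 2)⁻¹ = (ω1 ^ 2)⁻¹ * (ω2 ^ 2)⁻¹ * (ε * (w1 - w2)) := by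
      rw [← e0]; field_simp
    have i1 : 0 ≤ (ω1 ^ 2)⁻¹ := by positivity
    have i2 : 0 ≤ (ω2 ^ 2)⁻¹ := by positivity
    rw [e, abs_mul, abs_of_nonneg (mul_nonneg i1 i2), abs_mul, abs_of_pos hε]
    have : (ω1 ^ 2)⁻¹ * (ω2 ^ 2)⁻¹ ≤ 2 * 2 := mul_le_mul b1 b2 i2 (by norm_num)
    have := mul_le_mul_of_nonneg_right this hn
    linarith
  · have e : |ω1 - ω2| * (ω1 + ω2) = ε * |w1 - w2| := by
      have h3 : |ω1 - ω2| * |ω1 + ω2| = |ε| * |w1 - w2| := by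
        rw [← abs_mul, ← abs_mul, ← e0, ← abs_neg]
        congr 1; ring
      rwa [abs_of_pos (add_pos p1 p2), abs_of_pos hε] at h3
    have h3 : |ω1 - ω2| * 1 ≤ |ω1 - ω2| * (ω1 + ω2) :=
      mul_le_mul_of_nonneg_left (by linarith) (abs_nonneg _)
    linarith

lemma final_alg {C X M N Δ ε b p q r : ℝ} (hC : 0 ≤ C) (hM : 0 ≤ M) (hM1 : M ≤ 1) (hN : 0 ≤ N)
    (hΔ : 0 ≤ Δ) (hε : 0 < ε)
    (hX : X ≤ 51 * (C * ((M * (N + 4 * ε * Δ * M)) ^ 2 + (4 * ε * Δ) ^ 2 * M ^ 2 + (ε * b) ^ 2)))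
    (hp : Real.sqrt (51 * C) * M ≤ p) (hr : Real.sqrt (51 * C) * (8 * (ε * M)) ≤ r)
    (hq : Real.sqrt (51 * C) * ε ≤ q) :
    Real.sqrt X ≤ p * N + q * |b| + r * Δ := by
  obtain ⟨c, hc⟩ : ∃ c, c = Real.sqrt (51 * C) := ⟨_, rfl⟩
  have hc0 : 0 ≤ c := by rw [hc]; exact Real.sqrt_nonneg _
  have hc2 : c ^ 2 = 51 * C := by rw [hc]; exact Real.sq_sqrt (by positivity)
  rw [← hc] at hp hr hq
  have h1 : Real.sqrt X ≤ c * (M * (N + 4 * ε * Δ * M) + 4 * ε * Δ * M + ε * |b|) := by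
    refine Real.sqrt_le_iff.2 ⟨by positivity, hX.trans ?_⟩
    rw [mul_pow c, hc2, ← mul_assoc]
    refine mul_le_mul_of_nonneg_left ?_ (by positivity)
    have a1 : 0 ≤ M * (N + 4 * ε * Δ * M) := by positivity
    have a2 : 0 ≤ 4 * ε * Δ * M := by positivity
    have a3 : 0 ≤ ε * |b| := by positivity
    have e : (ε * b) ^ 2 = (ε * |b|) ^ 2 := by rw [mul_pow, mul_pow, sq_abs]
    rw [e, ← mul_pow (4 * ε * Δ)]
    generalize M * (N + 4 * ε * Δ * M) = x at *
    generalize 4 * ε * Δ * M = y at *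
    generalize ε * |b| = z at *
    nlinarith [mul_nonneg a1 a2, mul_nonneg a1 a3, mul_nonneg a2 a3]
  have h2 : M * (4 * ε * Δ * M) ≤ 4 * ε * Δ * M := mul_le_of_le_one_left (by positivity) hM1
  have h3 : c * (M * (4 * ε * Δ * M)) ≤ c * (4 * ε * Δ * M) := mul_le_mul_of_nonneg_left h2 hc0
  have k1 := mul_le_mul_of_nonneg_right hp hN
  have k2 := mul_le_mul_of_nonneg_right hq (abs_nonneg b)
  have k3 := mul_le_mul_of_nonneg_right hr hΔ
  linarith

/-- **Contraction estimate for differences of consecutive iterates of the scheme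
solving the nonlinear Prandtl boundary-layer problem.** -/
theorem iterate_difference_contraction
    (L : ℝ) (hL : 0 < L)
    (q_e : ℝ → ℝ) (hqe : ContDiff ℝ (⊤ : ℕ∞) q_e) (hqeper : Function.Periodic q_e L)
    (hqepos : ∀ s, 0 < q_e s)
    (g : ℝ → ℝ) (hg : ContDiff ℝ (⊤ : ℕ∞) g) (hgper : Function.Periodic g L) :
    ∃ ε₀ : ℝ, 0 < ε₀ ∧ ε₀ < 1 ∧
      ∀ ε : ℝ, 0 < ε → ε < ε₀ →
      ∀ ωbar2 ωbar1 ωbar0 ω2 ω1 : ℝ,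
        -- ωbar2 = ω̄_{n-2}, ωbar1 = ω̄_{n-1}, ωbar0 = ω̄_n; ω2 = ω_{n-2}, ω1 = ω_{n-1}
        |ωbar2 - omegaBarStar L q_e g ε| ≤ ε ^ (0.97 : ℝ) →
        |ωbar1 - omegaBarStar L q_e g ε| ≤ ε ^ (0.97 : ℝ) →
        |ωbar0 - omegaBarStar L q_e g ε| ≤ ε ^ (0.97 : ℝ) →
        0 < ω2 → ω2 ^ 2 = 1 - ε * ωbar2 →
        0 < ω1 → ω1 ^ 2 = 1 - ε * ωbar1 →
      ∀ Qnm2 Qnm1 Qn : ℝ → ℝ → ℝ,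
        Smooth2 Qnm2 → PeriodicS L Qnm2 →
        (∀ s : ℝ, Tendsto (fun ψ => Qnm2 s ψ) atTop (nhds 0)) →
        XFinite L 2 50 Qnm2 → Xnorm L 2 50 Qnm2 ≤ ε ^ (0.99 : ℝ) →
        Smooth2 Qnm1 → PeriodicS L Qnm1 →
        (∀ s : ℝ, Tendsto (fun ψ => Qnm1 s ψ) atTop (nhds 0)) →
        XFinite L 2 50 Qnm1 → Xnorm L 2 50 Qnm1 ≤ ε ^ (0.99 : ℝ) →
        Smooth2 Qn → PeriodicS L Qn →
        (∀ s : ℝ, Tendsto (fun ψ => Qn s ψ) atTop (nhds 0)) →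
        XFinite L 2 50 Qn → Xnorm L 2 50 Qn ≤ ε ^ (0.99 : ℝ) →
        -- Q_n solves the linear problem with data from (Q_{n-1}, ω_{n-1}, ω̄_n)
        (∀ s : ℝ, ∀ ψ > (0:ℝ),
          dS 1 Qn s ψ - ω1 * q_e s * dPsi 2 Qn s ψ = fNonlin q_e ω1 Qnm1 s ψ) →
        (∀ s : ℝ, Qn s 0
          = ε * ωbar0 * (q_e s) ^ 2 + 2 * ε * g s * q_e s + ε ^ 2 * (g s) ^ 2) →
        -- Q_{n-1} solves the linear problem with data from (Q_{n-2}, ω_{n-2}, ω̄_{n-1})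
        (∀ s : ℝ, ∀ ψ > (0:ℝ),
          dS 1 Qnm1 s ψ - ω2 * q_e s * dPsi 2 Qnm1 s ψ = fNonlin q_e ω2 Qnm2 s ψ) →
        (∀ s : ℝ, Qnm1 s 0
          = ε * ωbar1 * (q_e s) ^ 2 + 2 * ε * g s * q_e s + ε ^ 2 * (g s) ^ 2) →
        Xnorm L 2 50 (fun s ψ => Qn s ψ - Qnm1 s ψ)
          ≤ ε ^ ((3:ℝ)/4) * Xnorm L 2 50 (fun s ψ => Qnm1 s ψ - Qnm2 s ψ)
            + ε ^ ((1:ℝ)/2) * |ωbar0 - ωbar1|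
            + ε ^ ((3:ℝ)/2) * |ωbar1 - ωbar2| := by
  obtain ⟨C, m, hC, hm, core⟩ := core_est hL hqe hqeper hqepos
  obtain ⟨K, hK, hstar⟩ := star_bdd (L := L) hqe.continuous hg.continuous
  obtain ⟨c, hc⟩ : ∃ c, c = Real.sqrt (51 * C) := ⟨_, rfl⟩
  have hc0 : 0 ≤ c := by rw [hc]; exact Real.sqrt_nonneg _
  have ev : ∀ᶠ ε : ℝ in nhdsWithin 0 (Ioi 0), ε ^ (0.24 : ℝ) < (8 * c + 1)⁻¹ ∧
      ε ^ (0.99 : ℝ) < m ∧ ε ^ (1 : ℝ) < (2 * (K + 1))⁻¹ :=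
    (ev_rpow (by norm_num) (by positivity)).and ((ev_rpow (by norm_num) hm).and
      (ev_rpow (by norm_num) (by positivity)))
  obtain ⟨u, hu, hsub⟩ := mem_nhdsGT_iff_exists_Ioo_subset.1 ev
  have hu0 : (0:ℝ) < u := hu
  refine ⟨min u (1 / 2), lt_min hu0 (by norm_num), (min_le_right _ _).trans_lt (by norm_num), ?_⟩
  intro ε hε hlt ωbar2 ωbar1 ωbar0 ω2 ω1 hb2 hb1 hb0 hω2 ho2 hω1 ho1 Qnm2 Qnm1 Qn s2 p2 t2 f2 n2
    s1 p1 t1 f1 n1 s0 p0 t0 f0 n0 pde0 bd0 pde1 bd1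
  have hε1 : ε < 1 := lt_trans (lt_of_lt_of_le hlt (min_le_right _ _)) (by norm_num)
  obtain ⟨e1, e2, e3⟩ := hsub ⟨hε, lt_of_lt_of_le hlt (min_le_left _ _)⟩
  rw [Real.rpow_one] at e3
  have hK1 : ε * (K + 1) ≤ 1 / 2 := by
    have := mul_le_mul_of_nonneg_right e3.le (by positivity : 0 ≤ K + 1)
    refine this.trans (le_of_eq ?_)
    field_simp
  have hwb : ∀ w, |w - omegaBarStar L q_e g ε| ≤ ε ^ (0.97 : ℝ) → |w| ≤ K + 1 := by
    intro w hw
    have h1 := hstar ε hε hε1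
    have h2 : ε ^ (0.97 : ℝ) ≤ 1 := Real.rpow_le_one hε.le hε1.le (by norm_num)
    have h3 := abs_add_le (w - omegaBarStar L q_e g ε) (omegaBarStar L q_e g ε)
    rw [sub_add_cancel] at h3
    linarith
  obtain ⟨a1, b1, c1⟩ := omega_facts hε (hwb _ hb1) hK1 hω1 ho1
  obtain ⟨a2, b2, c2⟩ := omega_facts hε (hwb _ hb2) hK1 hω2 ho2
  obtain ⟨d1, d2⟩ := omega_diff hε a1 a2 c1 c2 ho1 ho2
  have hM0 : 0 ≤ ε ^ (0.99 : ℝ) := Real.rpow_nonneg hε.le _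
  have hM1 : ε ^ (0.99 : ℝ) ≤ 1 := Real.rpow_le_one hε.le hε1.le (by norm_num)
  have hX : ∀ Q, Xnorm L 2 50 Q ≤ ε ^ (0.99 : ℝ) → XX L Q ≤ (ε ^ (0.99 : ℝ)) ^ 2 := fun Q h =>
    (XX_le_sq L Q).trans (pow_le_pow_left₀ (Real.sqrt_nonneg _) h 2)
  have g2 := XF_of f2
  have g1 := XF_of f1
  have g0 := XF_of f0
  have main := core ω1 ω2 a1 b1 hω2 c1 c2 Qnm2 Qnm1 Qn s2 s1 s0 p2 p1 p0 g2 g1 g0 (ε ^ (0.99 : ℝ))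
    (Xnorm L 2 50 (fun s ψ => Qnm1 s ψ - Qnm2 s ψ)) (4 * ε * |ωbar1 - ωbar2|)
    (ε * (ωbar0 - ωbar1)) hM0 e2.le (Real.sqrt_nonneg _) d1 d2 (hX _ n2) (hX _ n1)
    (XX_le_sq L _) pde0 pde1 (fun s => by rw [bd0, bd1]; ring)
  have hfin := (XnormSq_le (XF_sub s0 s1 g0 g1).1).trans
    (mul_le_mul_of_nonneg_left main (by norm_num))
  have r1 : ε ^ (0.99 : ℝ) = ε ^ ((3:ℝ)/4) * ε ^ (0.24 : ℝ) := by
    rw [← Real.rpow_add hε]; norm_num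
  have r2 : ε * ε ^ (0.99 : ℝ) = ε ^ ((3:ℝ)/2) * ε ^ (0.49 : ℝ) := by
    rw [← Real.rpow_add hε]
    nth_rewrite 1 [← Real.rpow_one ε]
    rw [← Real.rpow_add hε]; norm_num
  have r3 : ε = ε ^ ((1:ℝ)/2) * ε ^ (0.5 : ℝ) := by
    rw [← Real.rpow_add hε]; norm_num
  have m1 : ε ^ (0.49 : ℝ) ≤ ε ^ (0.24 : ℝ) :=
    Real.rpow_le_rpow_of_exponent_ge hε hε1.le (by norm_num)
  have m2 : ε ^ (0.5 : ℝ) ≤ ε ^ (0.24 : ℝ) :=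
    Real.rpow_le_rpow_of_exponent_ge hε hε1.le (by norm_num)
  have x0 : 0 ≤ ε ^ (0.24 : ℝ) := Real.rpow_nonneg hε.le _
  have small : 8 * c * ε ^ (0.24 : ℝ) ≤ 1 := by
    have h1 := mul_le_mul_of_nonneg_left e1.le (by positivity : 0 ≤ 8 * c + 1)
    rw [mul_inv_cancel₀ (by positivity)] at h1
    linarith
  have x1 : 0 ≤ c * ε ^ (0.24 : ℝ) := by positivity
  have z1 : 0 ≤ ε ^ ((3:ℝ)/4) := Real.rpow_nonneg hε.le _
  have z2 : 0 ≤ ε ^ ((3:ℝ)/2) := Real.rpow_nonneg hε.le _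
  have z3 : 0 ≤ ε ^ ((1:ℝ)/2) := Real.rpow_nonneg hε.le _
  have w1 : c * ε ^ (0.49 : ℝ) ≤ c * ε ^ (0.24 : ℝ) := mul_le_mul_of_nonneg_left m1 hc0
  have w2 : c * ε ^ (0.5 : ℝ) ≤ c * ε ^ (0.24 : ℝ) := mul_le_mul_of_nonneg_left m2 hc0
  have o1 : c * ε ^ (0.99 : ℝ) ≤ ε ^ ((3:ℝ)/4) := by
    rw [r1]
    have := mul_le_mul_of_nonneg_left (by linarith : c * ε ^ (0.24 : ℝ) ≤ 1) z1
    linarith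
  have o2 : c * (8 * (ε * ε ^ (0.99 : ℝ))) ≤ ε ^ ((3:ℝ)/2) := by
    rw [r2]
    have := mul_le_mul_of_nonneg_left (by linarith : 8 * (c * ε ^ (0.49 : ℝ)) ≤ 1) z2
    linarith
  have o3 : c * ε ≤ ε ^ ((1:ℝ)/2) := by
    have := mul_le_mul_of_nonneg_left (by linarith : c * ε ^ (0.5 : ℝ) ≤ 1) z3
    calc c * ε = ε ^ ((1:ℝ)/2) * (c * ε ^ (0.5 : ℝ)) := by
          nth_rewrite 1 [r3]; ring
      _ ≤ _ := by linarith
  rw [hc] at o1 o2 o3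
  exact final_alg hC.le hM0 hM1 (Real.sqrt_nonneg _) (abs_nonneg _) hε hfin o1 o2 o3
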